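/- arXiv:0708.4173 — 6 statements merged into one kernel-verified Lean document; each statement's English description precedes it below -/
import Mathlib

section
/- Given a recollement (S, T, U) and a Serre functor F on T, the composite functor i^! ∘ F ∘ i_* : S → S is a right Serre functor on S. -/
/-!
Setting: `k` a field; `S`, `T`, `U` skeletally small `k`-linear triangulated categories
with finite-dimensional Hom-spaces, `T` with split idempotents.  A recollement
`(S, T, U)` as in [BBD], and (right/left) Serre functors in the sense of
Reiten–Van den Bergh.
-/

open CategoryTheory CategoryTheory.Limits CategoryTheory.Pretriangulated

universe v₁ v₂ v₃ u₁ u₂ u₃ u₄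

/-- A right Serre structure on an endofunctor `F` of a `k`-linear category `C`:
isomorphisms `C(X, Y) ≅ C(Y, F X)^∨`, natural in `X` and `Y`.
A right Serre functor is a functor `F` equipped with such a structure. -/
structure RightSerreStructure (k : Type u₄) [Field k] (C : Type u₁) [Category.{v₁} C]
    [Preadditive C] [CategoryTheory.Linear k C] (F : C ⥤ C) where
  equiv : ∀ X Y : C, (X ⟶ Y) ≃ₗ[k] Module.Dual k (Y ⟶ F.obj X)
  naturality_left : ∀ {X X' Y : C} (f : X' ⟶ X) (φ : X ⟶ Y) (u : Y ⟶ F.obj X'),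
    equiv X' Y (f ≫ φ) u = equiv X Y φ (u ≫ F.map f)
  naturality_right : ∀ {X Y Y' : C} (φ : X ⟶ Y) (g : Y ⟶ Y') (u : Y' ⟶ F.obj X),
    equiv X Y' (φ ≫ g) u = equiv X Y φ (g ≫ u)

/-- A left Serre structure on an endofunctor `F'` of a `k`-linear category `C`:
isomorphisms `C(X, Y) ≅ C(F' Y, X)^∨`, natural in `X` and `Y`.
A left Serre functor is a functor `F'` equipped with such a structure. -/
structure LeftSerreStructure (k : Type u₄) [Field k] (C : Type u₁) [Category.{v₁} C]
    [Preadditive C] [CategoryTheory.Linear k C] (F' : C ⥤ C) where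
  equiv : ∀ X Y : C, (X ⟶ Y) ≃ₗ[k] Module.Dual k (F'.obj Y ⟶ X)
  naturality_left : ∀ {X X' Y : C} (f : X' ⟶ X) (φ : X ⟶ Y) (u : F'.obj Y ⟶ X'),
    equiv X' Y (f ≫ φ) u = equiv X Y φ (u ≫ f)
  naturality_right : ∀ {X Y Y' : C} (φ : X ⟶ Y) (g : Y ⟶ Y') (u : F'.obj Y' ⟶ X),
    equiv X Y' (φ ≫ g) u = equiv X Y φ (F'.map g ≫ u)

/-- A Serre functor: an essentially surjective right Serre functor. -/
structure SerreFunctor (k : Type u₄) [Field k] (C : Type u₁) [Category.{v₁} C]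
    [Preadditive C] [CategoryTheory.Linear k C] where
  F : C ⥤ C
  rightSerre : RightSerreStructure k C F
  essSurj : F.EssSurj

/-- A recollement of triangulated categories `(S, T, U)`:
triangulated functors `i_* = iSt : S ⥤ T`, `i^* = iUp, i^! = iSh : T ⥤ S`,
`j^* = jUp : T ⥤ U`, `j_! = jLo, j_* = jSt : U ⥤ T` with the adjunctions,
vanishing, full faithfulness and distinguished-triangle conditions of [BBD, sec. 1.4]. -/
structure Recollement (S : Type u₁) (T : Type u₂) (U : Type u₃)
    [Category.{v₁} S] [Category.{v₂} T] [Category.{v₃} U]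
    [HasZeroObject S] [HasZeroObject T] [HasZeroObject U]
    [Preadditive S] [Preadditive T] [Preadditive U]
    [HasShift S ℤ] [HasShift T ℤ] [HasShift U ℤ]
    [∀ n : ℤ, (shiftFunctor S n).Additive] [∀ n : ℤ, (shiftFunctor T n).Additive]
    [∀ n : ℤ, (shiftFunctor U n).Additive]
    [Pretriangulated S] [Pretriangulated T] [Pretriangulated U] where
  /-- `i_* : S ⥤ T` -/
  iSt : S ⥤ T
  /-- `i^* : T ⥤ S` -/
  iUp : T ⥤ S
  /-- `i^! : T ⥤ S` -/
  iSh : T ⥤ S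
  /-- `j^* : T ⥤ U` -/
  jUp : T ⥤ U
  /-- `j_! : U ⥤ T` -/
  jLo : U ⥤ T
  /-- `j_* : U ⥤ T` -/
  jSt : U ⥤ T
  [commShift_iSt : iSt.CommShift ℤ]
  [commShift_iUp : iUp.CommShift ℤ]
  [commShift_iSh : iSh.CommShift ℤ]
  [commShift_jUp : jUp.CommShift ℤ]
  [commShift_jLo : jLo.CommShift ℤ]
  [commShift_jSt : jSt.CommShift ℤ]
  [isTriangulated_iSt : iSt.IsTriangulated]
  [isTriangulated_iUp : iUp.IsTriangulated]
  [isTriangulated_iSh : iSh.IsTriangulated]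
  [isTriangulated_jUp : jUp.IsTriangulated]
  [isTriangulated_jLo : jLo.IsTriangulated]
  [isTriangulated_jSt : jSt.IsTriangulated]
  /-- `(i^*, i_*)` is an adjoint pair. -/
  adj₁ : iUp ⊣ iSt
  /-- `(i_*, i^!)` is an adjoint pair. -/
  adj₂ : iSt ⊣ iSh
  /-- `(j_!, j^*)` is an adjoint pair. -/
  adj₃ : jLo ⊣ jUp
  /-- `(j^*, j_*)` is an adjoint pair. -/
  adj₄ : jUp ⊣ jSt
  /-- `j^* ∘ i_* = 0`. -/
  zero_comp : ∀ X : S, IsZero (jUp.obj (iSt.obj X))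
  fullyFaithful_iSt : iSt.FullyFaithful
  fullyFaithful_jLo : jLo.FullyFaithful
  fullyFaithful_jSt : jSt.FullyFaithful
  /-- The distinguished triangle `i_* i^! X ⟶ X ⟶ j_* j^* X ⟶`, whose morphisms into and
  out of `X` are the counit of `(i_*, i^!)` and the unit of `(j^*, j_*)`. -/
  triangle_a : ∀ X : T, ∃ δ : jSt.obj (jUp.obj X) ⟶ (iSt.obj (iSh.obj X))⟦(1 : ℤ)⟧,
    Triangle.mk (adj₂.counit.app X) (adj₄.unit.app X) δ ∈ distTriang T
  /-- The distinguished triangle `j_! j^* X ⟶ X ⟶ i_* i^* X ⟶`, whose morphisms into and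
  out of `X` are the counit of `(j_!, j^*)` and the unit of `(i^*, i_*)`. -/
  triangle_b : ∀ X : T, ∃ δ : iSt.obj (iUp.obj X) ⟶ (jLo.obj (jUp.obj X))⟦(1 : ℤ)⟧,
    Triangle.mk (adj₃.counit.app X) (adj₁.unit.app X) δ ∈ distTriang T

/-- The `L`-dual of `Z`, regarded as a `Z`-module. -/
def ZDual (L Z : Type*) [Field L] [CommRing Z] [Algebra L Z] := Z →ₗ[L] L

namespace ZDual

variable {L Z : Type*} [Field L] [CommRing Z] [Algebra L Z]

noncomputable instance : AddCommGroup (ZDual L Z) := inferInstanceAs (AddCommGroup (Z →ₗ[L] L))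

/-- The action of `Z` on its dual. -/
noncomputable instance : Module Z (ZDual L Z) where
  smul z φ := LinearMap.comp (show Z →ₗ[L] L from φ) (LinearMap.mulLeft L z)
  one_smul φ := LinearMap.ext fun w => congrArg (show Z →ₗ[L] L from φ) (one_mul w)
  mul_smul a b φ := LinearMap.ext fun w => congrArg (show Z →ₗ[L] L from φ)
    (show a * b * w = b * (a * w) by ring)
  smul_zero _ := rfl
  smul_add _ _ _ := rfl
  add_smul a b φ := LinearMap.ext fun w =>
    (congrArg (show Z →ₗ[L] L from φ) (add_mul a b w)).trans (map_add _ _ _)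
  zero_smul φ := LinearMap.ext fun w =>
    (congrArg (show Z →ₗ[L] L from φ) (zero_mul w)).trans (map_zero _)

/-- The underlying linear form. -/
def toLin (φ : ZDual L Z) : Z →ₗ[L] L := φ

lemma smul_toLin (z w : Z) (φ : ZDual L Z) : (z • φ).toLin w = φ.toLin (z * w) := rfl

lemma ext' {φ φ' : ZDual L Z} (h : ∀ w, φ.toLin w = φ'.toLin w) : φ = φ' := LinearMap.ext h

lemma smul_eq_zero_iff (z : Z) (φ : ZDual L Z) : z • φ = 0 ↔ ∀ w, φ.toLin (z * w) = 0 := by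
  constructor
  · intro h w
    rw [← smul_toLin, h]; rfl
  · intro h
    exact ext' h

lemma add_toLin (φ φ' : ZDual L Z) (w : Z) : (φ + φ').toLin w = φ.toLin w + φ'.toLin w := rfl

/-- If `m` is maximal with finite residue field then any nonzero form killed by `m` generates
all the forms killed by `m`. -/
lemma exists_smul_eq (m : Ideal Z) [hm : m.IsMaximal] [FiniteDimensional L (Z ⧸ m)]
    (φ φ' : ZDual L Z) (h0 : φ ≠ 0) (h : ∀ z ∈ m, z • φ = 0) (h' : ∀ z ∈ m, z • φ' = 0) :
    ∃ z : Z, z • φ = φ' := by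
  have key : ∀ χ : ZDual L Z, (∀ z ∈ m, z • χ = 0) → ∀ z ∈ m, χ.toLin z = 0 := by
    intro χ hχ z hz
    have := (smul_eq_zero_iff z χ).1 (hχ z hz) 1
    simpa using this
  let q : Z →ₗ[L] (Z ⧸ m) := (Ideal.Quotient.mkₐ L m).toLinearMap
  have hq : Function.Surjective q := Ideal.Quotient.mk_surjective
  have hqm : ∀ z, q z = 0 ↔ z ∈ m := fun z => Ideal.Quotient.eq_zero_iff_mem
  have hmul : ∀ a b, q (a * b) = q a * q b := fun a b => map_mul (Ideal.Quotient.mk m) a b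
  have desc : ∀ χ : ZDual L Z, (∀ z ∈ m, z • χ = 0) →
      ∃ χb : Module.Dual L (Z ⧸ m), ∀ z, χb (q z) = χ.toLin z := by
    intro χ hχ
    refine ⟨(m.restrictScalars L).liftQ χ.toLin ?_, ?_⟩
    · intro z hz
      exact key χ hχ z hz
    · intro z
      rfl
  obtain ⟨f, hf⟩ := desc φ h
  obtain ⟨f', hf'⟩ := desc φ' h'
  let B : (Z ⧸ m) →ₗ[L] Module.Dual L (Z ⧸ m) :=
    LinearMap.mk₂ L (fun a b => f (a * b)) (by intros; simp [add_mul]) (by intros; simp)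
      (by intros; simp [mul_add]) (by intros; simp)
  have hB : Function.Injective B := by
    rw [injective_iff_map_eq_zero]
    intro a ha
    by_contra hne
    let _ : Field (Z ⧸ m) := Ideal.Quotient.field m
    apply h0
    apply ext'
    intro w
    rw [← hf w]
    have h1 : f (a * (a⁻¹ * q w)) = 0 := LinearMap.congr_fun ha (a⁻¹ * q w)
    rw [mul_inv_cancel_left₀ hne] at h1
    rw [h1]; rfl
  have hBs : Function.Surjective B :=
    (LinearMap.injective_iff_surjective_of_finrank_eq_finrank
      (Subspace.dual_finrank_eq (K := L) (V := Z ⧸ m)).symm).1 hB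
  obtain ⟨a, ha⟩ := hBs f'
  obtain ⟨z, rfl⟩ := hq a
  refine ⟨z, ext' fun w => ?_⟩
  rw [smul_toLin, ← hf, ← hf', hmul, ← ha]
  rfl

/-- Existence of a maximal annihilator among the multiples. -/
lemma exists_maximal (I : Ideal Z) [FiniteDimensional L (Z ⧸ I)] (φ : ZDual L Z) (h0 : φ ≠ 0)
    (h : ∀ z ∈ I, z • φ = 0) :
    ∃ (m : Ideal Z) (z : Z), m.IsMaximal ∧ FiniteDimensional L (Z ⧸ m) ∧ z • φ ≠ 0 ∧
      ∀ w ∈ m, w • (z • φ) = 0 := by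
  have hI : IsArtinian Z (Z ⧸ I) := isArtinian_of_tower L inferInstance
  let g : (Z ⧸ I) →ₗ[Z] ZDual L Z := I.liftQ (LinearMap.toSpanSingleton Z _ φ)
    (fun z hz => h z hz)
  have hg : IsArtinian Z (LinearMap.range g) := inferInstance
  have hφ : φ ∈ LinearMap.range g := ⟨Submodule.Quotient.mk 1, by
    show (1 : Z) • φ = φ
    simp⟩
  have hne : (⊤ : Submodule Z (LinearMap.range g)) ≠ ⊥ := by
    intro hb
    apply h0
    have : (⟨φ, hφ⟩ : LinearMap.range g) ∈ (⊤ : Submodule Z (LinearMap.range g)) := trivial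
    rw [hb, Submodule.mem_bot] at this
    exact congrArg Subtype.val this
  obtain ⟨N, hN, -⟩ := (IsAtomic.eq_bot_or_exists_atom_le
    (⊤ : Submodule Z (LinearMap.range g))).resolve_left hne
  have hNs : IsSimpleModule Z N := isSimpleModule_iff_isAtom.2 hN
  obtain ⟨x, hx, hx0⟩ := Submodule.exists_mem_ne_zero_of_ne_bot hN.1
  have hmax := IsSimpleModule.ker_toSpanSingleton_isMaximal Z
    (m := (⟨x, hx⟩ : N)) (by simpa using hx0)
  obtain ⟨a, ha⟩ := x.2
  obtain ⟨z, rfl⟩ := Submodule.Quotient.mk_surjective _ a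
  have ha' : z • φ = x.1 := ha
  have hann : ∀ w, w ∈ LinearMap.ker (LinearMap.toSpanSingleton Z N ⟨x, hx⟩) ↔
      w • (z • φ) = 0 := by
    intro w
    rw [LinearMap.mem_ker, LinearMap.toSpanSingleton_apply, ha', Subtype.ext_iff, Subtype.ext_iff]
    rfl
  refine ⟨_, z, hmax, ?_, ?_, fun w hw => (hann w).1 hw⟩
  · have hle : I ≤ LinearMap.ker (LinearMap.toSpanSingleton Z N ⟨x, hx⟩) := by
      intro w hw
      rw [hann, smul_comm, h w hw, smul_zero]
    exact Module.Finite.of_surjective (Ideal.Quotient.factorₐ L hle).toLinearMap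
      (Ideal.Quotient.factor_surjective hle)
  · rw [ha']
    intro hh
    exact hx0 (Subtype.ext hh)

/-- The key existence result: a nondegenerate `K`-linear form on the `L`-dual of `Z`. -/
lemma exists_form {K : Type*} [Field K] (a : K →+* Z) :
    ∃ ψ : ZDual L Z →+ K, (∀ c φ, ψ (a c • φ) = c * ψ φ) ∧
      ∀ (I : Ideal Z) (_ : FiniteDimensional L (Z ⧸ I)) (φ : ZDual L Z), φ ≠ 0 →
        (∀ z ∈ I, z • φ = 0) → ∃ z : Z, ψ (z • φ) ≠ 0 := by
  classical
  let _ : Module K (ZDual L Z) := Module.compHom _ a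
  have hK : ∀ (c : K) (φ : ZDual L Z), c • φ = a c • φ := fun _ _ => rfl
  let M := {m : Ideal Z // m.IsMaximal ∧ FiniteDimensional L (Z ⧸ m) ∧
    ∃ φ : ZDual L Z, φ ≠ 0 ∧ ∀ w ∈ m, w • φ = 0}
  choose p hp0 hp using fun m : M => m.2.2.2
  have hann : ∀ (m : M) (w : Z), w • p m = 0 → w ∈ m.1 := by
    intro m w hw
    by_contra hnot
    obtain ⟨y, hy⟩ := m.2.1.exists_inv hnot
    obtain ⟨i, hi, hyi⟩ := hy
    apply hp0 m
    rw [← one_smul Z (p m), ← hyi, add_smul, mul_smul, hw, smul_zero, hp m i hi, add_zero]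
  have hli : LinearIndependent K p := by
    rw [linearIndependent_iff']
    intro s c hc m hm
    have hprime := m.2.1.isPrime
    have hex : ∃ z ∈ ∏ n ∈ s.erase m, n.1, z ∉ m.1 := by
      by_contra hcon
      push Not at hcon
      obtain ⟨n, hn, hle⟩ := (Ideal.IsPrime.prod_le hprime).1 hcon
      have := n.2.1.eq_of_le hprime.ne_top hle
      exact (Finset.mem_erase.1 hn).1 (Subtype.ext this)
    obtain ⟨z, hz, hzm⟩ := hex
    have h1 : z • ∑ i ∈ s, c i • p i = c m • (z • p m) := by
      rw [Finset.smul_sum, Finset.sum_eq_single_of_mem m hm]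
      · rw [hK, hK, smul_comm]
      · intro n hn hnm
        have : z ∈ n.1 := (Ideal.prod_le_inf.trans (Finset.inf_le
          (Finset.mem_erase.2 ⟨hnm, hn⟩))) hz
        rw [hK, smul_comm, hp n z this, smul_zero]
    rw [hc, smul_zero] at h1
    exact (smul_eq_zero.1 h1.symm).resolve_right fun h => hzm (hann m z h)
  obtain ⟨ψ, hψ⟩ : ∃ ψ : ZDual L Z →ₗ[K] K, ∀ m, ψ (p m) = 1 := by
    let b := Module.Basis.span hli
    obtain ⟨ψ, hψ⟩ := LinearMap.exists_extend (b.constr K (fun _ => (1 : K)))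
    refine ⟨ψ, fun m => ?_⟩
    have h1 : ((b m : Submodule.span K (Set.range p)) : ZDual L Z) = p m :=
      congrArg Subtype.val (Module.Basis.span_apply hli m)
    have h2 := LinearMap.congr_fun hψ (b m)
    rw [Module.Basis.constr_basis] at h2
    rw [← h1]
    exact h2
  refine ⟨ψ.toAddMonoidHom, fun c φ => ψ.map_smul c φ, ?_⟩
  intro I hI φ h0 h
  obtain ⟨m, z, hm, hfin, hz0, hz⟩ := exists_maximal I φ h0 h
  let n : M := ⟨m, hm, hfin, _, hz0, hz⟩
  obtain ⟨w, hw⟩ := exists_smul_eq m (z • φ) (p n) hz0 hz (hp n)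
  refine ⟨w * z, ?_⟩
  rw [mul_smul, hw]
  show ψ (p n) ≠ 0
  rw [hψ]
  exact one_ne_zero

lemma finite_quotient {V : Type*} [AddCommGroup V] [Module L V] [FiniteDimensional L V]
    (I : Ideal Z) (r : Z →ₗ[L] V) (hker : ∀ z, z ∈ I ↔ r z = 0) :
    FiniteDimensional L (Z ⧸ I) := by
  have hle : I.restrictScalars L ≤ LinearMap.ker r := fun z hz => (hker z).1 hz
  have hinj : Function.Injective ((I.restrictScalars L).liftQ r hle) := by
    rw [← LinearMap.ker_eq_bot]
    apply Submodule.ker_liftQ_eq_bot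
    intro z hz
    exact (hker z).2 hz
  have hfin := Module.Finite.of_injective _ hinj
  exact hfin

end ZDual

/-- The scalars of `T`, acting on `S` through the fully faithful functor `G`. -/
noncomputable def scalarsThrough {k S T : Type*} [Field k] [Category S] [Category T]
    [Preadditive S] [Preadditive T] [CategoryTheory.Linear k T] (G : S ⥤ T) [G.Additive]
    (hG : G.FullyFaithful) : k →+* CatCenter S where
  toFun c :=
    { app := fun X => hG.preimage (c • 𝟙 (G.obj X))
      naturality := by
        intro X Y f
        apply hG.map_injective
        simp }
  map_one' := by
    apply CatCenter.ext
    intro X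
    apply hG.map_injective
    show G.map (hG.preimage ((1 : k) • 𝟙 (G.obj X))) = G.map (𝟙 X)
    simp
  map_mul' a b := by
    apply CatCenter.ext
    intro X
    apply hG.map_injective
    rw [CatCenter.mul_app']
    simp [smul_smul, CatCenter.app]
  map_zero' := by
    apply CatCenter.ext
    intro X
    apply hG.map_injective
    simp [CatCenter.app]
  map_add' a b := by
    apply CatCenter.ext
    intro X
    apply hG.map_injective
    simp [CatCenter.app, add_smul]

lemma scalarsThrough_map {k S T : Type*} [Field k] [Category S] [Category T]
    [Preadditive S] [Preadditive T] [CategoryTheory.Linear k T] (G : S ⥤ T) [G.Additive]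
    (hG : G.FullyFaithful) (c : k) (X : S) :
    G.map ((scalarsThrough G hG c).app X) = c • 𝟙 (G.obj X) := by
  simp [scalarsThrough, CatCenter.app]

/-- The center of a preadditive category as a commutative ring (a type synonym, so that no other
module structures are found on it). -/
def CenterRing (S : Type*) [Category S] := CatCenter S

namespace CenterRing

variable {S : Type*} [Category S]

/-- The component at an object. -/
def app (z : CenterRing S) (X : S) : X ⟶ X := CatCenter.app z X

variable [Preadditive S]

noncomputable instance : CommRing (CenterRing S) :=
  { (inferInstance : Ring (CatCenter S)) with
    mul_comm := fun x y => by
      apply CatCenter.ext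
      intro X
      exact (CatCenter.mul_app (C := S) x y X).trans (CatCenter.mul_app' (C := S) y x X).symm }

lemma mul_app (x y : CenterRing S) (X : S) : (x * y).app X = x.app X ≫ y.app X :=
  CatCenter.mul_app (C := S) x y X

lemma mul_app' (x y : CenterRing S) (X : S) : (x * y).app X = y.app X ≫ x.app X := rfl

lemma naturality (z : CenterRing S) {X Y : S} (f : X ⟶ Y) : f ≫ z.app Y = z.app X ≫ f :=
  CatCenter.naturality (C := S) z f

lemma naturality_assoc (z : CenterRing S) {X Y W : S} (f : X ⟶ Y) (g : Y ⟶ W) :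
    f ≫ z.app Y ≫ g = z.app X ≫ f ≫ g := by
  rw [← Category.assoc, naturality, Category.assoc]

end CenterRing

/-- Given a recollement `(S, T, U)` and a Serre functor `F` on `T`, the composite
functor `i^! ∘ F ∘ i_* : S ⥤ S` is a right Serre functor on `S`. -/
theorem recollement_right_serre_structure_on_S
    {k : Type u₄} [Field k]
    {S : Type u₁} {T : Type u₂} {U : Type u₃}
    [Category.{v₁} S] [Category.{v₂} T] [Category.{v₃} U]
    [HasZeroObject S] [HasZeroObject T] [HasZeroObject U]
    [Preadditive S] [Preadditive T] [Preadditive U]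
    [CategoryTheory.Linear k S] [CategoryTheory.Linear k T] [CategoryTheory.Linear k U]
    [HasShift S ℤ] [HasShift T ℤ] [HasShift U ℤ]
    [∀ n : ℤ, (shiftFunctor S n).Additive] [∀ n : ℤ, (shiftFunctor T n).Additive]
    [∀ n : ℤ, (shiftFunctor U n).Additive]
    [Pretriangulated S] [Pretriangulated T] [Pretriangulated U]
    [EssentiallySmall.{v₁} S] [EssentiallySmall.{v₂} T] [EssentiallySmall.{v₃} U]
    [∀ X Y : S, FiniteDimensional k (X ⟶ Y)]
    [∀ X Y : T, FiniteDimensional k (X ⟶ Y)]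
    [∀ X Y : U, FiniteDimensional k (X ⟶ Y)]
    [IsIdempotentComplete T]
    (R : Recollement S T U)
    (SF : SerreFunctor k T) :
    Nonempty (RightSerreStructure k S (R.iSt ⋙ SF.F ⋙ R.iSh)) := by
  classical
  have := R.commShift_iSt
  have := R.isTriangulated_iSt
  have hadd : R.iSt.Additive :=
    have := R.adj₁.isRightAdjoint
    have := preservesBinaryBiproducts_of_preservesBinaryProducts R.iSt
    Functor.additive_of_preservesBinaryBiproducts R.iSt
  have hadd' : R.iSh.Additive := R.adj₂.right_adjoint_additive
  let aL : k →+* CenterRing S := scalarsThrough R.iSt R.fullyFaithful_iSt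
  let aK : k →+* CenterRing S := CategoryTheory.Linear.toCatCenter k S
  let alg : Algebra k (CenterRing S) := RingHom.toAlgebra aL
  obtain ⟨ψ, hψ1, hψ2⟩ := @ZDual.exists_form k (CenterRing S) _ _ alg k _ aK
  let β := SF.rightSerre.equiv
  let e : ∀ (X Y : S), (Y ⟶ R.iSh.obj (SF.F.obj (R.iSt.obj X))) ≃+
      (R.iSt.obj Y ⟶ SF.F.obj (R.iSt.obj X)) := fun X Y =>
    (R.adj₂.homAddEquiv Y (SF.F.obj (R.iSt.obj X))).symm
  have he : ∀ {X Y Y' : S} (g : Y ⟶ Y') (u : Y' ⟶ R.iSh.obj (SF.F.obj (R.iSt.obj X))),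
      e X Y (g ≫ u) = R.iSt.map g ≫ e X Y' u := fun g u =>
    R.adj₂.homEquiv_naturality_left_symm g u
  have he' : ∀ {X X' Y : S} (f : X' ⟶ X) (u : Y ⟶ R.iSh.obj (SF.F.obj (R.iSt.obj X'))),
      e X Y (u ≫ R.iSh.map (SF.F.map (R.iSt.map f))) =
        e X' Y u ≫ SF.F.map (R.iSt.map f) := fun f u =>
    R.adj₂.homEquiv_naturality_right_symm u _
  have haddapp : ∀ (z w : CenterRing S) (Y : S), (z + w).app Y = z.app Y + w.app Y :=
    fun _ _ _ => rfl
  have hKapp : ∀ (c : k) (Y : S), (aK c).app Y = c • 𝟙 Y := fun _ _ => rfl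
  have hLapp : ∀ (c : k) (Y : S), R.iSt.map ((aL c).app Y) = c • 𝟙 (R.iSt.obj Y) :=
    fun c Y => scalarsThrough_map R.iSt R.fullyFaithful_iSt c Y
  have hLsmul : ∀ (c : k) (z : CenterRing S), c • z = aL c * z := fun c z =>
    @Algebra.smul_def _ _ _ _ alg c z
  have hLs : ∀ (c : k) (z : CenterRing S) (Y : S),
      R.iSt.map ((c • z).app Y) = c • R.iSt.map (z.app Y) := by
    intro c z Y
    rw [hLsmul, CenterRing.mul_app, Functor.map_comp, hLapp]
    simp
  have hex : ∀ (X Y : S) (f : X ⟶ Y) (u : Y ⟶ R.iSh.obj (SF.F.obj (R.iSt.obj X))),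
      ∃ φ : @ZDual k (CenterRing S) _ _ alg, ∀ z : CenterRing S, φ.toLin z =
        β _ _ (R.iSt.map f) (e X Y (z.app Y ≫ u)) := by
    intro X Y f u
    have h1 : ∀ z w : CenterRing S, β _ _ (R.iSt.map f) (e X Y ((z + w).app Y ≫ u)) =
        β _ _ (R.iSt.map f) (e X Y (z.app Y ≫ u)) +
        β _ _ (R.iSt.map f) (e X Y (w.app Y ≫ u)) := by
      intro z w
      rw [haddapp, Preadditive.add_comp, map_add, map_add]
    have h2 : ∀ (c : k) (z : CenterRing S),
        β _ _ (R.iSt.map f) (e X Y ((c • z).app Y ≫ u)) =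
        c • β _ _ (R.iSt.map f) (e X Y (z.app Y ≫ u)) := by
      intro c z
      rw [he, he, hLs, CategoryTheory.Linear.smul_comp, map_smul]
    let l : CenterRing S →ₗ[k] k :=
      ⟨⟨fun z => β _ _ (R.iSt.map f) (e X Y (z.app Y ≫ u)), h1⟩, h2⟩
    exact ⟨l, fun _ => rfl⟩
  choose Φ hΦ' using hex
  have hΦ : ∀ {X Y : S} (f : X ⟶ Y) (u) (z : CenterRing S), (Φ X Y f u).toLin z =
    β _ _ (R.iSt.map f) (e X Y (z.app Y ≫ u)) := fun f u z => hΦ' _ _ f u z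
  have hΦz : ∀ {X Y : S} (f : X ⟶ Y) (u) (z : CenterRing S),
      Φ X Y f (z.app Y ≫ u) = z • Φ X Y f u := by
    intro X Y f u z
    apply ZDual.ext'
    intro w
    rw [ZDual.smul_toLin, hΦ, hΦ, CenterRing.mul_app', Category.assoc]
  have hΦg : ∀ {X Y Y' : S} (f : X ⟶ Y) (g : Y ⟶ Y') (u),
      Φ X Y' (f ≫ g) u = Φ X Y f (g ≫ u) := by
    intro X Y Y' f g u
    apply ZDual.ext'
    intro w
    rw [hΦ, hΦ, Functor.map_comp, SF.rightSerre.naturality_right, ← he,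
      CenterRing.naturality_assoc]
  have hΦf : ∀ {X X' Y : S} (f : X' ⟶ X) (φ : X ⟶ Y) (u),
      Φ X' Y (f ≫ φ) u = Φ X Y φ (u ≫ R.iSh.map (SF.F.map (R.iSt.map f))) := by
    intro X X' Y f φ u
    apply ZDual.ext'
    intro w
    rw [hΦ, hΦ, Functor.map_comp, SF.rightSerre.naturality_left, ← Category.assoc, he']
  have hΦa : ∀ {X Y : S} (f f' : X ⟶ Y) (u), Φ X Y (f + f') u = Φ X Y f u + Φ X Y f' u := by
    intro X Y f f' u
    apply ZDual.ext'
    intro w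
    rw [hΦ, Functor.map_add, map_add]
    rw [ZDual.add_toLin, hΦ, hΦ]
    rfl
  have hΦb : ∀ {X Y : S} (f : X ⟶ Y) (u u'), Φ X Y f (u + u') = Φ X Y f u + Φ X Y f u' := by
    intro X Y f u u'
    apply ZDual.ext'
    intro w
    rw [hΦ, Preadditive.comp_add, map_add, map_add]
    rw [ZDual.add_toLin, hΦ, hΦ]
  have hΦc : ∀ {X Y : S} (c : k) (f : X ⟶ Y) (u), Φ X Y f (c • u) = aK c • Φ X Y f u := by
    intro X Y c f u
    rw [← hΦz, hKapp]
    simp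
  have hΦd : ∀ {X Y : S} (c : k) (f : X ⟶ Y) (u), Φ X Y (c • f) u = aK c • Φ X Y f u := by
    intro X Y c f u
    rw [← hΦz, ← hΦg, hKapp]
    simp
  let B : ∀ X Y : S, (X ⟶ Y) →ₗ[k] (Y ⟶ R.iSh.obj (SF.F.obj (R.iSt.obj X))) →ₗ[k] k :=
    fun X Y => LinearMap.mk₂ k (fun f u => ψ (Φ X Y f u))
      (fun f f' u => by rw [hΦa, map_add])
      (fun c f u => by rw [hΦd, hψ1, smul_eq_mul])
      (fun f u u' => by rw [hΦb, map_add])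
      (fun c f u => by rw [hΦc, hψ1, smul_eq_mul])
  have hB : ∀ {X Y : S} (f : X ⟶ Y) (u), B X Y f u = ψ (Φ X Y f u) := fun _ _ => rfl
  -- nondegeneracy of the pairing
  have hnd : ∀ {X Y : S} (f : X ⟶ Y) (u : Y ⟶ R.iSh.obj (SF.F.obj (R.iSt.obj X))),
      β _ _ (R.iSt.map f) (e X Y u) ≠ 0 → ∃ z : CenterRing S, ψ (z • Φ X Y f u) ≠ 0 := by
    intro X Y f u h
    let r : CenterRing S →ₗ[k] (R.iSt.obj Y ⟶ R.iSt.obj Y) :=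
      { toFun := fun z => R.iSt.map (z.app Y)
        map_add' := fun z w => by rw [haddapp, Functor.map_add]
        map_smul' := fun c z => hLs c z Y }
    let I : Ideal (CenterRing S) :=
      { carrier := {z | z.app Y = 0}
        add_mem' := by
          intro z w hz hw
          change z.app Y = 0 at hz; change w.app Y = 0 at hw; change (z + w).app Y = 0
          rw [haddapp, hz, hw, add_zero]
        zero_mem' := rfl
        smul_mem' := by
          intro z w hw
          change w.app Y = 0 at hw; change (z * w).app Y = 0
          rw [CenterRing.mul_app', hw, zero_comp] }
    have hfin : FiniteDimensional k (CenterRing S ⧸ I) := by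
      have hker : ∀ z, z ∈ I ↔ r z = 0 := by
        intro z
        constructor
        · intro hz
          have hz' : z.app Y = 0 := hz
          show R.iSt.map (z.app Y) = 0
          rw [hz', Functor.map_zero]
        · intro hz
          have hz' : R.iSt.map (z.app Y) = 0 := hz
          show z.app Y = 0
          apply R.fullyFaithful_iSt.map_injective
          rw [hz', Functor.map_zero]
      exact ZDual.finite_quotient I r hker
    refine hψ2 I hfin (Φ X Y f u) ?_ ?_
    · intro h0
      apply h
      have h1 := hΦ f u 1
      rw [h0] at h1
      have h2 : (1 : CenterRing S).app Y ≫ u = u := Category.id_comp u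
      rw [h2] at h1
      exact h1.symm
    · intro z hz
      have hz' : z.app Y = 0 := hz
      rw [← hΦz, hz', zero_comp]
      apply ZDual.ext'
      intro w
      rw [hΦ, comp_zero, map_zero, map_zero]
      rfl
  have hperf : ∀ X Y, (B X Y).IsPerfPair := by
    intro X Y
    have : FiniteDimensional k (X ⟶ Y) := inferInstance
    apply LinearMap.IsPerfPair.of_injective
    · rw [injective_iff_map_eq_zero]
      intro f hf
      by_contra hne
      have h1 : β _ _ (R.iSt.map f) ≠ 0 := by
        intro h
        apply hne
        apply R.fullyFaithful_iSt.map_injective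
        rw [Functor.map_zero]
        exact (LinearEquiv.map_eq_zero_iff _).1 h
      obtain ⟨w, hw⟩ : ∃ w, β _ _ (R.iSt.map f) w ≠ 0 := by
        by_contra hcon
        push Not at hcon
        exact h1 (LinearMap.ext hcon)
      obtain ⟨u, rfl⟩ := (e X Y).surjective w
      obtain ⟨z, hz⟩ := hnd f u hw
      apply hz
      rw [← hΦz, ← hB, hf]
      rfl
    · rw [injective_iff_map_eq_zero]
      intro u hu
      by_contra hne
      have h1 : e X Y u ≠ 0 := by
        intro h
        exact hne ((e X Y).map_eq_zero_iff.1 h)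
      obtain ⟨l, hl⟩ : ∃ l : Module.Dual k _, l (e X Y u) ≠ 0 := by
        by_contra hcon
        push Not at hcon
        exact h1 ((Module.forall_dual_apply_eq_zero_iff k _).1 hcon)
      obtain ⟨f', rfl⟩ := (β _ _).surjective l
      obtain ⟨f, rfl⟩ := R.fullyFaithful_iSt.map_surjective f'
      obtain ⟨z, hz⟩ := hnd f u hl
      apply hz
      rw [← hΦz, ← hΦg, ← hB]
      exact LinearMap.congr_fun hu _
  refine ⟨{ equiv := fun X Y => ?_, naturality_left := ?_, naturality_right := ?_ }⟩
  · have := hperf X Y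
    exact (B X Y).toPerfPair
  · intro X X' Y f φ u
    show ψ (Φ X' Y (f ≫ φ) u) = ψ (Φ X Y φ (u ≫ R.iSh.map (SF.F.map (R.iSt.map f))))
    rw [hΦf]
  · intro X Y Y' φ g u
    show ψ (Φ X Y' (φ ≫ g) u) = ψ (Φ X Y φ (g ≫ u))
    rw [hΦg]
end

section
/- Given a recollement (S, T, U), a Serre functor F on T with quasi-inverse F', the composite functor i^* ∘ F' ∘ i_* : S → S is a left Serre functor on S. -/
/-!
Setting: `k` a field; `S`, `T`, `U` skeletally small `k`-linear triangulated categories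
with finite-dimensional Hom-spaces, `T` with split idempotents.  A recollement
`(S, T, U)` as in [BBD], and (right/left) Serre functors in the sense of
Reiten–Van den Bergh.
-/

open CategoryTheory CategoryTheory.Limits CategoryTheory.Pretriangulated

universe v₁ v₂ v₃ u₁ u₂ u₃ u₄

/-- The coinduced module `Hom_K(R, K)`, with `R` acting through the argument. -/
def SerreCoind (K R : Type*) [Field K] [CommRing R] [Algebra K R] := R →ₗ[K] K

namespace SerreCoind

section
variable (K L R : Type*) [Field K] [Field L] [CommRing R] [Algebra K R] [Algebra L R]

instance : AddCommGroup (SerreCoind K R) := inferInstanceAs (AddCommGroup (R →ₗ[K] K))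

instance : FunLike (SerreCoind K R) R K := inferInstanceAs (FunLike (R →ₗ[K] K) R K)

variable {K R}

theorem ext' {x y : SerreCoind K R} (h : ∀ r, x r = y r) : x = y := LinearMap.ext h

theorem add_apply' (x y : SerreCoind K R) (r : R) : (x + y) r = x r + y r := rfl

theorem zero_apply' (r : R) : (0 : SerreCoind K R) r = 0 := rfl

theorem map_add' (x : SerreCoind K R) (r s : R) : x (r + s) = x r + x s := LinearMap.map_add x r s

theorem map_smul' (x : SerreCoind K R) (a : K) (s : R) : x (a • s) = a * x s :=
  LinearMap.map_smul x a s

instance : SMul R (SerreCoind K R) :=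
  ⟨fun r x => LinearMap.comp (show R →ₗ[K] K from x) (LinearMap.mulLeft K r)⟩

theorem smul_apply' (r : R) (x : SerreCoind K R) (s : R) : (r • x) s = x (r * s) := rfl

instance : Module R (SerreCoind K R) where
  one_smul x := ext' fun s => by rw [smul_apply', one_mul]
  mul_smul r r' x := ext' fun s => by
    rw [smul_apply', smul_apply', smul_apply', ← mul_assoc, mul_comm r' r]
  smul_zero r := ext' fun s => by rw [smul_apply', zero_apply', zero_apply']
  smul_add r x y := ext' fun s => by simp only [smul_apply', add_apply']
  add_smul r r' x := ext' fun s => by simp only [smul_apply', add_apply', add_mul, map_add']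
  zero_smul x := ext' fun s => by
    rw [smul_apply', zero_apply', zero_mul]; exact LinearMap.map_zero x

end

section
variable (K L R : Type*) [Field K] [Field L] [CommRing R] [Algebra K R] [Algebra L R]

instance : Module L (SerreCoind K R) := Module.compHom _ (algebraMap L R)

instance : IsScalarTower L R (SerreCoind K R) := IsScalarTower.of_algebraMap_smul fun _ _ => rfl

variable {K R}

theorem smul_apply_field (a : K) (x : SerreCoind K R) (s : R) : (a • x) s = a * x s := by
  rw [← algebraMap_smul R a x, smul_apply', ← Algebra.smul_def, map_smul']

end

section
variable {K R : Type*} [Field K] [CommRing R] [Algebra K R]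

theorem top_of_coann {P : Type*} [AddCommGroup P] [Module K P] [Module.Finite K P]
    (V : Submodule K (Module.Dual K P)) (h : ∀ p, (∀ f ∈ V, f p = 0) → p = 0) : V = ⊤ := by
  have h0 : V.dualCoannihilator = ⊥ := by
    rw [eq_bot_iff]
    intro p hp
    rw [Submodule.mem_dualCoannihilator] at hp
    exact h p hp
  have h1 := Subspace.finrank_add_finrank_dualCoannihilator_eq V
  rw [h0, finrank_bot, add_zero] at h1
  apply Submodule.eq_top_of_finrank_eq
  rw [h1, Subspace.dual_finrank_eq]

theorem le_of_equiv (P P' : Submodule R (SerreCoind K R)) [Module.Finite K P]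
    (e : P ≃ₗ[R] P') : P' ≤ P := by
  let ev : SerreCoind K R →ₗ[K] K :=
    { toFun := fun x => x 1
      map_add' := fun x y => rfl
      map_smul' := fun a x => smul_apply_field a x 1 }
  let f : P →ₗ[K] K := ev ∘ₗ (P.subtype.restrictScalars K)
  let f' : P →ₗ[K] K := ev ∘ₗ ((P'.subtype ∘ₗ e.toLinearMap).restrictScalars K)
  let g : R →ₗ[K] Module.Dual K P :=
    { toFun := fun r => f ∘ₗ ((LinearMap.lsmul R P r).restrictScalars K)
      map_add' := fun r s => by ext p; simp
      map_smul' := fun a r => by ext p; simp }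
  have hg : ∀ r p, g r p = (p : SerreCoind K R) r := fun r p => by
    change (r • (p : SerreCoind K R)) 1 = _
    rw [smul_apply', mul_one]
  have htop : LinearMap.range g = ⊤ := by
    apply top_of_coann
    intro p hp
    apply Subtype.ext
    apply ext'
    intro r
    rw [← hg]
    exact hp _ ⟨r, rfl⟩
  obtain ⟨r, hr⟩ : f' ∈ LinearMap.range g := htop ▸ Submodule.mem_top
  intro q hq
  obtain ⟨p, hp⟩ := e.surjective ⟨q, hq⟩
  have : q = r • (p : SerreCoind K R) := by
    apply ext'
    intro s
    have h1 : f' (s • p) = g r (s • p) := by rw [hr]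
    rw [hg] at h1
    have h2 : f' (s • p) = q s := by
      change ((e (s • p) : P') : SerreCoind K R) 1 = _
      rw [map_smul, hp]
      change (s • q) 1 = _
      rw [smul_apply', mul_one]
    rw [← h2, h1]
    change (s • (p : SerreCoind K R)) r = _
    rw [smul_apply', smul_apply', mul_comm]
  rw [this]
  exact P.smul_mem r p.2

theorem isotypic_eq (P : Submodule R (SerreCoind K R)) [Module.Finite K P] :
    isotypicComponent R (SerreCoind K R) P = P := by
  apply le_antisymm
  · apply sSup_le
    rintro P' ⟨e⟩
    exact le_of_equiv P P' e.symm
  · exact le_sSup ⟨LinearEquiv.refl R P⟩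

theorem exists_simple (Q : Submodule R (SerreCoind K R)) [Module.Finite K Q] (hQ : Q ≠ ⊥) :
    ∃ P : Submodule R (SerreCoind K R), P ≤ Q ∧ IsSimpleModule R P ∧ Module.Finite K P := by
  have : IsArtinian R Q := isArtinian_of_tower K inferInstance
  have : IsAtomic (Submodule R Q) :=
    isAtomic_of_orderBot_wellFounded_lt (wellFounded_lt)
  have : Nontrivial Q := Submodule.nontrivial_iff_ne_bot.mpr hQ
  obtain ⟨A, hA⟩ := IsAtomic.exists_atom (Submodule R Q)
  have : IsSimpleModule R A := isSimpleModule_iff_isAtom.mpr hA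
  have hle : A.map Q.subtype ≤ Q := Submodule.map_subtype_le _ _
  refine ⟨A.map Q.subtype, hle, ?_, ?_⟩
  · exact IsSimpleModule.congr (A.equivMapOfInjective Q.subtype Q.subtype_injective).symm
  · exact Module.Finite.of_injective ((Submodule.inclusion hle).restrictScalars K)
      (Submodule.inclusion_injective hle)

end

open Classical in
theorem exists_functional (K L R : Type*) [Field K] [Field L] [CommRing R]
    [Algebra K R] [Algebra L R] :
    ∃ l : SerreCoind K R →ₗ[L] L, ∀ Q : Submodule R (SerreCoind K R), Module.Finite K Q →
      Q ≠ ⊥ → ∃ q ∈ Q, l q ≠ 0 := by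
  let I : Set (Submodule R (SerreCoind K R)) := {P | IsSimpleModule R P ∧ Module.Finite K P}
  have hI : sSupIndep I := by
    apply (sSupIndep_isotypicComponents R (SerreCoind K R)).mono
    rintro P ⟨h1, h2⟩
    exact ⟨P, h1, (isotypic_eq P).symm⟩
  rw [sSupIndep_iff] at hI
  have hinj := hI.dfinsupp_lsum_injective
  let Φ : (Π₀ i : I, (i : Submodule R (SerreCoind K R))) →ₗ[L] SerreCoind K R :=
    LinearMap.restrictScalars L (DFinsupp.lsum (R := R) ℕ
      fun i : I => (i : Submodule R (SerreCoind K R)).subtype)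
  obtain ⟨g, hg⟩ := LinearMap.exists_leftInverse_of_injective Φ (LinearMap.ker_eq_bot.mpr hinj)
  have hμ : ∀ i : I, ∃ μ : (i : Submodule R (SerreCoind K R)) →ₗ[L] L, ∃ p, μ p ≠ 0 := by
    rintro ⟨P, h1, h2⟩
    have := IsSimpleModule.nontrivial R P
    obtain ⟨p, hp⟩ := exists_ne (0 : P)
    by_contra! h
    exact hp ((Module.forall_dual_apply_eq_zero_iff L p).mp fun f => h f p)
  choose μ p hp using hμ
  refine ⟨(DFinsupp.lsum ℕ μ) ∘ₗ g, fun Q hQ hne => ?_⟩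
  obtain ⟨P, hPQ, h1, h2⟩ := exists_simple Q hne
  let i : I := ⟨P, h1, h2⟩
  refine ⟨(p i : SerreCoind K R), hPQ (p i).2, ?_⟩
  have e1 : (p i : SerreCoind K R) = Φ (DFinsupp.single i (p i)) := by
    simp [Φ]
  have e2 : g (Φ (DFinsupp.single i (p i))) = DFinsupp.single i (p i) :=
    LinearMap.congr_fun hg _
  rw [LinearMap.comp_apply, e1, e2]
  simpa using hp i

end SerreCoind

section
variable {K L R : Type*} [Field K] [Field L] [CommRing R] [Algebra K R] [Algebra L R]
  {M N : Type*} [AddCommGroup M] [AddCommGroup N] [Module R M] [Module R N]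
  [Module K M] [Module K N] [Module L M] [Module L N] [IsScalarTower K R M]
  [IsScalarTower L R M] [IsScalarTower L R N]

/-- The element `r ↦ e n (r m)`. -/
def serreOrbit (e : N →ₗ[K] Module.Dual K M) (n : N) (m : M) : SerreCoind K R :=
  (e n) ∘ₗ ((LinearMap.toSpanSingleton R M m).restrictScalars K)

theorem serreOrbit_apply (e : N →ₗ[K] Module.Dual K M) (n : N) (m : M) (r : R) :
    serreOrbit e n m r = e n (r • m) := rfl

theorem serreOrbit_smul (e : N →ₗ[K] Module.Dual K M) (n : N) (m : M) (r : R) :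
    serreOrbit e n (r • m) = r • (serreOrbit e n m : SerreCoind K R) := by
  apply SerreCoind.ext'
  intro s
  rw [SerreCoind.smul_apply', serreOrbit_apply, serreOrbit_apply, smul_smul, mul_comm]

/-- New pairing. -/
def serrePairing (l : SerreCoind K R →ₗ[L] L) (e : N →ₗ[K] Module.Dual K M)
    (he : ∀ (r : R) n m, e (r • n) m = e n (r • m)) : N →ₗ[L] Module.Dual L M :=
  LinearMap.mk₂ L (fun n m => l (serreOrbit e n m))
    (fun n n' m => by
      rw [← map_add]; congr 1; apply SerreCoind.ext'; intro s
      simp [SerreCoind.add_apply', serreOrbit_apply])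
    (fun b n m => by
      rw [← map_smul, ← algebraMap_smul R b n, ← algebraMap_smul R b (serreOrbit e n m),
        ← serreOrbit_smul]; congr 1; apply SerreCoind.ext'; intro s
      rw [serreOrbit_apply, serreOrbit_apply, he, smul_comm])
    (fun n m m' => by
      rw [← map_add]; congr 1; apply SerreCoind.ext'; intro s
      simp [SerreCoind.add_apply', serreOrbit_apply])
    (fun b n m => by
      rw [← map_smul, ← algebraMap_smul R b m, ← algebraMap_smul R b (serreOrbit e n m),
        ← serreOrbit_smul])

theorem serrePairing_apply (l : SerreCoind K R →ₗ[L] L) (e : N →ₗ[K] Module.Dual K M)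
    (he : ∀ (r : R) n m, e (r • n) m = e n (r • m)) (n : N) (m : M) :
    serrePairing l e he n m = l (serreOrbit e n m) := rfl

theorem serrePairing_bijective [Module.Finite K M] [Module.Finite L M]
    (l : SerreCoind K R →ₗ[L] L)
    (hl : ∀ Q : Submodule R (SerreCoind K R), Module.Finite K Q → Q ≠ ⊥ → ∃ q ∈ Q, l q ≠ 0)
    (e : N →ₗ[K] Module.Dual K M) (hbij : Function.Bijective e)
    (he : ∀ (r : R) n m, e (r • n) m = e n (r • m)) :
    Function.Bijective (serrePairing l e he) := by
  have key : ∀ n m, e n m ≠ 0 → ∃ r : R, l (serreOrbit e n (r • m)) ≠ 0 := by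
    intro n m hnm
    let ψ : M →ₗ[R] SerreCoind K R :=
      { toFun := fun m => serreOrbit e n m
        map_add' := fun m m' => by
          apply SerreCoind.ext'; intro s
          simp [SerreCoind.add_apply', serreOrbit_apply]
        map_smul' := fun r m => serreOrbit_smul e n m r }
    let Q := (Submodule.span R {m}).map ψ
    have hQr : Q ≤ LinearMap.range ψ := LinearMap.map_le_range
    have : Module.Finite K (LinearMap.range ψ) :=
      Module.Finite.of_surjective (ψ.rangeRestrict.restrictScalars K) ψ.surjective_rangeRestrict
    have hQf : Module.Finite K Q :=
      Module.Finite.of_injective ((Submodule.inclusion hQr).restrictScalars K)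
        (Submodule.inclusion_injective hQr)
    have hQ0 : Q ≠ ⊥ := by
      intro h
      have h1 : ψ m ∈ Q := ⟨m, Submodule.mem_span_singleton_self m, rfl⟩
      rw [h, Submodule.mem_bot] at h1
      apply hnm
      have h2 : (ψ m) (1 : R) = 0 := by rw [h1]; rfl
      have h3 : (ψ m) (1 : R) = e n ((1 : R) • m) := rfl
      rwa [h3, one_smul] at h2
    obtain ⟨q, ⟨x, hx, rfl⟩, hq⟩ := hl Q hQf hQ0
    obtain ⟨r, rfl⟩ := Submodule.mem_span_singleton.mp hx
    exact ⟨r, hq⟩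
  constructor
  · rw [← LinearMap.ker_eq_bot, eq_bot_iff]
    intro n hn
    rw [LinearMap.mem_ker] at hn
    rw [Submodule.mem_bot]
    by_contra h0
    have : e n ≠ 0 := fun h => h0 (hbij.1 (h.trans (map_zero e).symm))
    obtain ⟨m, hm⟩ : ∃ m, e n m ≠ 0 := by
      by_contra! h
      exact this (LinearMap.ext h)
    obtain ⟨r, hr⟩ := key n m hm
    apply hr
    rw [← serrePairing_apply l e he, hn]
    rfl
  · rw [← LinearMap.range_eq_top]
    apply SerreCoind.top_of_coann
    intro m hm
    by_contra h0
    obtain ⟨ξ, hξ⟩ : ∃ ξ : Module.Dual K M, ξ m ≠ 0 := by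
      by_contra! h
      exact h0 ((Module.forall_dual_apply_eq_zero_iff K m).mp h)
    obtain ⟨n, rfl⟩ := hbij.2 ξ
    obtain ⟨r, hr⟩ := key n m hξ
    apply hr
    have := hm _ ⟨r • n, rfl⟩
    rw [serrePairing_apply] at this
    rw [← this]
    congr 1
    apply SerreCoind.ext'
    intro s
    rw [serreOrbit_apply, serreOrbit_apply, he, smul_comm]

end

section
open scoped TensorProduct

attribute [local instance] TensorProduct.Algebra.module Algebra.TensorProduct.rightAlgebra

/-- Changing the linear structure does not affect being a left Serre functor. -/
theorem leftSerre_change {K L : Type*} [Field K] [Field L] {S : Type u₁} [Category.{v₁} S]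
    [Preadditive S] [CategoryTheory.Linear K S] [CategoryTheory.Linear L S]
    [∀ X Y : S, FiniteDimensional K (X ⟶ Y)] [∀ X Y : S, FiniteDimensional L (X ⟶ Y)]
    (G : S ⥤ S) (E : LeftSerreStructure K S G) : Nonempty (LeftSerreStructure L S G) := by
  have hc : ∀ X Y : S, SMulCommClass K L (X ⟶ Y) := fun X Y => ⟨fun a b f => by
    have h : b • f = (b • 𝟙 X) ≫ f := by rw [Linear.smul_comp, Category.id_comp]
    rw [h, ← Linear.comp_smul, Linear.smul_comp, Category.id_comp]⟩
  have hT : ∀ X Y : S, IsScalarTower K (K ⊗[ℤ] L) (X ⟶ Y) := fun X Y =>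
    IsScalarTower.of_algebraMap_smul (R := K) (A := K ⊗[ℤ] L) (M := X ⟶ Y) fun a f => by
      change ((a ⊗ₜ[ℤ] (1 : L)) : K ⊗[ℤ] L) • f = _
      rw [TensorProduct.Algebra.smul_def, one_smul]
  have hT' : ∀ X Y : S, IsScalarTower L (K ⊗[ℤ] L) (X ⟶ Y) := fun X Y =>
    IsScalarTower.of_algebraMap_smul fun a f => by
      change (((1 : K) ⊗ₜ[ℤ] a) : K ⊗[ℤ] L) • f = _
      rw [TensorProduct.Algebra.smul_def, one_smul]
  have hsc : ∀ {X Y Z : S} (r : K ⊗[ℤ] L) (f : X ⟶ Y) (g : Y ⟶ Z),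
      (r • f) ≫ g = r • (f ≫ g) := by
    intro X Y Z r f g
    induction r using TensorProduct.induction_on with
    | zero =>
      exact (congrArg (· ≫ g) (zero_smul (K ⊗[ℤ] L) f)).trans
        (Limits.zero_comp.trans (zero_smul (K ⊗[ℤ] L) (f ≫ g)).symm)
    | tmul a b => simp only [TensorProduct.Algebra.smul_def, Linear.smul_comp]
    | add x y hx hy => simp only [add_smul, Preadditive.add_comp, hx, hy]
  have hcs : ∀ {X Y Z : S} (r : K ⊗[ℤ] L) (f : X ⟶ Y) (g : Y ⟶ Z),
      f ≫ (r • g) = r • (f ≫ g) := by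
    intro X Y Z r f g
    induction r using TensorProduct.induction_on with
    | zero =>
      exact (congrArg (f ≫ ·) (zero_smul (K ⊗[ℤ] L) g)).trans
        (Limits.comp_zero.trans (zero_smul (K ⊗[ℤ] L) (f ≫ g)).symm)
    | tmul a b => simp only [TensorProduct.Algebra.smul_def, Linear.comp_smul]
    | add x y hx hy => simp only [add_smul, Preadditive.comp_add, hx, hy]
  have he : ∀ (X Y : S) (r : K ⊗[ℤ] L) (n : X ⟶ Y) (m : G.obj Y ⟶ X),
      (E.equiv X Y).toLinearMap (r • n) m = (E.equiv X Y).toLinearMap n (r • m) := by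
    intro X Y r n m
    have h := E.naturality_left (r • 𝟙 X) n m
    rw [hsc, hcs, Category.id_comp, Category.comp_id] at h
    exact h
  obtain ⟨l, hl⟩ := SerreCoind.exists_functional K L (K ⊗[ℤ] L)
  refine ⟨⟨fun X Y => LinearEquiv.ofBijective (serrePairing l (E.equiv X Y).toLinearMap (he X Y))
    (serrePairing_bijective l hl _ (E.equiv X Y).bijective _), ?_, ?_⟩⟩
  · intro X X' Y f φ u
    rw [LinearEquiv.ofBijective_apply, LinearEquiv.ofBijective_apply, serrePairing_apply,
      serrePairing_apply]
    congr 1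
    apply SerreCoind.ext'
    intro s
    rw [serreOrbit_apply, serreOrbit_apply, ← hsc]
    exact E.naturality_left _ _ _
  · intro X Y Y' φ g u
    rw [LinearEquiv.ofBijective_apply, LinearEquiv.ofBijective_apply, serrePairing_apply,
      serrePairing_apply]
    congr 1
    apply SerreCoind.ext'
    intro s
    rw [serreOrbit_apply, serreOrbit_apply, ← hcs]
    exact E.naturality_right _ _ _

end

/-- Transport of a linear structure along a fully faithful additive functor. -/
@[reducible] def linearOfFullyFaithful (k : Type*) [Field k] {S : Type u₁} {T : Type u₂}
    [Category.{v₁} S] [Category.{v₂} T] [Preadditive S] [Preadditive T]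
    [CategoryTheory.Linear k T] (i : S ⥤ T) [i.Additive] (h : i.FullyFaithful) :
    CategoryTheory.Linear k S where
  homModule X Y :=
    { smul := fun a f => h.preimage (a • i.map f)
      one_smul := fun f => h.map_injective (by
        change i.map (h.preimage _) = _; simp)
      mul_smul := fun a b f => h.map_injective (by
        change i.map (h.preimage _) = i.map (h.preimage (a • i.map (h.preimage _)))
        simp [mul_smul])
      smul_zero := fun a => h.map_injective (by
        change i.map (h.preimage _) = _; simp)
      smul_add := fun a f g => h.map_injective (by
        change i.map (h.preimage _) = i.map (h.preimage _ + h.preimage _); simp)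
      add_smul := fun a b f => h.map_injective (by
        change i.map (h.preimage _) = i.map (h.preimage _ + h.preimage _); simp [add_smul])
      zero_smul := fun f => h.map_injective (by
        change i.map (h.preimage _) = _; simp) }
  smul_comp X Y Z a f g := h.map_injective (by
    change i.map (h.preimage _ ≫ _) = i.map (h.preimage _); simp)
  comp_smul X Y Z f a g := h.map_injective (by
    change i.map (_ ≫ h.preimage _) = i.map (h.preimage _); simp)

/-- The case of a linear fully faithful functor. -/
theorem leftSerre_of_linear {k : Type*} [Field k] {S : Type u₁} {T : Type u₂}
    [Category.{v₁} S] [Category.{v₂} T] [Preadditive S] [Preadditive T]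
    [CategoryTheory.Linear k S] [CategoryTheory.Linear k T]
    [∀ X Y : T, FiniteDimensional k (X ⟶ Y)]
    (i : S ⥤ T) [i.Additive] [i.Linear k] (h : i.FullyFaithful) (p : T ⥤ S) (adj : p ⊣ i)
    (F F' : T ⥤ T) (E : RightSerreStructure k T F) (ε : F' ⋙ F ≅ 𝟭 T) :
    Nonempty (LeftSerreStructure k S (i ⋙ F' ⋙ p)) := by
  let α : ∀ X Y : S, (X ⟶ Y) ≃ₗ[k] (i.obj X ⟶ F.obj (F'.obj (i.obj Y))) := fun X Y =>
    LinearEquiv.ofBijective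
      (Linear.rightComp k (i.obj X) (ε.inv.app (i.obj Y)) ∘ₗ i.mapLinearMap k)
      ((Iso.homToEquiv ((ε.symm.app (i.obj Y)))).bijective.comp h.homEquiv.bijective)
  let β : ∀ X Y : S, (p.obj (F'.obj (i.obj Y)) ⟶ X) ≃ₗ[k] (F'.obj (i.obj Y) ⟶ i.obj X) :=
    fun X Y => LinearEquiv.ofBijective
      (Linear.leftComp k (i.obj X) (adj.unit.app (F'.obj (i.obj Y))) ∘ₗ i.mapLinearMap k)
      (by
        have hb := (adj.homEquiv (F'.obj (i.obj Y)) X).bijective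
        have hf : (adj.homEquiv (F'.obj (i.obj Y)) X : _ → _) =
            fun w => adj.unit.app (F'.obj (i.obj Y)) ≫ i.map w :=
          funext fun w => adj.homEquiv_unit _ _ w
        rw [hf] at hb
        exact hb)
  have hα : ∀ {X Y : S} (φ : X ⟶ Y), α X Y φ = i.map φ ≫ ε.inv.app (i.obj Y) := fun φ => rfl
  have hβ : ∀ {X Y : S} (w : p.obj (F'.obj (i.obj Y)) ⟶ X),
      β X Y w = adj.unit.app (F'.obj (i.obj Y)) ≫ i.map w := fun w => rfl
  let e : ∀ X Y : S, (X ⟶ Y) ≃ₗ[k] Module.Dual k (p.obj (F'.obj (i.obj Y)) ⟶ X) := fun X Y =>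
    (α X Y).trans ((Module.evalEquiv k _).trans
      (((β X Y).trans (E.equiv (F'.obj (i.obj Y)) (i.obj X))).dualMap))
  have he : ∀ {X Y : S} (φ : X ⟶ Y) (w : p.obj (F'.obj (i.obj Y)) ⟶ X),
      e X Y φ w = E.equiv _ _ (adj.unit.app (F'.obj (i.obj Y)) ≫ i.map w)
        (i.map φ ≫ ε.inv.app (i.obj Y)) := fun φ w => rfl
  refine ⟨⟨e, ?_, ?_⟩⟩
  · intro X X' Y f φ u
    refine (he _ _).trans (Eq.trans ?_ (he _ _).symm)
    have h1 : adj.unit.app (F'.obj (i.obj Y)) ≫ i.map (u ≫ f)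
        = (adj.unit.app (F'.obj (i.obj Y)) ≫ i.map u) ≫ i.map f := by
      rw [i.map_comp, Category.assoc]
    rw [i.map_comp f φ, Category.assoc, h1]
    exact (E.naturality_right _ (i.map f) _).symm
  · intro X Y Y' φ g u
    refine (he _ _).trans (Eq.trans ?_ (he _ _).symm)
    have h1 : ε.inv.app (i.obj Y) ≫ F.map (F'.map (i.map g)) = i.map g ≫ ε.inv.app (i.obj Y') :=
      (ε.inv.naturality (i.map g)).symm
    have h2 : adj.unit.app (F'.obj (i.obj Y)) ≫ i.map (p.map (F'.map (i.map g)))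
        = F'.map (i.map g) ≫ adj.unit.app (F'.obj (i.obj Y')) :=
      (adj.unit.naturality (F'.map (i.map g))).symm
    have h3 : adj.unit.app (F'.obj (i.obj Y)) ≫ i.map ((i ⋙ F' ⋙ p).map g ≫ u)
        = F'.map (i.map g) ≫ (adj.unit.app (F'.obj (i.obj Y')) ≫ i.map u) := by
      rw [i.map_comp]
      change _ ≫ i.map (p.map (F'.map (i.map g))) ≫ _ = _
      rw [← Category.assoc, h2, Category.assoc]
    rw [h3]
    refine Eq.trans ?_ (E.naturality_left (F'.map (i.map g)) _ _).symm
    have h4 : (i.map φ ≫ ε.inv.app (i.obj Y)) ≫ F.map (F'.map (i.map g))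
        = i.map (φ ≫ g) ≫ ε.inv.app (i.obj Y') := by
      rw [Category.assoc, h1, i.map_comp, Category.assoc]
    exact congrArg _ h4.symm

/-- Existence of some linear structure on `S` for which the result holds. -/
theorem exists_linear_leftSerre (k : Type*) [Field k] {S : Type u₁} {T : Type u₂}
    [Category.{v₁} S] [Category.{v₂} T] [Preadditive S] [Preadditive T]
    [CategoryTheory.Linear k T] [∀ X Y : T, FiniteDimensional k (X ⟶ Y)]
    (i : S ⥤ T) [i.Additive] (h : i.FullyFaithful) (p : T ⥤ S) (adj : p ⊣ i)
    (F F' : T ⥤ T) (E : RightSerreStructure k T F) (ε : F' ⋙ F ≅ 𝟭 T) :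
    ∃ _ : CategoryTheory.Linear k S, (∀ X Y : S, FiniteDimensional k (X ⟶ Y)) ∧
      Nonempty (LeftSerreStructure k S (i ⋙ F' ⋙ p)) := by
  let l₁ : CategoryTheory.Linear k S := linearOfFullyFaithful k i h
  have hlin : i.Linear k := ⟨fun f r => h.map_preimage _⟩
  exact ⟨l₁, fun X Y => Module.Finite.of_injective (i.mapLinearMap k) fun _ _ hfg => h.map_injective hfg,
    leftSerre_of_linear i h p adj F F' E ε⟩

/-- Given a recollement `(S, T, U)` and a Serre functor `F` on `T` with quasi-inverse `F'`,
the composite functor `i^* ∘ F' ∘ i_* : S ⥤ S` is a left Serre functor on `S`. -/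
theorem recollement_left_serre_structure_on_S
    {k : Type u₄} [Field k]
    {S : Type u₁} {T : Type u₂} {U : Type u₃}
    [Category.{v₁} S] [Category.{v₂} T] [Category.{v₃} U]
    [HasZeroObject S] [HasZeroObject T] [HasZeroObject U]
    [Preadditive S] [Preadditive T] [Preadditive U]
    [CategoryTheory.Linear k S] [CategoryTheory.Linear k T] [CategoryTheory.Linear k U]
    [HasShift S ℤ] [HasShift T ℤ] [HasShift U ℤ]
    [∀ n : ℤ, (shiftFunctor S n).Additive] [∀ n : ℤ, (shiftFunctor T n).Additive]
    [∀ n : ℤ, (shiftFunctor U n).Additive]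
    [Pretriangulated S] [Pretriangulated T] [Pretriangulated U]
    [EssentiallySmall.{v₁} S] [EssentiallySmall.{v₂} T] [EssentiallySmall.{v₃} U]
    [∀ X Y : S, FiniteDimensional k (X ⟶ Y)]
    [∀ X Y : T, FiniteDimensional k (X ⟶ Y)]
    [∀ X Y : U, FiniteDimensional k (X ⟶ Y)]
    [IsIdempotentComplete T]
    (R : Recollement S T U)
    (SF : SerreFunctor k T) (F' : T ⥤ T)
    (η : SF.F ⋙ F' ≅ 𝟭 T) (ε : F' ⋙ SF.F ≅ 𝟭 T) :
    Nonempty (LeftSerreStructure k S (R.iSt ⋙ F' ⋙ R.iUp)) := by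
  let := R.commShift_iSt
  have := R.isTriangulated_iSt
  have hadd : R.iSt.Additive := inferInstance
  let l₂ : CategoryTheory.Linear k S := inferInstance
  have hfin₂ : ∀ X Y : S, FiniteDimensional k (X ⟶ Y) := inferInstance
  obtain ⟨l₁, hfin, ⟨E⟩⟩ := exists_linear_leftSerre k R.iSt R.fullyFaithful_iSt
    R.iUp R.adj₁ SF.F F' SF.rightSerre ε
  exact @leftSerre_change k k _ _ S _ _ l₁ l₂ hfin hfin₂ _ E
end

section
/- Given a recollement (S, T, U) and a Serre functor F on T with quasi-inverse F', the category S has a Serre functor, namely i^! ∘ F ∘ i_*, and i^* ∘ F' ∘ i_* is a quasi-inverse of it. -/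
/-!
Setting: `k` a field; `S`, `T`, `U` skeletally small `k`-linear triangulated categories
with finite-dimensional Hom-spaces, `T` with split idempotents.  A recollement
`(S, T, U)` as in [BBD], and (right/left) Serre functors in the sense of
Reiten–Van den Bergh.
-/

open CategoryTheory CategoryTheory.Limits CategoryTheory.Pretriangulated

universe v₁ v₂ v₃ u₁ u₂ u₃ u₄

section CogenPart

/-- The module `Hom_K(R, K)` over `R`. -/
def Cog (K : Type*) (R : Type*) [Field K] [CommRing R] [Algebra K R] := R →ₗ[K] K

namespace Cog

variable {K : Type*} {R : Type*} [Field K] [CommRing R] [Algebra K R]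

instance : AddCommGroup (Cog K R) := inferInstanceAs (AddCommGroup (R →ₗ[K] K))
instance : Module K (Cog K R) := inferInstanceAs (Module K (R →ₗ[K] K))

/-- precomposition with multiplication by `r` -/
def act (r : R) (χ : R →ₗ[K] K) : R →ₗ[K] K := χ ∘ₗ LinearMap.mulLeft K r

@[simp] lemma act_apply (r : R) (χ : R →ₗ[K] K) (x : R) : act r χ x = χ (r * x) := rfl

/-- evaluation -/
def ev (χ : Cog K R) : R →ₗ[K] K := χ

/-- the inverse of `ev` -/
def mk (χ : R →ₗ[K] K) : Cog K R := χ

lemma ev_mk (χ : R →ₗ[K] K) : ev (mk χ) = χ := rfl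

lemma ext' {χ χ' : Cog K R} (h : ∀ x, ev χ x = ev χ' x) : χ = χ' := LinearMap.ext h

instance : Module R (Cog K R) where
  smul r χ := act r χ
  one_smul χ := ext' fun x => congrArg (ev χ) (one_mul x)
  mul_smul a b χ := ext' fun x => congrArg (ev χ) (by ring : a * b * x = b * (a * x))
  smul_zero a := ext' fun x => rfl
  smul_add a χ χ' := ext' fun x => rfl
  add_smul a b χ := ext' fun x => by
    change ev χ ((a + b) * x) = ev χ (a * x) + ev χ (b * x)
    rw [add_mul, map_add]
  zero_smul χ := ext' fun x => by
    change ev χ (0 * x) = 0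
    rw [zero_mul, map_zero]

lemma ev_smul (r : R) (χ : Cog K R) (x : R) : ev (r • χ) x = ev χ (r * x) := rfl
lemma ev_zero (x : R) : ev (0 : Cog K R) x = 0 := rfl
lemma ev_smulK (c : K) (χ : Cog K R) (x : R) : ev (c • χ) x = c * ev χ x := rfl

instance : IsScalarTower K R (Cog K R) where
  smul_assoc c r χ := ext' fun x => by
    rw [ev_smulK, ev_smul, ev_smul, smul_mul_assoc, map_smul, smul_eq_mul]

/-- `D[m]` is generated by any of its nonzero elements. -/
lemma exists_smul_eq (m : Ideal R) [m.IsMaximal] [Module.Finite K (R ⧸ m)]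
    (ψ v : Cog K R) (hψ : ∀ a ∈ m, ev ψ a = 0) (hv : ∀ a ∈ m, ev v a = 0) (h0 : ψ ≠ 0) :
    ∃ r : R, r • ψ = v := by
  let _ : Field (R ⧸ m) := Ideal.Quotient.field m
  let q : R →ₗ[K] (R ⧸ m) := (Ideal.Quotient.mkₐ K m).toLinearMap
  have hq : Function.Surjective q := Ideal.Quotient.mk_surjective
  have hker : ∀ χ : Cog K R, (∀ a ∈ m, ev χ a = 0) →
      ∃ χ' : (R ⧸ m) →ₗ[K] K, ∀ x, χ' (q x) = ev χ x := by
    intro χ h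
    refine ⟨(m.restrictScalars K).liftQ (ev χ) (fun a ha => h a ha), fun x => rfl⟩
  obtain ⟨ψ', hψ'⟩ := hker ψ hψ
  obtain ⟨v', hv'⟩ := hker v hv
  let B : (R ⧸ m) →ₗ[K] Module.Dual K (R ⧸ m) := (LinearMap.mul K (R ⧸ m)).compr₂ ψ'
  have hB : ∀ a b, B a b = ψ' (a * b) := fun a b => rfl
  have hinj : Function.Injective B := by
    rw [injective_iff_map_eq_zero]
    intro a ha
    by_contra hne
    apply h0
    apply ext'
    intro x
    rw [ev_zero, ← hψ']
    have := hB a (a⁻¹ * q x)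
    rw [ha, mul_inv_cancel_left₀ hne] at this
    exact this.symm
  have hsurj : Function.Surjective B :=
    (LinearMap.injective_iff_surjective_of_finrank_eq_finrank
      (Subspace.dual_finrank_eq).symm).1 hinj
  obtain ⟨a, ha⟩ := hsurj v'
  obtain ⟨r, rfl⟩ := hq a
  refine ⟨r, ext' fun x => ?_⟩
  rw [ev_smul, ← hψ', ← hv', ← ha, hB]
  congr 1

lemma exists_nonzero (m : Ideal R) [m.IsMaximal] :
    ∃ v : Cog K R, v ∈ Submodule.torsionBySet R (Cog K R) m ∧ v ≠ 0 := by
  have : Nontrivial (R ⧸ m) := Ideal.Quotient.nontrivial_iff.2 (Ideal.IsMaximal.ne_top ‹_›)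
  obtain ⟨f, hf⟩ := Module.Projective.exists_dual_ne_zero K (one_ne_zero (α := R ⧸ m))
  refine ⟨mk (f ∘ₗ (Ideal.Quotient.mkₐ K m).toLinearMap), ?_, ?_⟩
  · rw [Submodule.mem_torsionBySet_iff]
    rintro ⟨a, ha⟩
    refine ext' fun x => ?_
    change f (Ideal.Quotient.mk m (a * x)) = 0
    rw [Ideal.Quotient.eq_zero_iff_mem.2 (m.mul_mem_right x ha), map_zero]
  · intro h
    exact hf (congrArg (fun χ => ev χ 1) h)

lemma exists_functional (L : Type*) [Field L] [Algebra L R] :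
    ∃ μ : Cog K R →+ L, (∀ (l : L) (χ : Cog K R), μ (algebraMap L R l • χ) = l * μ χ) ∧
      ∀ m : Ideal R, m.IsMaximal → Module.Finite K (R ⧸ m) →
        ∃ v ∈ Submodule.torsionBySet R (Cog K R) m, μ v ≠ 0 := by
  classical
  let _ : Module L (Cog K R) := Module.compHom (Cog K R) (algebraMap L R)
  have hL : ∀ (l : L) (χ : Cog K R), l • χ = algebraMap L R l • χ := fun _ _ => rfl
  have key : ∀ m : MaximalSpectrum R, ∃ v : Cog K R,
      v ∈ Submodule.torsionBySet R (Cog K R) m.asIdeal ∧ v ≠ 0 := fun m =>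
    have := m.isMaximal
    exists_nonzero m.asIdeal
  choose v hv hv0 using key
  have hli : LinearIndependent L v := by
    rw [linearIndependent_iff']
    intro s g hs i hi
    by_contra hne
    have hind := Submodule.supIndep_torsionBySet_ideal (R := R) (M := Cog K R) (S := s)
      (p := fun m : MaximalSpectrum R => m.asIdeal) (by
        intro a _ b _ hab
        have := a.isMaximal
        have := b.isMaximal
        exact Ideal.IsMaximal.coprime_of_ne a.isMaximal b.isMaximal
          (fun h => hab (MaximalSpectrum.ext h)))
    have hd := hind (Finset.erase_subset i s) hi (Finset.notMem_erase i s)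
    have hmem : ∀ j, g j • v j ∈ Submodule.torsionBySet R (Cog K R) j.asIdeal := fun j =>
      Submodule.smul_mem _ (algebraMap L R (g j)) (hv j)
    have h1 : g i • v i ∈ (s.erase i).sup
        (fun m : MaximalSpectrum R => Submodule.torsionBySet R (Cog K R) m.asIdeal) := by
      rw [← Finset.add_sum_erase s _ hi, add_eq_zero_iff_eq_neg] at hs
      rw [hs]
      refine Submodule.neg_mem _ (Submodule.sum_mem _ fun j hj => ?_)
      exact (Finset.le_sup (f := fun m : MaximalSpectrum R =>
        Submodule.torsionBySet R (Cog K R) m.asIdeal) hj) (hmem j)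
    have h2 := Submodule.disjoint_def.1 hd _ (hmem i) h1
    exact hv0 i ((smul_eq_zero.1 h2).resolve_left hne)
  obtain ⟨μ, hμ⟩ := LinearMap.exists_extend (hli.repr)
  let σ : (MaximalSpectrum R →₀ L) →ₗ[L] L := Finsupp.lsum L (fun _ => LinearMap.id)
  refine ⟨(σ ∘ₗ μ).toAddMonoidHom, fun l χ => ?_, fun m hm _ => ⟨v ⟨m, hm⟩, hv ⟨m, hm⟩, ?_⟩⟩
  · exact map_smul (σ ∘ₗ μ) l χ
  · have h3 : μ (v ⟨m, hm⟩) = Finsupp.single ⟨m, hm⟩ 1 := by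
      have := LinearMap.congr_fun hμ ⟨v ⟨m, hm⟩, Submodule.subset_span ⟨_, rfl⟩⟩
      exact this.trans (hli.repr_eq_single _ _ rfl)
    change σ (μ (v ⟨m, hm⟩)) ≠ 0
    rw [h3]
    simp [σ]

lemma functional_nondeg {L : Type*} [Field L] (μ : Cog K R →+ L)
    (hμ : ∀ m : Ideal R, m.IsMaximal → Module.Finite K (R ⧸ m) →
        ∃ v ∈ Submodule.torsionBySet R (Cog K R) m, μ v ≠ 0)
    (χ : Cog K R) (I : Ideal R) [Module.Finite K (R ⧸ I)]
    (hI : ∀ a ∈ I, ev χ a = 0) (h : ∀ s : R, μ (s • χ) = 0) : χ = 0 := by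
  by_contra hne
  let N : Submodule R (Cog K R) := R ∙ χ
  have hNfin : Module.Finite K N := by
    let g : R →ₗ[R] N := (LinearMap.toSpanSingleton R N ⟨χ, Submodule.mem_span_singleton_self χ⟩)
    have hg : I ≤ LinearMap.ker g := by
      intro a ha
      rw [LinearMap.mem_ker]
      apply Subtype.ext
      refine ext' fun x => ?_
      change ev χ (a * x) = 0
      exact hI _ (I.mul_mem_right x ha)
    have hs : Function.Surjective (I.liftQ g hg) := by
      rintro ⟨y, hy⟩
      obtain ⟨r, rfl⟩ := Submodule.mem_span_singleton.1 hy
      exact ⟨Ideal.Quotient.mk I r, rfl⟩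
    exact Module.Finite.of_surjective ((I.liftQ g hg).restrictScalars K) hs
  have hart : IsArtinian R N := isArtinian_of_tower K inferInstance
  have : Nontrivial N := ⟨⟨χ, Submodule.mem_span_singleton_self χ⟩, 0, fun e => hne
    (congrArg Subtype.val e)⟩
  obtain ⟨A, hA⟩ := IsAtomic.exists_atom (Submodule R N)
  have hsimple : IsSimpleModule R A := isSimpleModule_iff_isAtom.2 hA
  have hmax : (Module.annihilator R A).IsMaximal := IsSimpleModule.annihilator_isMaximal
  set m := Module.annihilator R A with hm
  obtain ⟨ψ, hψA, hψ0⟩ := (Submodule.ne_bot_iff A).1 hA.1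
  have hAfin : Module.Finite K A :=
    Module.Finite.of_injective (A.subtype.restrictScalars K) A.injective_subtype
  have hψm : ∀ a ∈ m, a • (ψ : Cog K R) = 0 := by
    intro a ha
    have := Module.mem_annihilator.1 ha ⟨ψ, hψA⟩
    exact congrArg (fun z : A => ((z : N) : Cog K R)) this
  have hmfin : Module.Finite K (R ⧸ m) := by
    let g : R →ₗ[R] A := LinearMap.toSpanSingleton R A ⟨ψ, hψA⟩
    have hg : LinearMap.ker g = m := by
      have hle : m ≤ LinearMap.ker g := fun a ha => Module.mem_annihilator.1 ha ⟨ψ, hψA⟩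
      refine (hmax.eq_of_le ?_ hle).symm
      intro htop
      have : (1 : R) ∈ LinearMap.ker g := by rw [htop]; trivial
      rw [LinearMap.mem_ker] at this
      apply hψ0
      have h2 : (1 : R) • (⟨ψ, hψA⟩ : A) = 0 := this
      rw [one_smul] at h2
      exact congrArg Subtype.val h2
    let g' := m.liftQ g hg.ge
    have hg' : Function.Injective g' := by
      rw [← LinearMap.ker_eq_bot]
      exact Submodule.ker_liftQ_eq_bot _ _ _ hg.le
    exact Module.Finite.of_injective (g'.restrictScalars K) hg'
  obtain ⟨v, hv, hv0⟩ := hμ m hmax hmfin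
  have hz : ∀ w : Cog K R, (∀ a ∈ m, a • w = 0) → ∀ a ∈ m, ev w a = 0 := by
    intro w hw a ha
    have := congrArg (fun z => ev z 1) (hw a ha)
    simpa [ev_smul, ev_zero] using this
  obtain ⟨r, hr⟩ := exists_smul_eq m (ψ : Cog K R) v (hz _ hψm)
    (hz _ fun a ha => (Submodule.mem_torsionBySet_iff _ _).1 hv ⟨a, ha⟩)
    (fun e => hψ0 (Subtype.ext e))
  obtain ⟨s, hs⟩ := Submodule.mem_span_singleton.1 ψ.2
  apply hv0
  rw [← hr, ← hs, smul_smul]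
  exact h _

end Cog
end CogenPart

section SerreGeneral

namespace RightSerreStructure

variable {K : Type*} [Field K] {C : Type*} [Category C] [Preadditive C]
  [CategoryTheory.Linear K C] {G : C ⥤ C}

lemma sep (σ : RightSerreStructure K C G) {X Y : C} {w w' : Y ⟶ G.obj X} (h : ∀ φ : X ⟶ Y, σ.equiv X Y φ w = σ.equiv X Y φ w') :
    w = w' := by
  rw [← sub_eq_zero, ← Module.forall_dual_apply_eq_zero_iff K]
  intro f
  obtain ⟨φ, rfl⟩ := (σ.equiv X Y).surjective f
  rw [map_sub, h, sub_self]

lemma sep' (σ : RightSerreStructure K C G) {X Y : C} {φ φ' : X ⟶ Y} (h : ∀ u, σ.equiv X Y φ u = σ.equiv X Y φ' u) : φ = φ' :=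
  (σ.equiv X Y).injective (LinearMap.ext h)

lemma equiv_map (σ : RightSerreStructure K C G) {X X' : C} (f : X' ⟶ X) (φ : X ⟶ G.obj X') :
    σ.equiv X (G.obj X') φ (G.map f) = σ.equiv X' (G.obj X') (f ≫ φ) (𝟙 _) := by
  rw [σ.naturality_left, Category.id_comp]

lemma map_add' (σ : RightSerreStructure K C G) {X X' : C} (f g : X' ⟶ X) : G.map (f + g) = G.map f + G.map g := by
  apply σ.sep
  intro φ
  rw [map_add, equiv_map, equiv_map, equiv_map, Preadditive.add_comp, map_add,
    LinearMap.add_apply]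

lemma map_center (σ : RightSerreStructure K C G) {X X' : C} (f : X' ⟶ X) (z : CatCenter C) :
    G.map (z • f) = z • G.map f := by
  apply σ.sep
  intro φ
  have h1 : (z • f) ≫ φ = f ≫ (φ ≫ z.app _) := by
    rw [CatCenter.smul_eq, Category.assoc, z.naturality]
  rw [equiv_map, h1, ← equiv_map, CatCenter.smul_eq']
  exact σ.naturality_right _ _ _

lemma toCatCenter_smul {X Y : C} (c : K) (f : X ⟶ Y) : Linear.toCatCenter K C c • f = c • f := by
  rw [CatCenter.smul_eq]
  change f ≫ (c • 𝟙 Y) = c • f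
  simp

lemma map_smulAny (σ : RightSerreStructure K C G) (L : Type*) [Field L] [CategoryTheory.Linear L C] {X X' : C} (f : X' ⟶ X)
    (c : L) : G.map (c • f) = c • G.map f := by
  rw [← toCatCenter_smul, ← toCatCenter_smul, σ.map_center]

/-- `G.map` as a linear map, over any field acting on `C`. -/
def mapLin (σ : RightSerreStructure K C G) (L : Type*) [Field L] [CategoryTheory.Linear L C] (X Y : C) :
    (X ⟶ Y) →ₗ[L] (G.obj X ⟶ G.obj Y) where
  toFun f := G.map f
  map_add' := σ.map_add'
  map_smul' c f := σ.map_smulAny L f c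

lemma map_inj (σ : RightSerreStructure K C G) {X Y : C} {f g : X ⟶ Y} (h : G.map f = G.map g) : f = g := by
  apply σ.sep'
  intro u
  have h1 := σ.naturality_left f (𝟙 _) u
  have h2 := σ.naturality_left g (𝟙 _) u
  rw [Category.comp_id] at h1 h2
  rw [h1, h2, h]

variable [∀ X Y : C, FiniteDimensional K (X ⟶ Y)]

lemma finrank_eq (σ : RightSerreStructure K C G) (X Y : C) :
    Module.finrank K (X ⟶ Y) = Module.finrank K (Y ⟶ G.obj X) := by
  rw [(σ.equiv X Y).finrank_eq, Subspace.dual_finrank_eq]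

lemma map_surj (σ : RightSerreStructure K C G) (X Y : C) : Function.Surjective (fun f : X ⟶ Y => G.map f) := by
  have h : Function.Injective (σ.mapLin K X Y) := fun f g h => σ.map_inj h
  exact (LinearMap.injective_iff_surjective_of_finrank_eq_finrank
    ((σ.finrank_eq X Y).trans (σ.finrank_eq _ _))).1 h

lemma full (σ : RightSerreStructure K C G) : G.Full := ⟨fun {X Y} => σ.map_surj X Y⟩
lemma faithful (σ : RightSerreStructure K C G) : G.Faithful := ⟨fun h => σ.map_inj h⟩

lemma essSurj (σ : RightSerreStructure K C G) {G' : C ⥤ C} (adj : G' ⊣ G) : G.EssSurj := by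
  have hinj : ∀ {X Y : C} (f g : Y ⟶ X), f ≫ adj.unit.app X = g ≫ adj.unit.app X → f = g := by
    intro X Y f g h
    apply σ.sep'
    intro u
    have h1 := σ.naturality_right (𝟙 Y) f u
    have h2 := σ.naturality_right (𝟙 Y) g u
    rw [Category.id_comp] at h1 h2
    rw [h1, h2]
    obtain ⟨w, rfl⟩ := (adj.homEquiv _ _).surjective u
    rw [Adjunction.homEquiv_unit, ← Category.assoc, h, Category.assoc]
  have hsurj : ∀ X Y : C, Function.Surjective (fun f : Y ⟶ X => f ≫ adj.unit.app X) := by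
    intro X Y
    let l : (Y ⟶ X) →ₗ[K] (Y ⟶ G.obj (G'.obj X)) := Linear.rightComp K Y (adj.unit.app X)
    have hl : Function.Injective l := fun f g h => hinj f g h
    let e : (G'.obj X ⟶ Y) ≃ₗ[K] (X ⟶ G.obj Y) :=
      { (adj.homEquiv X Y) with
        map_add' := fun f g => by
          simp [Adjunction.homEquiv_unit, σ.map_add']
        map_smul' := fun c f => by
          simp [Adjunction.homEquiv_unit, σ.map_smulAny K] }
    exact (LinearMap.injective_iff_surjective_of_finrank_eq_finrank
      (by rw [← σ.finrank_eq (G'.obj X) Y, e.finrank_eq, ← σ.finrank_eq Y X])).1 hl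
  refine ⟨fun X => ⟨G'.obj X, ?_⟩⟩
  obtain ⟨s, hs⟩ := hsurj X (G.obj (G'.obj X)) (𝟙 _)
  exact ⟨⟨s, adj.unit.app X, hs, hinj _ _ (by
    have hs' : s ≫ adj.unit.app X = 𝟙 _ := hs
    rw [Category.assoc, hs']; simp)⟩⟩

end RightSerreStructure

end SerreGeneral

section Transfer

variable {K L : Type*} [Field K] [Field L] {C : Type*} [Category C] [Preadditive C]
  [CategoryTheory.Linear K C] [CategoryTheory.Linear L C]

/-- The center of a preadditive category. -/
def Ctr (C : Type*) [Category C] [Preadditive C] := CatCenter C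

namespace Ctr

/-- the center as a subtype of `CatCenter` -/
def out (z : Ctr C) : CatCenter C := z

/-- the component of an element of the center -/
def app (z : Ctr C) (X : C) : X ⟶ X := CatCenter.app z.out X

instance : Ring (Ctr C) := inferInstanceAs (Ring (CatCenter C))

lemma mul_app' (x y : Ctr C) (X : C) : (x * y).app X = y.app X ≫ x.app X := rfl

lemma mul_app (x y : Ctr C) (X : C) : (x * y).app X = x.app X ≫ y.app X :=
  CatCenter.mul_app x.out y.out X

lemma app_add (x y : Ctr C) (X : C) : (x + y).app X = x.app X + y.app X := rfl

lemma one_app (X : C) : (1 : Ctr C).app X = 𝟙 X := rfl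

lemma naturality (z : Ctr C) {X Y : C} (f : X ⟶ Y) : f ≫ z.app Y = z.app X ≫ f :=
  CatCenter.naturality z.out f

lemma ext {x y : Ctr C} (h : ∀ X, x.app X = y.app X) : x = y :=
  CatCenter.ext x.out y.out h

instance : CommRing (Ctr C) where
  mul_comm x y := ext fun X => by rw [mul_app, mul_app']

/-- the ring morphism from a field acting on the category -/
def ofField (K C : Type*) [Field K] [Category C] [Preadditive C]
    [CategoryTheory.Linear K C] : K →+* Ctr C := Linear.toCatCenter K C

instance : Algebra K (Ctr C) := RingHom.toAlgebra (ofField K C)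

lemma algebraMap_app (c : K) (X : C) : (algebraMap K (Ctr C) c).app X = c • 𝟙 X := rfl

lemma smul_app (c : K) (z : Ctr C) (X : C) : (c • z).app X = c • z.app X := by
  rw [Algebra.smul_def, mul_app', algebraMap_app]
  simp

end Ctr

variable {G : C ⥤ C}

/-- The action of the center on an element. -/
def centerActLin (K : Type*) [Field K] [CategoryTheory.Linear K C] {X Y : C} (u : X ⟶ Y) :
    Ctr C →ₗ[K] (X ⟶ Y) where
  toFun z := z.app X ≫ u
  map_add' z w := by rw [Ctr.app_add, Preadditive.add_comp]
  map_smul' c z := by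
    rw [Ctr.smul_app, Linear.smul_comp]; rfl

/-- The functional on the center attached to a functional on a Hom-space. -/
def chi (σ : RightSerreStructure K C G) {X Y : C} (φ : X ⟶ Y) (u : Y ⟶ G.obj X) :
    Cog K (Ctr C) :=
  Cog.mk (σ.equiv X Y φ ∘ₗ centerActLin K u)

lemma ev_chi (σ : RightSerreStructure K C G) {X Y : C} (φ : X ⟶ Y) (u : Y ⟶ G.obj X)
    (z : Ctr C) : Cog.ev (chi σ φ u) z = σ.equiv X Y φ (z.app Y ≫ u) := rfl

lemma ev_add {R : Type*} [CommRing R] [Algebra K R] (a b : Cog K R) (x : R) :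
    Cog.ev (a + b) x = Cog.ev a x + Cog.ev b x := rfl

lemma chi_add_left (σ : RightSerreStructure K C G) {X Y : C} (φ φ' : X ⟶ Y) (u : Y ⟶ G.obj X) :
    chi σ (φ + φ') u = chi σ φ u + chi σ φ' u :=
  Cog.ext' fun z => by rw [ev_add, ev_chi, ev_chi, ev_chi, map_add, LinearMap.add_apply]

lemma chi_add_right (σ : RightSerreStructure K C G) {X Y : C} (φ : X ⟶ Y)
    (u u' : Y ⟶ G.obj X) :
    chi σ φ (u + u') = chi σ φ u + chi σ φ u' :=
  Cog.ext' fun z => by rw [ev_add, ev_chi, ev_chi, ev_chi, Preadditive.comp_add, map_add]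

lemma chi_smul_right (σ : RightSerreStructure K C G) {X Y : C} (φ : X ⟶ Y)
    (u : Y ⟶ G.obj X) (w : Ctr C) :
    chi σ φ (w.app Y ≫ u) = w • chi σ φ u :=
  Cog.ext' fun z => by
    rw [Cog.ev_smul, ev_chi, ev_chi, Ctr.mul_app', Category.assoc]

lemma chi_smul_left (σ : RightSerreStructure K C G) {X Y : C} (φ : X ⟶ Y)
    (u : Y ⟶ G.obj X) (w : Ctr C) :
    chi σ (φ ≫ w.app Y) u = w • chi σ φ u :=
  Cog.ext' fun z => by
    rw [Cog.ev_smul, ev_chi, ev_chi, σ.naturality_right, Ctr.mul_app, Category.assoc]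

lemma chi_natl (σ : RightSerreStructure K C G) {X X' Y : C} (f : X' ⟶ X) (φ : X ⟶ Y)
    (u : Y ⟶ G.obj X') : chi σ (f ≫ φ) u = chi σ φ (u ≫ G.map f) :=
  Cog.ext' fun z => by
    rw [ev_chi, ev_chi, σ.naturality_left, Category.assoc]

lemma chi_natr (σ : RightSerreStructure K C G) {X Y Y' : C} (φ : X ⟶ Y) (g : Y ⟶ Y')
    (u : Y' ⟶ G.obj X) : chi σ (φ ≫ g) u = chi σ φ (g ≫ u) :=
  Cog.ext' fun z => by
    rw [ev_chi, ev_chi, σ.naturality_right, ← Category.assoc, ← Category.assoc, z.naturality]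

/-- The property of being right Serre does not depend on the `Hom`-finite linear structure. -/
theorem serre_transfer [∀ X Y : C, FiniteDimensional K (X ⟶ Y)]
    [∀ X Y : C, FiniteDimensional L (X ⟶ Y)]
    (σ : RightSerreStructure K C G) : Nonempty (RightSerreStructure L C G) := by
  obtain ⟨μ, hμL, hμ⟩ := Cog.exists_functional (K := K) (R := Ctr C) L
  have hsl : ∀ {X Y : C} (l : L) (φ : X ⟶ Y),
      l • φ = φ ≫ (algebraMap L (Ctr C) l).app Y := by
    intro X Y l φ
    rw [Ctr.algebraMap_app]
    simp
  have hsr : ∀ {X Y : C} (l : L) (φ : X ⟶ Y),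
      l • φ = (algebraMap L (Ctr C) l).app X ≫ φ := by
    intro X Y l φ
    rw [Ctr.algebraMap_app]
    simp
  let Φ : ∀ X Y : C, (X ⟶ Y) →ₗ[L] Module.Dual L (Y ⟶ G.obj X) := fun X Y =>
    LinearMap.mk₂ L (fun φ u => μ (chi σ φ u))
      (fun φ φ' u => by rw [chi_add_left, map_add])
      (fun l φ u => by rw [hsl, chi_smul_left, hμL, smul_eq_mul])
      (fun φ u u' => by rw [chi_add_right, map_add])
      (fun l φ u => by rw [hsr, chi_smul_right, hμL, smul_eq_mul])
  have hΦ : ∀ (X Y : C) (φ : X ⟶ Y) (u : Y ⟶ G.obj X), Φ X Y φ u = μ (chi σ φ u) :=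
    fun _ _ _ _ => rfl
  have hinj : ∀ X Y, Function.Injective (Φ X Y) := by
    intro X Y
    rw [injective_iff_map_eq_zero]
    intro φ hφ
    apply σ.sep'
    intro u
    rw [map_zero, LinearMap.zero_apply]
    let I : Ideal (Ctr C) :=
      { carrier := {z | z.app Y ≫ u = 0}
        add_mem' := fun {a b} ha hb => by
          change (a + b).app Y ≫ u = 0
          rw [Ctr.app_add, Preadditive.add_comp, ha, hb, add_zero]
        zero_mem' := by
          exact map_zero (centerActLin K u)
        smul_mem' := fun c x hx => by
          change (c * x).app Y ≫ u = 0
          rw [Ctr.mul_app, Category.assoc, hx, comp_zero] }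
    have hfin : Module.Finite K (Ctr C ⧸ I) := by
      let g : (Ctr C ⧸ I) →ₗ[K] (Y ⟶ G.obj X) :=
        (I.restrictScalars K).liftQ (centerActLin K u) (fun a ha => ha)
      have hg : Function.Injective g := by
        rw [injective_iff_map_eq_zero]
        intro a ha
        obtain ⟨b, rfl⟩ := Ideal.Quotient.mk_surjective a
        exact Ideal.Quotient.eq_zero_iff_mem.2 ha
      exact Module.Finite.of_injective g hg
    have h0 : chi σ φ u = 0 := by
      refine Cog.functional_nondeg μ hμ _ I ?_ ?_
      · intro a ha
        rw [ev_chi]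
        have : a.app Y ≫ u = 0 := ha
        rw [this, map_zero]
      · intro s
        rw [← chi_smul_right, ← hΦ, hφ, LinearMap.zero_apply]
    have h1 := congrArg (fun χ => Cog.ev χ 1) h0
    simpa only [ev_chi, Cog.ev_zero, Ctr.one_app, Category.id_comp] using h1
  have hle : ∀ X Y : C, Module.finrank L (X ⟶ Y) ≤ Module.finrank L (Y ⟶ G.obj X) := by
    intro X Y
    rw [← Subspace.dual_finrank_eq (K := L) (V := Y ⟶ G.obj X)]
    exact LinearMap.finrank_le_finrank_of_injective (hinj X Y)
  have heq : ∀ X Y : C, Module.finrank L (X ⟶ Y) = Module.finrank L (Y ⟶ G.obj X) := by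
    intro X Y
    refine le_antisymm (hle X Y) ((hle Y (G.obj X)).trans ?_)
    exact LinearMap.finrank_le_finrank_of_surjective (f := σ.mapLin L X Y) (σ.map_surj X Y)
  exact ⟨{
    equiv := fun X Y => LinearMap.linearEquivOfInjective (Φ X Y) (hinj X Y)
      ((heq X Y).trans Subspace.dual_finrank_eq.symm)
    naturality_left := fun f φ u => by
      simp only [LinearMap.linearEquivOfInjective_apply, hΦ, chi_natl]
    naturality_right := fun φ g u => by
      simp only [LinearMap.linearEquivOfInjective_apply, hΦ, chi_natr] }⟩

end Transfer

section Final

/-- The linear structure transported along a fully faithful additive functor. -/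
@[reducible]
def pullLinear (k : Type*) [Field k] {S T : Type*} [Category S] [Category T]
    [Preadditive S] [Preadditive T] [CategoryTheory.Linear k T]
    (i : S ⥤ T) [i.Additive] (h : i.FullyFaithful) : CategoryTheory.Linear k S where
  homModule X Y :=
    { smul := fun c f => h.preimage (c • i.map f)
      one_smul := fun f => h.map_injective (by
        change i.map (h.preimage _) = _; simp)
      mul_smul := fun a b f => h.map_injective (by
        change i.map (h.preimage _) = i.map (h.preimage (_ • i.map (h.preimage _)))
        simp [mul_smul])
      smul_zero := fun a => h.map_injective (by
        change i.map (h.preimage _) = _; simp)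
      smul_add := fun a f g => h.map_injective (by
        change i.map (h.preimage _) = i.map (h.preimage _ + h.preimage _); simp)
      add_smul := fun a b f => h.map_injective (by
        change i.map (h.preimage _) = i.map (h.preimage _ + h.preimage _); simp [add_smul])
      zero_smul := fun f => h.map_injective (by
        change i.map (h.preimage _) = _; simp) }
  smul_comp X Y Z c f g := h.map_injective (by
    change i.map (h.preimage _ ≫ _) = i.map (h.preimage _); simp)
  comp_smul X Y Z f c g := h.map_injective (by
    change i.map (_ ≫ h.preimage _) = i.map (h.preimage _); simp)

theorem serre_pull (k : Type*) [Field k] {S T : Type*} [Category S] [Category T]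
    [Preadditive S] [Preadditive T] [CategoryTheory.Linear k T]
    [∀ X Y : T, FiniteDimensional k (X ⟶ Y)]
    (i : S ⥤ T) [i.Additive] (h : i.FullyFaithful) (r : T ⥤ S) (adj : i ⊣ r)
    (F : T ⥤ T) (σ : RightSerreStructure k T F) :
    letI := pullLinear k i h
    (∀ X Y : S, FiniteDimensional k (X ⟶ Y)) ∧
      Nonempty (RightSerreStructure k S (i ⋙ F ⋙ r)) := by
  let _ := pullLinear k i h
  have hmap : ∀ {X Y : S} (c : k) (f : X ⟶ Y), i.map (c • f) = c • i.map f := fun c f =>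
    h.map_preimage _
  let e : ∀ X Y : S, (X ⟶ Y) ≃ₗ[k] (i.obj X ⟶ i.obj Y) := fun X Y =>
    { h.homEquiv with
      map_add' := fun f g => i.map_add
      map_smul' := fun c f => hmap c f }
  have he : ∀ {X Y : S} (f : X ⟶ Y), e X Y f = i.map f := fun f => rfl
  let a : ∀ (Y : S) (Z : T), (Y ⟶ r.obj Z) ≃ₗ[k] (i.obj Y ⟶ Z) := fun Y Z =>
    { (adj.homEquiv Y Z).symm with
      map_add' := fun f g => by
        simp [Adjunction.homEquiv_counit]
      map_smul' := fun c f => by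
        simp [Adjunction.homEquiv_counit, hmap] }
  have ha : ∀ {Y : S} {Z : T} (f : Y ⟶ r.obj Z), a Y Z f = i.map f ≫ adj.counit.app Z :=
    fun f => Adjunction.homEquiv_counit _ _ _ _
  refine ⟨fun X Y => Module.Finite.equiv (e X Y).symm, ⟨{
    equiv := fun X Y => (e X Y).trans ((σ.equiv _ _).trans (a Y (F.obj (i.obj X))).dualMap)
    naturality_left := ?_
    naturality_right := ?_ }⟩⟩
  · intro X X' Y f φ u
    simp only [LinearEquiv.trans_apply, LinearEquiv.dualMap_apply, he, ha, Functor.map_comp,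
      σ.naturality_left, Functor.comp_map, Category.assoc]
    congr 2
    simp
  · intro X Y Y' φ g u
    simp only [LinearEquiv.trans_apply, LinearEquiv.dualMap_apply, he, ha, Functor.map_comp,
      σ.naturality_right, Category.assoc]

end Final

/-- Given a recollement `(S, T, U)` and a Serre functor `F` on `T` with quasi-inverse `F'`,
`S` has a Serre functor, namely `i^! ∘ F ∘ i_*`, with quasi-inverse `i^* ∘ F' ∘ i_*`. -/
theorem recollement_serre_functor_on_S
    {k : Type u₄} [Field k]
    {S : Type u₁} {T : Type u₂} {U : Type u₃}
    [Category.{v₁} S] [Category.{v₂} T] [Category.{v₃} U]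
    [HasZeroObject S] [HasZeroObject T] [HasZeroObject U]
    [Preadditive S] [Preadditive T] [Preadditive U]
    [CategoryTheory.Linear k S] [CategoryTheory.Linear k T] [CategoryTheory.Linear k U]
    [HasShift S ℤ] [HasShift T ℤ] [HasShift U ℤ]
    [∀ n : ℤ, (shiftFunctor S n).Additive] [∀ n : ℤ, (shiftFunctor T n).Additive]
    [∀ n : ℤ, (shiftFunctor U n).Additive]
    [Pretriangulated S] [Pretriangulated T] [Pretriangulated U]
    [EssentiallySmall.{v₁} S] [EssentiallySmall.{v₂} T] [EssentiallySmall.{v₃} U]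
    [∀ X Y : S, FiniteDimensional k (X ⟶ Y)]
    [∀ X Y : T, FiniteDimensional k (X ⟶ Y)]
    [∀ X Y : U, FiniteDimensional k (X ⟶ Y)]
    [IsIdempotentComplete T]
    (R : Recollement S T U)
    (SF : SerreFunctor k T) (F' : T ⥤ T)
    (η : SF.F ⋙ F' ≅ 𝟭 T) (ε : F' ⋙ SF.F ≅ 𝟭 T) :
    Nonempty (RightSerreStructure k S (R.iSt ⋙ SF.F ⋙ R.iSh)) ∧
      (R.iSt ⋙ SF.F ⋙ R.iSh).EssSurj ∧
      Nonempty ((R.iSt ⋙ SF.F ⋙ R.iSh) ⋙ (R.iSt ⋙ F' ⋙ R.iUp) ≅ 𝟭 S) ∧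
      Nonempty ((R.iSt ⋙ F' ⋙ R.iUp) ⋙ (R.iSt ⋙ SF.F ⋙ R.iSh) ≅ 𝟭 S) := by
  have hadd : R.iSt.Additive := by
    letI := R.commShift_iSt
    have := R.isTriangulated_iSt
    infer_instance
  have hS : Nonempty (RightSerreStructure k S (R.iSt ⋙ SF.F ⋙ R.iSh)) := by
    obtain ⟨hfd, ⟨σ⟩⟩ := serre_pull k R.iSt R.fullyFaithful_iSt R.iSh R.adj₂ SF.F SF.rightSerre
    exact @serre_transfer k k _ _ S _ _ (pullLinear k R.iSt R.fullyFaithful_iSt) _ _ hfd _ σ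
  refine ⟨hS, ?_⟩
  obtain ⟨σ⟩ := hS
  let E : T ≌ T := CategoryTheory.Equivalence.mk F' SF.F ε.symm η
  let adj : (R.iSt ⋙ F' ⋙ R.iUp) ⊣ (R.iSt ⋙ SF.F ⋙ R.iSh) :=
    R.adj₂.comp (E.toAdjunction.comp R.adj₁)
  have h1 := σ.essSurj adj
  have h2 := σ.full
  have h3 := σ.faithful
  have h4 : (R.iSt ⋙ SF.F ⋙ R.iSh).IsEquivalence := {}
  exact ⟨h1, ⟨asIso adj.counit⟩, ⟨(asIso adj.unit).symm⟩⟩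
end

section
/- Given a recollement (S, T, U) and a Serre functor F on T, the composite functor j^* ∘ F ∘ j_! : U → U is a right Serre functor on U. -/
/-!
Setting: `k` a field; `S`, `T`, `U` skeletally small `k`-linear triangulated categories
with finite-dimensional Hom-spaces, `T` with split idempotents.  A recollement
`(S, T, U)` as in [BBD], and (right/left) Serre functors in the sense of
Reiten–Van den Bergh.
-/

open CategoryTheory CategoryTheory.Limits CategoryTheory.Pretriangulated

universe v₁ v₂ v₃ u₁ u₂ u₃ u₄

section SerreHelpers

open TensorProduct

theorem exists_simple_le (A : Type*) {R E : Type*} [Field A] [CommRing R] [Algebra A R]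
    [AddCommGroup E] [Module A E] [Module R E] [IsScalarTower A R E] (f : E)
    (hf : FiniteDimensional A (Submodule.span R {f})) (hf0 : f ≠ 0) :
    ∃ W : Submodule R E, IsSimpleModule R W ∧ FiniteDimensional A W ∧
      W ≤ Submodule.span R {f} := by
  have : IsArtinian R (Submodule.span R {f}) := isArtinian_of_tower A inferInstance
  have hat : IsAtomic (Submodule R (Submodule.span R {f})) :=
    isAtomic_of_orderBot_wellFounded_lt (wellFounded_lt)
  have hne : (⊤ : Submodule R (Submodule.span R {f})) ≠ ⊥ := by
    intro h
    apply hf0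
    have : (⟨f, Submodule.mem_span_singleton_self f⟩ : Submodule.span R {f}) ∈
      (⊤ : Submodule R (Submodule.span R {f})) := trivial
    rw [h, Submodule.mem_bot] at this
    exact congrArg Subtype.val this
  obtain ⟨W, hW, -⟩ := (hat.eq_bot_or_exists_atom_le ⊤).resolve_left hne
  have hWs : IsSimpleModule R W := isSimpleModule_iff_isAtom.2 hW
  let eW := Submodule.equivMapOfInjective (Submodule.span R {f}).subtype
    (Submodule.injective_subtype _) W
  refine ⟨W.map (Submodule.span R {f}).subtype, IsSimpleModule.congr eW.symm, ?_,
    Submodule.map_subtype_le _ _⟩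
  have : FiniteDimensional A W := inferInstanceAs (FiniteDimensional A (W.restrictScalars A))
  exact Module.Finite.equiv (eW.restrictScalars A)

/-- The `R`-module structure on the `A`-dual of a commutative `A`-algebra `R`. -/
abbrev coModule (A R : Type*) [Field A] [CommRing R] [Algebra A R] :
    Module R (R →ₗ[A] A) where
  smul r f := f ∘ₗ LinearMap.mulLeft A r
  one_smul f := by ext x; change f (1 * x) = f x; simp
  mul_smul r s f := by
    ext x; change f (r * s * x) = f (s * (r * x)); congr 1; ring
  smul_zero r := by ext x; rfl
  smul_add r f g := by ext x; rfl
  add_smul r s f := by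
    ext x; change f ((r + s) * x) = f (r * x) + f (s * x); rw [add_mul, map_add]
  zero_smul f := by ext x; change f (0 * x) = 0; simp

attribute [local instance] coModule

theorem coModule_smul_apply {A R : Type*} [Field A] [CommRing R] [Algebra A R]
    (r : R) (f : R →ₗ[A] A) (x : R) : (r • f) x = f (r * x) := rfl

theorem coModule_tower (A R : Type*) [Field A] [CommRing R] [Algebra A R] :
    IsScalarTower A R (R →ₗ[A] A) where
  smul_assoc a r f := by
    ext x
    rw [coModule_smul_apply, LinearMap.smul_apply, coModule_smul_apply, smul_mul_assoc, map_smul]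

attribute [local instance] coModule_tower

theorem simple_mem_eq {A R : Type*} [Field A] [CommRing R] [Algebra A R]
    (W : Submodule R (R →ₗ[A] A)) [FiniteDimensional A W] (m : Ideal R)
    (e : W ≃ₗ[R] R ⧸ m) :
    W.restrictScalars A = (m.restrictScalars A).dualAnnihilator := by
  have e' : W ≃ₗ[A] (R ⧸ m.restrictScalars A) := e.restrictScalars A
  have : FiniteDimensional A (R ⧸ m.restrictScalars A) := Module.Finite.equiv e'
  have : FiniteDimensional A (m.restrictScalars A).dualAnnihilator :=
    Module.Finite.equiv (m.restrictScalars A).dualQuotEquivDualAnnihilator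
  apply Submodule.eq_of_le_of_finrank_eq
  · intro f hf
    rw [Submodule.mem_dualAnnihilator]
    intro r hr
    have h1 : r • (⟨f, hf⟩ : W) = 0 := by
      apply e.injective
      rw [map_smul, map_zero]
      obtain ⟨x, hx⟩ := Ideal.Quotient.mk_surjective (e ⟨f, hf⟩)
      rw [← hx]
      change Ideal.Quotient.mk m (r * x) = 0
      rw [Ideal.Quotient.eq_zero_iff_mem]
      exact m.mul_mem_right x hr
    have h2 : r • f = 0 := congrArg Subtype.val h1
    have h3 := LinearMap.congr_fun h2 1
    rw [coModule_smul_apply, mul_one] at h3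
    exact h3
  · rw [← (m.restrictScalars A).dualQuotEquivDualAnnihilator.finrank_eq,
      Subspace.dual_finrank_eq]
    exact e'.finrank_eq

theorem exists_theta (A B R : Type*) [Field A] [Field B] [CommRing R] [Algebra A R]
    [Algebra B R] :
    ∃ θ : (R →ₗ[A] A) →+ B, (∀ (b : B) f, θ (algebraMap B R b • f) = b * θ f) ∧
      ∀ f : R →ₗ[A] A, FiniteDimensional A (Submodule.span R {f}) → f ≠ 0 →
        ∃ r : R, θ (r • f) ≠ 0 := by
  classical
  let _ : Module B (R →ₗ[A] A) := Module.compHom _ (algebraMap B R)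
  let I := {W : Submodule R (R →ₗ[A] A) // IsSimpleModule R W ∧ FiniteDimensional A W}
  have hm : ∀ W : I, ∃ m : Ideal R, m.IsMaximal ∧ Nonempty (W.1 ≃ₗ[R] R ⧸ m) :=
    fun W => isSimpleModule_iff_quot_maximal.1 W.2.1
  choose m hmax he using hm
  have hann : ∀ W : I, W.1.restrictScalars A = ((m W).restrictScalars A).dualAnnihilator := by
    intro W
    have := W.2.2
    exact simple_mem_eq W.1 (m W) (he W).some
  have hinj : Function.Injective m := by
    intro W W' h
    have : W.1.restrictScalars A = W'.1.restrictScalars A := by rw [hann, hann, h]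
    exact Subtype.ext (Submodule.restrictScalars_injective A R _ this)
  have htors : ∀ W : I, W.1 ≤ Submodule.torsionBySet R (R →ₗ[A] A) (m W) := by
    intro W f hf
    rw [Submodule.mem_torsionBySet_iff]
    rintro ⟨r, hr⟩
    have hf' : f ∈ W.1.restrictScalars A := hf
    rw [hann, Submodule.mem_dualAnnihilator] at hf'
    ext x
    exact hf' (r * x) ((m W).mul_mem_right x hr)
  have hind : iSupIndep (fun W : I => W.1) := by
    apply iSupIndep.mono (t := fun W : I => W.1)
      (s := fun W : I => Submodule.torsionBySet R (R →ₗ[A] A) (m W)) _ htors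
    rw [iSupIndep_iff_supIndep]
    intro s
    apply Submodule.supIndep_torsionBySet_ideal
    intro i _ j _ hij
    exact (hmax i).coprime_of_ne (hmax j) (fun h => hij (hinj h))
  have hex : ∀ W : I, ∃ x ∈ W.1, x ≠ 0 := by
    intro W
    have := W.2.1
    apply Submodule.exists_mem_ne_zero_of_ne_bot
    intro h
    have := IsSimpleModule.nontrivial R W.1
    exact (Submodule.nontrivial_iff_ne_bot.1 this) h
  choose x hx hx0 using hex
  have hli : LinearIndependent B x := by
    rw [linearIndependent_iff']
    intro s g hs i hi
    rw [iSupIndep_iff_finsetSum_eq_zero_imp_eq_zero] at hind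
    have := hind s (fun i => g i • x i) (fun i _ => i.1.smul_mem (algebraMap B R (g i)) (hx i)) hs i hi
    by_contra hg
    exact hx0 i ((smul_eq_zero.1 this).resolve_left hg)
  obtain ⟨θ, hθ⟩ : ∃ θ : (R →ₗ[A] A) →ₗ[B] B, ∀ i, θ (x i) = 1 := by
    obtain ⟨θ, hθ⟩ := LinearMap.exists_extend (p := Submodule.span B (Set.range x))
      ((Module.Basis.span hli).constr B (fun _ => (1 : B)))
    refine ⟨θ, fun i => ?_⟩
    have h1 := LinearMap.congr_fun hθ ((Module.Basis.span hli) i)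
    rw [Module.Basis.constr_basis] at h1
    rw [← h1]
    simp [Module.Basis.span_apply]
  refine ⟨θ.toAddMonoidHom, fun b f => θ.map_smul b f, fun f hf hf0 => ?_⟩
  obtain ⟨W, hWs, hWf, hle⟩ := exists_simple_le A f hf hf0
  let W' : I := ⟨W, hWs, hWf⟩
  obtain ⟨r, hr⟩ := Submodule.mem_span_singleton.1 (hle (hx W'))
  refine ⟨r, ?_⟩
  rw [hr]
  change θ (x W') ≠ 0
  rw [hθ]
  exact one_ne_zero

/-- The `R`-linear map attached to an `A`-linear functional. -/
def coLift {A R V : Type*} [Field A] [CommRing R] [Algebra A R] [AddCommGroup V]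
    [Module A V] [Module R V] [IsScalarTower A R V] (l : V →ₗ[A] A) : V →ₗ[R] (R →ₗ[A] A) where
  toFun v := l ∘ₗ (LinearMap.toSpanSingleton R V v).restrictScalars A
  map_add' v w := by ext x; simp
  map_smul' r v := by
    ext x
    change l (x • r • v) = l ((r * x) • v)
    rw [mul_comm, mul_smul]

theorem coLift_apply {A R V : Type*} [Field A] [CommRing R] [Algebra A R] [AddCommGroup V]
    [Module A V] [Module R V] [IsScalarTower A R V] (l : V →ₗ[A] A) (v : V) (r : R) :
    coLift l v r = l (r • v) := rfl

theorem coLift_finite {A R V : Type*} [Field A] [CommRing R] [Algebra A R] [AddCommGroup V]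
    [Module A V] [Module R V] [IsScalarTower A R V] [FiniteDimensional A V]
    (l : V →ₗ[A] A) (v : V) :
    FiniteDimensional A (Submodule.span R {coLift (R := R) l v}) := by
  have : FiniteDimensional A (LinearMap.range ((coLift (R := R) l).restrictScalars A)) :=
    inferInstance
  have hle : (Submodule.span R {coLift (R := R) l v}).restrictScalars A ≤
      LinearMap.range ((coLift (R := R) l).restrictScalars A) := by
    intro f hf
    obtain ⟨r, rfl⟩ := Submodule.mem_span_singleton.1 hf
    exact ⟨r • v, by simp⟩
  exact Submodule.finiteDimensional_of_le hle

/-- Changing the field of a duality: there is a way, natural in bimodules, to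
identify the `A`-dual and the `B`-dual of `A`-`B`-bimodules finite-dimensional on both sides. -/
theorem exists_dual_change (A B R : Type*) [Field A] [Field B] [CommRing R] [Algebra A R]
    [Algebra B R] :
    ∃ θ : (R →ₗ[A] A) → B, (∀ f g, θ (f + g) = θ f + θ g) ∧
      (∀ (b : B) f, θ (algebraMap B R b • f) = b * θ f) ∧
      ∀ (V : Type v₃) [AddCommGroup V] [Module A V] [Module B V] [Module R V]
        [IsScalarTower A R V] [IsScalarTower B R V] [FiniteDimensional A V]
        [FiniteDimensional B V],
        (∀ l : V →ₗ[A] A, (∀ v, θ (coLift l v) = 0) → l = 0) ∧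
        (∀ g : V →ₗ[B] B, ∃ l : V →ₗ[A] A, ∀ v, g v = θ (coLift l v)) := by
  obtain ⟨θ, h1, h2⟩ := exists_theta A B R
  refine ⟨θ, θ.map_add, h1, ?_⟩
  intro V _ _ _ _ _ _ _ _
  have key : ∀ (l : V →ₗ[A] A) (v : V), (∀ r : R, θ (coLift l (r • v)) = 0) → l v = 0 := by
    intro l v h
    by_contra hl
    have hne : coLift (R := R) l v ≠ 0 := by
      intro h0
      apply hl
      have := LinearMap.congr_fun h0 1
      rwa [coLift_apply, one_smul] at this
    obtain ⟨r, hr⟩ := h2 _ (coLift_finite l v) hne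
    apply hr
    rw [← map_smul]
    exact h r
  have hsm : ∀ (l : V →ₗ[A] A) (r : R), ∃ l' : V →ₗ[A] A, ∀ v,
      coLift (R := R) l' v = coLift l (r • v) := by
    intro l r
    refine ⟨l ∘ₗ (LinearMap.lsmul R V r).restrictScalars A, fun v => ?_⟩
    ext x
    change l (r • x • v) = l (x • r • v)
    rw [smul_comm]
  refine ⟨fun l h => LinearMap.ext fun v => key l v fun r => h _, fun g => ?_⟩
  let M : Submodule B (Module.Dual B V) :=
    { carrier := {g | ∃ l : V →ₗ[A] A, ∀ v, g v = θ (coLift l v)}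
      zero_mem' := ⟨0, fun v => by
        have : coLift (R := R) (0 : V →ₗ[A] A) v = 0 := by ext; rfl
        rw [this, map_zero]; rfl⟩
      add_mem' := by
        rintro g g' ⟨l, hl⟩ ⟨l', hl'⟩
        refine ⟨l + l', fun v => ?_⟩
        have : coLift (R := R) (l + l') v = coLift l v + coLift l' v := by ext; rfl
        rw [this, map_add, LinearMap.add_apply, hl, hl']
      smul_mem' := by
        rintro b g ⟨l, hl⟩
        obtain ⟨l', hl'⟩ := hsm l (algebraMap B R b)
        refine ⟨l', fun v => ?_⟩
        rw [hl', map_smul, h1, LinearMap.smul_apply, hl, smul_eq_mul] }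
  have hM : M.dualCoannihilator = ⊥ := by
    rw [eq_bot_iff]
    intro v hv
    rw [Submodule.mem_dualCoannihilator] at hv
    rw [Submodule.mem_bot]
    rw [← Module.forall_dual_apply_eq_zero_iff A]
    intro l
    apply key
    intro r
    obtain ⟨l', hl'⟩ := hsm l r
    let g : V →ₗ[B] B :=
      { toFun := fun v => θ (coLift l' v)
        map_add' := fun v w => by rw [map_add, map_add]
        map_smul' := fun b v => by
          rw [← algebraMap_smul R b v, map_smul, h1]; rfl }
    have := hv g ⟨l', fun v => rfl⟩
    rw [← hl']
    exact this
  have hT : M = ⊤ := by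
    have := Subspace.dualCoannihilator_dualAnnihilator_eq (W := M)
    rw [← this, hM, Submodule.dualAnnihilator_bot]
  have : g ∈ M := by rw [hT]; trivial
  exact this

end SerreHelpers

section SerreCat

open TensorProduct

attribute [local instance] coModule coModule_tower

/-- A right Serre structure for one linear structure gives a right Serre structure for any
other Hom-finite linear structure on the same preadditive category. -/
theorem rightSerre_change (A B : Type*) [Field A] [Field B] {U : Type u₃} [Category.{v₃} U]
    [Preadditive U] [lA : CategoryTheory.Linear A U] [lB : CategoryTheory.Linear B U]
    [∀ X Y : U, FiniteDimensional A (X ⟶ Y)] [∀ X Y : U, FiniteDimensional B (X ⟶ Y)]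
    (G : U ⥤ U) (s : RightSerreStructure A U G) : Nonempty (RightSerreStructure B U G) := by
  have hc : ∀ X Y : U, SMulCommClass A B (X ⟶ Y) := fun X Y =>
    ⟨fun a b f => by
      have h1 : ∀ g : X ⟶ Y, b • g = g ≫ (b • 𝟙 Y) := fun g => by simp
      rw [h1, h1, CategoryTheory.Linear.smul_comp]⟩
  let _ : Algebra B (A ⊗[ℤ] B) := Algebra.TensorProduct.rightAlgebra
  let _ : ∀ X Y : U, Module (A ⊗[ℤ] B) (X ⟶ Y) := fun X Y => TensorProduct.Algebra.module
  have ht : ∀ (X Y : U) (a : A) (b : B) (f : X ⟶ Y), (a ⊗ₜ[ℤ] b) • f = a • b • f :=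
    fun X Y a b f => rfl
  have tA : ∀ X Y : U, IsScalarTower A (A ⊗[ℤ] B) (X ⟶ Y) := fun X Y =>
    IsScalarTower.of_algebraMap_smul (R := A) (A := A ⊗[ℤ] B) (M := (X ⟶ Y)) fun a f => by
      change (a ⊗ₜ[ℤ] (1 : B)) • f = a • f
      rw [ht, one_smul]
  have tB : ∀ X Y : U, IsScalarTower B (A ⊗[ℤ] B) (X ⟶ Y) := fun X Y =>
    IsScalarTower.of_algebraMap_smul fun b f => by
      rw [Algebra.TensorProduct.right_algebraMap_apply, ht]; simp
  have cpre : ∀ {X Y Z : U} (g : X ⟶ Y) (r : A ⊗[ℤ] B) (f : Y ⟶ Z),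
      g ≫ (r • f) = r • (g ≫ f) := by
    intro X Y Z g r f
    induction r using TensorProduct.induction_on with
    | zero =>
      exact (congrArg (fun t => g ≫ t) (zero_smul (A ⊗[ℤ] B) f)).trans
        (comp_zero.trans (zero_smul (A ⊗[ℤ] B) (g ≫ f)).symm)
    | tmul a b => rw [ht, ht]; simp
    | add x y hx hy => rw [add_smul, add_smul, Preadditive.comp_add, hx, hy]
  have cpost : ∀ {X Y Z : U} (g : Y ⟶ Z) (r : A ⊗[ℤ] B) (f : X ⟶ Y),
      (r • f) ≫ g = r • (f ≫ g) := by
    intro X Y Z g r f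
    induction r using TensorProduct.induction_on with
    | zero =>
      exact (congrArg (fun t => t ≫ g) (zero_smul (A ⊗[ℤ] B) f)).trans
        (zero_comp.trans (zero_smul (A ⊗[ℤ] B) (f ≫ g)).symm)
    | tmul a b => rw [ht, ht]; simp
    | add x y hx hy => rw [add_smul, add_smul, Preadditive.add_comp, hx, hy]
  obtain ⟨θ, hadd, hθ, hV⟩ := exists_dual_change.{v₃} A B (A ⊗[ℤ] B)
  have hmul : ∀ (X Y : U) (b : B) (φ : X ⟶ Y) (v : Y ⟶ G.obj X),
      s.equiv X Y (b • φ) v = s.equiv X Y φ (b • v) := by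
    intro X Y b φ v
    have := s.naturality_right φ (b • 𝟙 Y) v
    simpa using this
  let Φ : ∀ X Y : U, (X ⟶ Y) →ₗ[B] Module.Dual B (Y ⟶ G.obj X) := fun X Y =>
    { toFun := fun φ =>
        { toFun := fun v => θ (coLift (s.equiv X Y φ) v)
          map_add' := fun v w => by rw [map_add, hadd]
          map_smul' := fun b v => by
            rw [← algebraMap_smul (A ⊗[ℤ] B) b v, map_smul, hθ]; rfl }
      map_add' := fun φ ψ => by
        ext v
        change θ (coLift (s.equiv X Y (φ + ψ)) v) =
          θ (coLift (s.equiv X Y φ) v) + θ (coLift (s.equiv X Y ψ) v)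
        rw [← hadd, map_add]
        rfl
      map_smul' := fun b φ => by
        ext v
        change θ (coLift (s.equiv X Y (b • φ)) v) = b * θ (coLift (s.equiv X Y φ) v)
        rw [← hθ]
        congr 1
        refine LinearMap.ext fun r => ?_
        rw [coLift_apply, hmul, coModule_smul_apply, coLift_apply, mul_smul,
          algebraMap_smul] }
  have hbij : ∀ X Y : U, Function.Bijective (Φ X Y) := by
    intro X Y
    obtain ⟨h1, h2⟩ := hV (Y ⟶ G.obj X)
    constructor
    · rw [injective_iff_map_eq_zero]
      intro φ hφ
      apply (s.equiv X Y).injective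
      rw [map_zero]
      exact h1 _ fun v => LinearMap.congr_fun hφ v
    · intro g
      obtain ⟨l, hl⟩ := h2 g
      refine ⟨(s.equiv X Y).symm l, ?_⟩
      ext v
      change θ (coLift (s.equiv X Y ((s.equiv X Y).symm l)) v) = g v
      rw [LinearEquiv.apply_symm_apply, hl]
  refine ⟨⟨fun X Y => LinearEquiv.ofBijective (Φ X Y) (hbij X Y), ?_, ?_⟩⟩
  · intro X X' Y f φ u
    change θ (coLift (s.equiv X' Y (f ≫ φ)) u) = θ (coLift (s.equiv X Y φ) (u ≫ G.map f))
    congr 1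
    refine LinearMap.ext fun r => ?_
    rw [coLift_apply, coLift_apply, s.naturality_left, cpost]
  · intro X Y Y' φ g u
    change θ (coLift (s.equiv X Y' (φ ≫ g)) u) = θ (coLift (s.equiv X Y φ) (g ≫ u))
    congr 1
    refine LinearMap.ext fun r => ?_
    rw [coLift_apply, coLift_apply, s.naturality_right, cpre]

/-- The additive bijection on morphisms given by a fully faithful additive functor. -/
def ffAddEquiv {T : Type u₂} {U : Type u₃} [Category.{v₂} T] [Category.{v₃} U]
    [Preadditive T] [Preadditive U] (L : U ⥤ T) [L.Additive] (hL : L.FullyFaithful) (X Y : U) :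
    (X ⟶ Y) ≃+ (L.obj X ⟶ L.obj Y) :=
  { hL.homEquiv with map_add' := fun f g => L.map_add }

/-- Transport of a linear structure along a fully faithful additive functor. -/
abbrev linearTransport (k : Type u₄) [Field k] {T : Type u₂} {U : Type u₃} [Category.{v₂} T]
    [Category.{v₃} U] [Preadditive T] [Preadditive U] [CategoryTheory.Linear k T]
    (L : U ⥤ T) [L.Additive] (hL : L.FullyFaithful) : CategoryTheory.Linear k U where
  homModule X Y := (ffAddEquiv L hL X Y).module k
  smul_comp X Y Z r f g := by
    apply hL.map_injective
    change L.map (hL.preimage (r • L.map f) ≫ g) = L.map (hL.preimage (r • L.map (f ≫ g)))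
    simp
  comp_smul X Y Z f r g := by
    apply hL.map_injective
    change L.map (f ≫ hL.preimage (r • L.map g)) = L.map (hL.preimage (r • L.map (f ≫ g)))
    simp

theorem finite_of_linear (k : Type u₄) [Field k] {T : Type u₂} {U : Type u₃}
    [Category.{v₂} T] [Category.{v₃} U] [Preadditive T] [Preadditive U]
    [CategoryTheory.Linear k T] [CategoryTheory.Linear k U]
    [∀ X Y : T, FiniteDimensional k (X ⟶ Y)]
    (L : U ⥤ T) [L.Additive] [L.Linear k] (hL : L.FullyFaithful) (X Y : U) :
    FiniteDimensional k (X ⟶ Y) :=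
  Module.Finite.of_injective (L.mapLinearMap k : (X ⟶ Y) →ₗ[k] _)
    (fun _ _ h => hL.map_injective h)

theorem rightSerre_of_linear (k : Type u₄) [Field k] {T : Type u₂} {U : Type u₃}
    [Category.{v₂} T] [Category.{v₃} U] [Preadditive T] [Preadditive U]
    [CategoryTheory.Linear k T] [CategoryTheory.Linear k U]
    (L : U ⥤ T) [L.Additive] [L.Linear k] (hL : L.FullyFaithful) (J : T ⥤ U) (adj : L ⊣ J)
    (F : T ⥤ T) (s : RightSerreStructure k T F) :
    Nonempty (RightSerreStructure k U (L ⋙ F ⋙ J)) := by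
  let e₁ : ∀ X Y : U, (X ⟶ Y) ≃ₗ[k] (L.obj X ⟶ L.obj Y) := fun X Y =>
    { hL.homEquiv with
      map_add' := fun f g => L.map_add
      map_smul' := fun r f => L.map_smul r f }
  let e₂ : ∀ (Y : U) (Z : T), (Y ⟶ J.obj Z) ≃ₗ[k] (L.obj Y ⟶ Z) := fun Y Z =>
    { (adj.homEquiv Y Z).symm with
      map_add' := fun f g => by
        change (adj.homEquiv Y Z).symm (f + g) =
          (adj.homEquiv Y Z).symm f + (adj.homEquiv Y Z).symm g
        simp [Adjunction.homEquiv_counit]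
      map_smul' := fun r f => by
        change (adj.homEquiv Y Z).symm (r • f) = r • (adj.homEquiv Y Z).symm f
        simp [Adjunction.homEquiv_counit] }
  refine ⟨⟨fun X Y => (e₁ X Y).trans ((s.equiv _ _).trans
    (e₂ Y (F.obj (L.obj X))).dualMap), ?_, ?_⟩⟩
  · intro X X' Y f φ u
    change s.equiv _ _ (L.map (f ≫ φ)) ((adj.homEquiv _ _).symm u) =
      s.equiv _ _ (L.map φ) ((adj.homEquiv _ _).symm (u ≫ J.map (F.map (L.map f))))
    rw [L.map_comp, s.naturality_left, adj.homEquiv_naturality_right_symm]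
  · intro X Y Y' φ g u
    change s.equiv _ _ (L.map (φ ≫ g)) ((adj.homEquiv _ _).symm u) =
      s.equiv _ _ (L.map φ) ((adj.homEquiv _ _).symm (g ≫ u))
    rw [L.map_comp, s.naturality_right, adj.homEquiv_naturality_left_symm]

theorem rightSerre_transport (k : Type u₄) [Field k] {T : Type u₂} {U : Type u₃}
    [Category.{v₂} T] [Category.{v₃} U] [Preadditive T] [Preadditive U]
    [CategoryTheory.Linear k T] [lU : CategoryTheory.Linear k U]
    [∀ X Y : T, FiniteDimensional k (X ⟶ Y)] [hU : ∀ X Y : U, FiniteDimensional k (X ⟶ Y)]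
    (L : U ⥤ T) [L.Additive] (hL : L.FullyFaithful) (J : T ⥤ U) (adj : L ⊣ J)
    (F : T ⥤ T) (s : RightSerreStructure k T F) :
    Nonempty (RightSerreStructure k U (L ⋙ F ⋙ J)) := by
  let l' : CategoryTheory.Linear k U := linearTransport k L hL
  have hlin : @Functor.Linear k _ U T _ _ _ _ l' _ L :=
    @Functor.Linear.mk k _ U T _ _ _ _ l' _ L (fun {X Y} f r => by
      change L.map (hL.preimage (r • L.map f)) = r • L.map f
      simp)
  obtain ⟨s'⟩ := @rightSerre_of_linear k _ T U _ _ _ _ _ l' L _ hlin hL J adj F s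
  exact @rightSerre_change k k _ _ U _ _ l' lU
    (fun X Y => @finite_of_linear k _ T U _ _ _ _ _ l' _ L _ hlin hL X Y) hU _ s'

end SerreCat

/-- Given a recollement `(S, T, U)` and a Serre functor `F` on `T`, the composite
functor `j^* ∘ F ∘ j_! : U ⥤ U` is a right Serre functor on `U`. -/
theorem recollement_right_serre_structure_on_U
    {k : Type u₄} [Field k]
    {S : Type u₁} {T : Type u₂} {U : Type u₃}
    [Category.{v₁} S] [Category.{v₂} T] [Category.{v₃} U]
    [HasZeroObject S] [HasZeroObject T] [HasZeroObject U]
    [Preadditive S] [Preadditive T] [Preadditive U]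
    [CategoryTheory.Linear k S] [CategoryTheory.Linear k T] [CategoryTheory.Linear k U]
    [HasShift S ℤ] [HasShift T ℤ] [HasShift U ℤ]
    [∀ n : ℤ, (shiftFunctor S n).Additive] [∀ n : ℤ, (shiftFunctor T n).Additive]
    [∀ n : ℤ, (shiftFunctor U n).Additive]
    [Pretriangulated S] [Pretriangulated T] [Pretriangulated U]
    [EssentiallySmall.{v₁} S] [EssentiallySmall.{v₂} T] [EssentiallySmall.{v₃} U]
    [∀ X Y : S, FiniteDimensional k (X ⟶ Y)]
    [∀ X Y : T, FiniteDimensional k (X ⟶ Y)]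
    [∀ X Y : U, FiniteDimensional k (X ⟶ Y)]
    [IsIdempotentComplete T]
    (R : Recollement S T U)
    (SF : SerreFunctor k T) :
    Nonempty (RightSerreStructure k U (R.jLo ⋙ SF.F ⋙ R.jUp)) := by
  let _ := R.commShift_jLo
  have := R.isTriangulated_jLo
  exact rightSerre_transport k R.jLo R.fullyFaithful_jLo R.jUp R.adj₃ SF.F SF.rightSerre
end

section
/- Given a recollement (S, T, U), a Serre functor F on T with quasi-inverse F', the composite functor j^* ∘ F' ∘ j_* : U → U is a left Serre functor on U. -/
/-!
Setting: `k` a field; `S`, `T`, `U` skeletally small `k`-linear triangulated categories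
with finite-dimensional Hom-spaces, `T` with split idempotents.  A recollement
`(S, T, U)` as in [BBD], and (right/left) Serre functors in the sense of
Reiten–Van den Bergh.
-/

open CategoryTheory CategoryTheory.Limits CategoryTheory.Pretriangulated

universe v₁ v₂ v₃ u₁ u₂ u₃ u₄

set_option linter.style.haveILetI false

theorem simple_eq_torsion {k Z M : Type*} [Field k] [CommRing Z] [Algebra k Z] [AddCommGroup M]
    [Module Z M] [Module k M] [IsScalarTower k Z M] (t : M →ₗ[k] k)
    (ht : ∀ x, (∀ z : Z, t (z • x) = 0) → x = 0)
    (n : M) [FiniteDimensional k (Submodule.span Z {n})]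
    (x : M) (hx : ∀ z : Z, z • n = 0 → z • x = 0) : x ∈ Submodule.span Z {n} := by
  let I : Ideal Z := LinearMap.ker (LinearMap.toSpanSingleton Z M n)
  have hI : ∀ z : Z, z ∈ I ↔ z • n = 0 := fun z => by simp [I]
  let N : Submodule k M := (Submodule.span Z {n}).restrictScalars k
  let P : Submodule k M := (Submodule.torsionBySet Z M I).restrictScalars k
  have hP : ∀ x, x ∈ P ↔ ∀ z ∈ I, z • x = 0 := fun x => by
    simp [P, Submodule.mem_torsionBySet_iff]
  have : FiniteDimensional k N := ‹FiniteDimensional k (Submodule.span Z {n})›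
  have hNP : N ≤ P := by
    intro y hy
    rw [hP]
    obtain ⟨w, rfl⟩ := Submodule.mem_span_singleton.1 hy
    intro z hz
    rw [smul_comm, (hI z).1 hz, smul_zero]
  let π : Z →ₗ[k] N := LinearMap.codRestrict N
    ((LinearMap.toSpanSingleton Z M n).restrictScalars k)
    (fun z => Submodule.mem_span_singleton.2 ⟨z, rfl⟩)
  have hπ : LinearMap.range π = ⊤ := by
    rw [LinearMap.range_eq_top]
    rintro ⟨y, hy⟩
    obtain ⟨w, rfl⟩ := Submodule.mem_span_singleton.1 hy
    exact ⟨w, rfl⟩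
  obtain ⟨σ, hσ⟩ := π.exists_rightInverse_of_surjective hπ
  have hσ' : ∀ z : Z, (σ (π z)) • n = z • n := fun z =>
    congrArg Subtype.val (LinearMap.congr_fun hσ (π z))
  let Ψ : P →ₗ[k] Module.Dual k N :=
    { toFun := fun x =>
        { toFun := fun w => t (σ w • (x : M))
          map_add' := fun a b => by rw [map_add, add_smul, map_add]
          map_smul' := fun a b => by
            rw [σ.map_smul, smul_assoc, t.map_smul]; rfl }
      map_add' := fun x y => by
        ext w
        change t (σ w • ((x : M) + y)) = t (σ w • (x : M)) + t (σ w • (y : M))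
        rw [smul_add, map_add]
      map_smul' := fun a x => by
        ext w
        change t (σ w • (a • (x : M))) = a • t (σ w • (x : M))
        rw [← map_smul, smul_algebra_smul_comm] }
  have hΨ : Function.Injective Ψ := by
    rw [← LinearMap.ker_eq_bot, LinearMap.ker_eq_bot']
    intro y hy
    ext
    refine ht _ fun z => ?_
    have h1 : t (σ (π z) • (y : M)) = 0 := LinearMap.congr_fun hy (π z)
    have h2 : (z - σ (π z)) • (y : M) = 0 :=
      (hP y).1 y.2 _ ((hI _).2 (by rw [sub_smul, hσ', sub_self]))
    rw [sub_smul, sub_eq_zero] at h2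
    rw [h2, h1]
  have : FiniteDimensional k P := Module.Finite.of_injective Ψ hΨ
  have h1 : Module.finrank k P ≤ Module.finrank k N := by
    rw [← Subspace.dual_finrank_eq (K := k) (V := N)]
    exact LinearMap.finrank_le_finrank_of_injective hΨ
  have := Submodule.eq_of_le_of_finrank_le hNP h1
  have hxP : x ∈ P := (hP x).2 fun z hz => hx z ((hI z).1 hz)
  rw [← this] at hxP
  exact hxP

theorem exists_other_trace {k₁ k₂ Z M : Type*} [Field k₁] [Field k₂] [CommRing Z] [Algebra k₁ Z]
    [Algebra k₂ Z] [AddCommGroup M] [Module Z M] [Module k₁ M] [Module k₂ M]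
    [IsScalarTower k₁ Z M] [IsScalarTower k₂ Z M] (t : M →ₗ[k₁] k₁)
    (ht : ∀ x, (∀ z : Z, t (z • x) = 0) → x = 0)
    (hfin : ∀ n : M, FiniteDimensional k₁ (Submodule.span Z {n})) :
    ∃ s : M →ₗ[k₂] k₂, ∀ x, (∀ z : Z, s (z • x) = 0) → x = 0 := by
  classical
  have huniq : ∀ N N' : Submodule Z M, IsSimpleModule Z N → Nonempty (N' ≃ₗ[Z] N) →
      N' ≤ N := by
    rintro N N' hN ⟨e⟩ y hy
    by_cases h0 : y = 0
    · simp [h0]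
    let n : M := e ⟨y, hy⟩
    have := hfin n
    have hle : Submodule.span Z {n} ≤ N := by
      rw [Submodule.span_singleton_le_iff_mem]; exact (e ⟨y, hy⟩).2
    refine hle (simple_eq_torsion t ht n y fun z hz => ?_)
    have : e (z • ⟨y, hy⟩) = 0 := by
      rw [map_smul]; ext; exact hz
    have := e.map_eq_zero_iff.1 this
    exact congrArg Subtype.val this
  let ι := {N : Submodule Z M // IsSimpleModule Z N}
  have hcomp : ∀ N : ι, N.1 ∈ isotypicComponents Z M := fun N => by
    refine ⟨N.1, N.2, ?_⟩
    exact le_antisymm (N.1.le_isotypicComponent) (sSup_le fun m hm => huniq _ _ N.2 hm)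
  have hind : iSupIndep (fun N : ι => N.1) := by
    have h := (sSupIndep_iff _).1 (sSupIndep_isotypicComponents Z M)
    exact h.comp (f := fun N : ι => (⟨N.1, hcomp N⟩ : isotypicComponents Z M))
      (fun a b hab => Subtype.ext (congrArg (fun c => c.1) hab))
  have hind2 : iSupIndep (fun N : ι => N.1.restrictScalars k₂) := by
    intro N
    have := hind N
    rw [Submodule.disjoint_def] at this ⊢
    intro x hx hx'
    refine this x hx ?_
    have hle : (⨆ (j : ι) (_ : j ≠ N), j.1.restrictScalars k₂) ≤
        (⨆ (j : ι) (_ : j ≠ N), j.1).restrictScalars k₂ :=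
      iSup₂_le fun j hj => by
        intro y hy
        exact (le_iSup₂_of_le (f := fun (j : ι) (_ : j ≠ N) => j.1) j hj le_rfl) hy
    exact hle hx'
  have hex : ∀ N : ι, ∃ v : M, v ∈ N.1 ∧ v ≠ 0 := fun N => by
    have := N.2
    exact (Submodule.ne_bot_iff _).1 (fun h => by
      have := IsSimpleModule.nontrivial Z N.1
      rw [h] at this
      exact not_subsingleton _ (inferInstance : Subsingleton (⊥ : Submodule Z M)))
  choose v hv hv0 using hex
  have hli : LinearIndependent k₂ v := iSupIndep.linearIndependent _ hind2 hv hv0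
  obtain ⟨s, hs⟩ : ∃ s : M →ₗ[k₂] k₂, ∀ N, s (v N) = 1 := by
    obtain ⟨s, hs⟩ := LinearMap.exists_extend
      ((Finsupp.linearCombination k₂ (fun _ : ι => (1 : k₂))).comp hli.repr)
    refine ⟨s, fun N => ?_⟩
    have hm : v N ∈ Submodule.span k₂ (Set.range v) := Submodule.subset_span ⟨N, rfl⟩
    have h := LinearMap.congr_fun hs ⟨v N, hm⟩
    have hr : hli.repr ⟨v N, hm⟩ = Finsupp.single N 1 := hli.repr_eq_single N _ rfl
    simpa [hr] using h
  refine ⟨s, fun x hx => ?_⟩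
  by_contra hx0
  have := hfin x
  have : IsArtinian k₁ (Submodule.span Z {x}) := inferInstance
  have : IsArtinian Z (Submodule.span Z {x}) := isArtinian_of_tower k₁ this
  have hat : IsAtomic (Submodule Z (Submodule.span Z {x})) := inferInstance
  obtain h | ⟨A, hA, -⟩ := hat.eq_bot_or_exists_atom_le ⊤
  · have : (⟨x, Submodule.mem_span_singleton_self x⟩ : Submodule.span Z {x}) ∈
      (⊥ : Submodule Z (Submodule.span Z {x})) := h ▸ Submodule.mem_top
    exact hx0 (congrArg Subtype.val ((Submodule.mem_bot Z).1 this))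
  have hAs : IsSimpleModule Z A := isSimpleModule_iff_isAtom.2 hA
  let B : Submodule Z M := A.map (Submodule.span Z {x}).subtype
  have hB : IsSimpleModule Z B :=
    IsSimpleModule.congr (Submodule.equivMapOfInjective _ (Submodule.subtype_injective _) A).symm
  have h1 := hs ⟨B, hB⟩
  have h2 : v ⟨B, hB⟩ ∈ Submodule.span Z {x} := by
    obtain ⟨y, -, hy⟩ := hv ⟨B, hB⟩
    rw [← hy]; exact y.2
  obtain ⟨z, hz⟩ := Submodule.mem_span_singleton.1 h2
  rw [← hz, hx] at h1
  exact zero_ne_one h1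

theorem exists_other_trace_degenerate {k₁ k₂ Z M : Type*} [Field k₁] [Field k₂] [CommRing Z]
    [Algebra k₁ Z]
    [Algebra k₂ Z] [AddCommGroup M] [Module Z M] [Module k₁ M] [Module k₂ M]
    [IsScalarTower k₁ Z M] [IsScalarTower k₂ Z M] (t : M →ₗ[k₁] k₁)
    (hfin : ∀ n : M, ∃ W : Submodule k₁ M, FiniteDimensional k₁ W ∧ ∀ z : Z, z • n ∈ W) :
    ∃ s : M →ₗ[k₂] k₂, (∀ x, (∀ z : Z, s (z • x) = 0) → t x = 0) ∧
      (∀ x, (∀ z : Z, t (z • x) = 0) → s x = 0) := by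
  let K : Submodule Z M :=
    { carrier := {x | ∀ z : Z, t (z • x) = 0}
      add_mem' := fun {a b} ha hb z => by rw [smul_add, map_add, ha z, hb z, add_zero]
      zero_mem' := fun z => by rw [smul_zero, map_zero]
      smul_mem' := fun c x hx z => by rw [smul_smul]; exact hx _ }
  have hKt : ∀ x ∈ K, t x = 0 := fun x hx => by simpa using hx 1
  let t' : (M ⧸ K) →ₗ[k₁] k₁ :=
    { toFun := Quotient.lift t (fun a b hab => by
        have h : a - b ∈ K := (Submodule.quotientRel_def K).1 hab
        have := hKt _ h
        rwa [map_sub, sub_eq_zero] at this)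
      map_add' := fun a b => by
        obtain ⟨a, rfl⟩ := Submodule.Quotient.mk_surjective K a
        obtain ⟨b, rfl⟩ := Submodule.Quotient.mk_surjective K b
        exact t.map_add a b
      map_smul' := fun c a => by
        obtain ⟨a, rfl⟩ := Submodule.Quotient.mk_surjective K a
        exact t.map_smul c a }
  have ht' : ∀ x : M, t' (Submodule.Quotient.mk x) = t x := fun x => rfl
  let q : M →ₗ[Z] M ⧸ K := K.mkQ
  obtain ⟨s, hs⟩ := exists_other_trace (k₁ := k₁) (k₂ := k₂) (Z := Z) (M := M ⧸ K) t'
    (fun x hx => by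
      obtain ⟨x, rfl⟩ := Submodule.Quotient.mk_surjective K x
      rw [Submodule.Quotient.mk_eq_zero]
      intro z
      exact hx z)
    (fun n => by
      obtain ⟨n, rfl⟩ := Submodule.Quotient.mk_surjective K n
      obtain ⟨W, hW, hn⟩ := hfin n
      let W' : Submodule k₁ (M ⧸ K) := W.map (q.restrictScalars k₁)
      have hW' : FiniteDimensional k₁ W' := inferInstance
      have hle : (Submodule.span Z {(Submodule.Quotient.mk n : M ⧸ K)}).restrictScalars k₁
          ≤ W' := by
        intro y hy
        obtain ⟨z, rfl⟩ := Submodule.mem_span_singleton.1 hy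
        exact ⟨z • n, hn z, rfl⟩
      exact Submodule.finiteDimensional_of_le hle)
  refine ⟨s.comp (q.restrictScalars k₂), fun x hx => ?_, fun x hx => ?_⟩
  · have h0 : (Submodule.Quotient.mk x : M ⧸ K) = 0 := hs _ fun z => hx z
    exact hKt x ((Submodule.Quotient.mk_eq_zero K).1 h0)
  · have h0 : q x = 0 := (Submodule.Quotient.mk_eq_zero K).2 hx
    change s (q x) = 0
    rw [h0, map_zero]

theorem finite_compHom {k Z A B : Type*} [Field k] [CommRing Z] (φ : k →+* Z) [AddCommGroup A]
    [Module Z A] [AddCommGroup B] [Module k B] [FiniteDimensional k B] (f : A →+ B)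
    (hf : Function.Injective f) (h : ∀ a x, f (φ a • x) = a • f x) :
    @Module.Finite k A _ _ (Module.compHom A φ) := by
  letI := Module.compHom A φ
  let g : A →ₗ[k] B := { f with map_smul' := fun a x => h a x }
  exact Module.Finite.of_injective g hf

theorem exists_other_trace_family {k₁ k₂ Z ι : Type*} [Field k₁] [Field k₂] [CommRing Z]
    (φ₁ : k₁ →+* Z) (φ₂ : k₂ →+* Z) (H : ι → Type*) [∀ i, AddCommGroup (H i)]
    [∀ i, Module Z (H i)] (t : ∀ i, H i →+ k₁)
    (ht : ∀ i a x, t i (φ₁ a • x) = a * t i x)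
    (hfin : ∀ i, @Module.Finite k₁ (H i) _ _ (Module.compHom (H i) φ₁)) :
    ∃ s : ∀ i, H i →+ k₂, (∀ i a x, s i (φ₂ a • x) = a * s i x) ∧
      (∀ i x, (∀ z : Z, s i (z • x) = 0) → t i x = 0) ∧
      (∀ i j x y, (∀ z : Z, t i (z • x) = t j (z • y)) → s i x = s j y) := by
  classical
  letI : Algebra k₁ Z := φ₁.toAlgebra
  letI : Algebra k₂ Z := φ₂.toAlgebra
  letI : ∀ i, Module k₁ (H i) := fun i => Module.compHom (H i) φ₁
  letI : ∀ i, Module k₂ (H i) := fun i => Module.compHom (H i) φ₂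
  haveI : ∀ i, IsScalarTower k₁ Z (H i) := fun i =>
    ⟨fun a z x => by rw [Algebra.smul_def, mul_smul]; rfl⟩
  haveI : ∀ i, IsScalarTower k₂ Z (H i) := fun i =>
    ⟨fun a z x => by rw [Algebra.smul_def, mul_smul]; rfl⟩
  haveI : ∀ i, Module.Finite k₁ (H i) := hfin
  let t₀ : ∀ i, H i →ₗ[k₁] k₁ := fun i => { t i with map_smul' := fun a x => ht i a x }
  let T : (Π₀ i, H i) →ₗ[k₁] k₁ := DFinsupp.lsum ℕ t₀
  have hT : ∀ i x, T (DFinsupp.single i x) = t i x := fun i x => by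
    simp [T, t₀]
  haveI : IsScalarTower k₁ Z (Π₀ i, H i) := ⟨fun a z x => by ext i; simp⟩
  haveI : IsScalarTower k₂ Z (Π₀ i, H i) := ⟨fun a z x => by ext i; simp⟩
  obtain ⟨s, hs1, hs2⟩ := exists_other_trace_degenerate (k₁ := k₁) (k₂ := k₂) (Z := Z)
    (M := Π₀ i, H i) T (fun n => by
      induction n using DFinsupp.induction with
      | h0 => exact ⟨⊥, inferInstance, fun z => by simp⟩
      | ha i b f _ _ hf =>
        obtain ⟨W, hW, h⟩ := hf
        refine ⟨LinearMap.range (DFinsupp.lsingle (R := k₁) (M := H) i) ⊔ W, inferInstance,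
          fun z => ?_⟩
        rw [smul_add]
        refine Submodule.add_mem_sup ⟨z • b, ?_⟩ (h z)
        simp [DFinsupp.single_smul])
  refine ⟨fun i => s.toAddMonoidHom.comp (DFinsupp.singleAddHom H i), fun i a x => ?_,
    fun i x hx => ?_, fun i j x y hxy => ?_⟩
  · have h : DFinsupp.single i (φ₂ a • x) = a • (DFinsupp.single i x : Π₀ i, H i) :=
      DFinsupp.single_smul (γ := k₂) a x
    change s (DFinsupp.single i (φ₂ a • x)) = a * s (DFinsupp.single i x)
    rw [h, map_smul]; rfl
  · rw [← hT]
    refine hs1 _ fun z => ?_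
    rw [← DFinsupp.single_smul]
    exact hx z
  · change s (DFinsupp.single i x) = s (DFinsupp.single j y)
    rw [← sub_eq_zero, ← map_sub]
    refine hs2 _ fun z => ?_
    rw [smul_sub, ← DFinsupp.single_smul, ← DFinsupp.single_smul, map_sub, hT, hT, hxy, sub_self]

section

open scoped IsMulCommutative

/-- The action of the center of a preadditive category on its morphisms. -/
@[reducible] def centerModule {C : Type u₁} [Category.{v₁} C] [Preadditive C] (X Y : C) :
    Module (CatCenter C) (X ⟶ Y) :=
  CategoryTheory.Linear.homModuleOfRingMorphism (RingHom.id (CatCenter C)) X Y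

theorem leftSerre_of_trace {k : Type u₄} [Field k] {U : Type u₁} [Category.{v₁} U]
    [Preadditive U] [CategoryTheory.Linear k U]
    [∀ X Y : U, FiniteDimensional k (X ⟶ Y)] (G : U ⥤ U)
    (φ : k →+* CatCenter U) (t : ∀ Y : U, (G.obj Y ⟶ Y) →+ k)
    (ht : ∀ Y a (f : G.obj Y ⟶ Y), t Y ((φ a).app _ ≫ f) = a * t Y f)
    (hfin : ∀ Y : U, letI := centerModule (G.obj Y) Y
      @Module.Finite k (G.obj Y ⟶ Y) _ _ (Module.compHom (G.obj Y ⟶ Y) φ))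
    (hnat : ∀ {Y Y' : U} (g : Y ⟶ Y') (u : G.obj Y' ⟶ Y), t Y' (u ≫ g) = t Y (G.map g ≫ u))
    (hl : ∀ {X Y : U} (f : X ⟶ Y), (∀ u : G.obj Y ⟶ X, t Y (u ≫ f) = 0) → f = 0)
    (hr : ∀ {X Y : U} (u : G.obj Y ⟶ X), (∀ f : X ⟶ Y, t Y (u ≫ f) = 0) → u = 0) :
    Nonempty (LeftSerreStructure k U G) := by
  let φ₂ : k →+* CatCenter U := CategoryTheory.Linear.toCatCenter k U
  letI : ∀ Y : U, Module (CatCenter U) (G.obj Y ⟶ Y) := fun Y => centerModule (G.obj Y) Y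
  obtain ⟨s, hs, hst, hsn⟩ := exists_other_trace_family (Z := CatCenter U) φ φ₂
    (fun Y : U => (G.obj Y ⟶ Y)) t ht hfin
  have hs' : ∀ Y a (f : G.obj Y ⟶ Y), s Y (a • f) = a * s Y f := fun Y a f => by
    rw [← hs]
    congr 1
    change a • f = (a • 𝟙 (G.obj Y)) ≫ f
    simp
  have hst' : ∀ Y (f : G.obj Y ⟶ Y), (∀ z : CatCenter U, s Y (z.app _ ≫ f) = 0) → t Y f = 0 :=
    hst
  have hsn' : ∀ {Y Y' : U} (g : Y ⟶ Y') (u : G.obj Y' ⟶ Y), s Y' (u ≫ g) = s Y (G.map g ≫ u) := by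
    intro Y Y' g u
    refine hsn Y' Y _ _ fun z => ?_
    change t Y' (z.app _ ≫ u ≫ g) = t Y (z.app _ ≫ G.map g ≫ u)
    rw [← CatCenter.naturality_assoc, ← Category.assoc, hnat]
    congr 1
    rw [← Category.assoc, CatCenter.naturality]
  let B : ∀ X Y : U, (X ⟶ Y) →ₗ[k] Module.Dual k (G.obj Y ⟶ X) := fun X Y =>
    { toFun := fun f =>
        { toFun := fun u => s Y (u ≫ f)
          map_add' := fun u v => by rw [Preadditive.add_comp, map_add]
          map_smul' := fun a u => by rw [Linear.smul_comp, hs']; rfl }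
      map_add' := fun f g => by
        ext u
        change s Y (u ≫ (f + g)) = s Y (u ≫ f) + s Y (u ≫ g)
        rw [Preadditive.comp_add, map_add]
      map_smul' := fun a f => by
        ext u
        change s Y (u ≫ (a • f)) = a * s Y (u ≫ f)
        rw [Linear.comp_smul, hs'] }
  have hB : ∀ X Y f u, B X Y f u = s Y (u ≫ f) := fun _ _ _ _ => rfl
  have hBl : ∀ X Y, Function.Injective (B X Y) := fun X Y => by
    rw [← LinearMap.ker_eq_bot, LinearMap.ker_eq_bot']
    intro f hf
    refine hl f fun u => hst' _ _ fun z => ?_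
    rw [← Category.assoc]
    exact LinearMap.congr_fun hf _
  have hBr : ∀ X Y, Function.Injective (B X Y).flip := fun X Y => by
    rw [← LinearMap.ker_eq_bot, LinearMap.ker_eq_bot']
    intro u hu
    refine hr u fun f => hst' _ _ fun z => ?_
    rw [← CatCenter.naturality, Category.assoc]
    exact LinearMap.congr_fun hu (f ≫ z.app Y)
  have hdim : ∀ X Y : U, Module.finrank k (X ⟶ Y) =
      Module.finrank k (Module.Dual k (G.obj Y ⟶ X)) := fun X Y => by
    refine le_antisymm (LinearMap.finrank_le_finrank_of_injective (hBl X Y)) ?_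
    rw [Subspace.dual_finrank_eq]
    refine (LinearMap.finrank_le_finrank_of_injective (hBr X Y)).trans ?_
    rw [Subspace.dual_finrank_eq]
  refine ⟨{ equiv := fun X Y => LinearEquiv.ofInjectiveOfFinrankEq (B X Y) (hBl X Y) (hdim X Y)
            naturality_left := fun {X X' Y} f φ u => ?_
            naturality_right := fun {X Y Y'} φ g u => ?_ }⟩
  · change s Y (u ≫ f ≫ φ) = s Y ((u ≫ f) ≫ φ)
    rw [Category.assoc]
  · change s Y' (u ≫ φ ≫ g) = s Y ((G.map g ≫ u) ≫ φ)
    rw [← Category.assoc, hsn', Category.assoc]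

end

/-- A fully faithful additive functor to a `k`-linear category gives an action of `k`
by the center of its source. -/
def pulledBackCenter (k : Type u₄) [Field k] {T : Type u₂} {U : Type u₃} [Category.{v₂} T]
    [Category.{v₃} U] [Preadditive T] [Preadditive U] [CategoryTheory.Linear k T]
    (j : U ⥤ T) [j.Additive] (hj : j.FullyFaithful) : k →+* CatCenter U where
  toFun a :=
    { app := fun X => hj.preimage (a • 𝟙 (j.obj X))
      naturality := fun X Y f => hj.map_injective (by simp) }
  map_one' := by
    ext X
    change hj.preimage ((1 : k) • 𝟙 (j.obj X)) = 𝟙 X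
    exact hj.map_injective (by simp)
  map_mul' a b := by
    ext X
    rw [CatCenter.mul_app]
    change hj.preimage ((a * b) • 𝟙 (j.obj X)) =
      hj.preimage (a • 𝟙 (j.obj X)) ≫ hj.preimage (b • 𝟙 (j.obj X))
    exact hj.map_injective (by simp [smul_smul, mul_comm])
  map_zero' := by
    ext X
    change hj.preimage ((0 : k) • 𝟙 (j.obj X)) = 0
    exact hj.map_injective (by simp)
  map_add' a b := by
    ext X
    change hj.preimage ((a + b) • 𝟙 (j.obj X)) =
      hj.preimage (a • 𝟙 (j.obj X)) + hj.preimage (b • 𝟙 (j.obj X))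
    exact hj.map_injective (by simp [add_smul, j.map_add])

theorem map_pulledBackCenter (k : Type u₄) [Field k] {T : Type u₂} {U : Type u₃} [Category.{v₂} T]
    [Category.{v₃} U] [Preadditive T] [Preadditive U] [CategoryTheory.Linear k T]
    (j : U ⥤ T) [j.Additive] (hj : j.FullyFaithful) (a : k) (X : U) :
    j.map ((pulledBackCenter k j hj a).app X) = a • 𝟙 (j.obj X) :=
  hj.map_preimage _

open scoped IsMulCommutative in
theorem finite_pulledBackCenter (k : Type u₄) [Field k] {T : Type u₂} {U : Type u₃}
    [Category.{v₂} T]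
    [Category.{v₃} U] [Preadditive T] [Preadditive U] [CategoryTheory.Linear k T]
    [∀ X Y : T, FiniteDimensional k (X ⟶ Y)]
    (j : U ⥤ T) [j.Additive] (hj : j.FullyFaithful) (X Y : U) :
    letI := centerModule X Y
    @Module.Finite k (X ⟶ Y) _ _ (Module.compHom (X ⟶ Y) (pulledBackCenter k j hj)) := by
  letI := centerModule X Y
  refine finite_compHom (Z := CatCenter U) (B := j.obj X ⟶ j.obj Y)
    (pulledBackCenter k j hj) j.mapAddHom (fun f g h => hj.map_injective h) (fun a x => ?_)
  change j.map ((pulledBackCenter k j hj a).app X ≫ x) = a • j.map x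
  rw [j.map_comp, map_pulledBackCenter, Linear.smul_comp, Category.id_comp]

/-- Given a recollement `(S, T, U)` and a Serre functor `F` on `T` with quasi-inverse `F'`,
the composite functor `j^* ∘ F' ∘ j_* : U ⥤ U` is a left Serre functor on `U`. -/
theorem recollement_left_serre_structure_on_U
    {k : Type u₄} [Field k]
    {S : Type u₁} {T : Type u₂} {U : Type u₃}
    [Category.{v₁} S] [Category.{v₂} T] [Category.{v₃} U]
    [HasZeroObject S] [HasZeroObject T] [HasZeroObject U]
    [Preadditive S] [Preadditive T] [Preadditive U]
    [CategoryTheory.Linear k S] [CategoryTheory.Linear k T] [CategoryTheory.Linear k U]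
    [HasShift S ℤ] [HasShift T ℤ] [HasShift U ℤ]
    [∀ n : ℤ, (shiftFunctor S n).Additive] [∀ n : ℤ, (shiftFunctor T n).Additive]
    [∀ n : ℤ, (shiftFunctor U n).Additive]
    [Pretriangulated S] [Pretriangulated T] [Pretriangulated U]
    [EssentiallySmall.{v₁} S] [EssentiallySmall.{v₂} T] [EssentiallySmall.{v₃} U]
    [∀ X Y : S, FiniteDimensional k (X ⟶ Y)]
    [∀ X Y : T, FiniteDimensional k (X ⟶ Y)]
    [∀ X Y : U, FiniteDimensional k (X ⟶ Y)]
    [IsIdempotentComplete T]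
    (R : Recollement S T U)
    (SF : SerreFunctor k T) (F' : T ⥤ T)
    (η : SF.F ⋙ F' ≅ 𝟭 T) (ε : F' ⋙ SF.F ≅ 𝟭 T) :
    Nonempty (LeftSerreStructure k U (R.jSt ⋙ F' ⋙ R.jUp)) := by
  have : R.jSt.Additive := by
    letI := R.commShift_jSt
    have := R.isTriangulated_jSt
    infer_instance
  let φ := pulledBackCenter k R.jSt R.fullyFaithful_jSt
  have hφ : ∀ a {X Y : U} (f : X ⟶ Y),
      R.jSt.map ((φ a).app X ≫ f) = a • R.jSt.map f := fun a X Y f => by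
    rw [R.jSt.map_comp, map_pulledBackCenter, Linear.smul_comp, Category.id_comp]
  let τ : ∀ B : T, (F'.obj B ⟶ B) → k := fun B u =>
    SF.rightSerre.equiv (F'.obj B) B u (ε.inv.app B)
  have hτadd : ∀ B u v, τ B (u + v) = τ B u + τ B v := fun B u v => by simp [τ]
  have hτsmul : ∀ B (a : k) u, τ B (a • u) = a * τ B u := fun B a u => by simp [τ]
  have hτ : ∀ {A B : T} (u : F'.obj B ⟶ A) (f : A ⟶ B),
      τ B (u ≫ f) = SF.rightSerre.equiv (F'.obj B) A u (f ≫ ε.inv.app B) := fun u f =>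
    SF.rightSerre.naturality_right u f _
  have hτnat : ∀ {B B' : T} (g : B ⟶ B') (u : F'.obj B' ⟶ B),
      τ B' (u ≫ g) = τ B (F'.map g ≫ u) := fun {B B'} g u => by
    rw [hτ]
    change _ = SF.rightSerre.equiv (F'.obj B) B (F'.map g ≫ u) (ε.inv.app B)
    rw [SF.rightSerre.naturality_left]
    congr 1
    exact ε.inv.naturality g
  have hτr : ∀ {A B : T} (u : F'.obj B ⟶ A), (∀ f : A ⟶ B, τ B (u ≫ f) = 0) → u = 0 := by
    intro A B u h
    apply (SF.rightSerre.equiv (F'.obj B) A).map_eq_zero_iff.1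
    ext w
    have := h (w ≫ ε.hom.app B)
    rw [hτ, Category.assoc, Iso.hom_inv_id_app] at this
    simpa using this
  have hτl : ∀ {A B : T} (f : A ⟶ B), (∀ u : F'.obj B ⟶ A, τ B (u ≫ f) = 0) → f = 0 := by
    intro A B f h
    have h0 : f ≫ ε.inv.app B = 0 := by
      rw [← Module.forall_dual_apply_eq_zero_iff k]
      intro ψ
      obtain ⟨u, rfl⟩ := (SF.rightSerre.equiv (F'.obj B) A).surjective ψ
      exact (hτ u f).symm.trans (h u)
    have h1 : (f ≫ ε.inv.app B) ≫ ε.hom.app B = 0 := by rw [h0, zero_comp]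
    rw [Category.assoc, Iso.inv_hom_id_app] at h1
    simpa using h1
  let α : ∀ {A : T} {X : U}, (R.jUp.obj A ⟶ X) → (A ⟶ R.jSt.obj X) := fun {A X} =>
    R.adj₄.homEquiv A X
  have hα : ∀ {A : T} {X : U} (f : R.jUp.obj A ⟶ X),
      α f = R.adj₄.unit.app A ≫ R.jSt.map f := fun f => R.adj₄.homEquiv_unit _ _ f
  have hαcomp : ∀ {A : T} {X Y : U} (u : R.jUp.obj A ⟶ X) (f : X ⟶ Y),
      α (u ≫ f) = α u ≫ R.jSt.map f := fun u f => R.adj₄.homEquiv_naturality_right u f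
  have hαadd : ∀ {A : T} {X : U} (f g : R.jUp.obj A ⟶ X), α (f + g) = α f + α g :=
    fun f g => by rw [hα, hα, hα, R.jSt.map_add, Preadditive.comp_add]
  have hαφ : ∀ {A : T} {X : U} (a : k) (f : R.jUp.obj A ⟶ X),
      α ((φ a).app _ ≫ f) = a • α f := fun a f => by
    rw [hα, hα, hφ, Linear.comp_smul]
  have hα0 : ∀ {A : T} {X : U} (f : R.jUp.obj A ⟶ X), α f = 0 → f = 0 := fun {A X} f h => by
    apply (R.adj₄.homEquiv A X).injective
    change α f = α 0
    rw [h, hα, R.jSt.map_zero, comp_zero]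
  refine leftSerre_of_trace (R.jSt ⋙ F' ⋙ R.jUp) φ
    (fun Y => AddMonoidHom.mk' (fun f => τ (R.jSt.obj Y) (α f))
      (fun f g => by rw [← hτadd, ← hαadd])) ?_ ?_ ?_ ?_ ?_
  · intro Y a f
    change τ _ (α _) = a * τ _ (α f)
    rw [← hτsmul]
    exact congrArg (τ _) (hαφ a f)
  · intro Y
    exact finite_pulledBackCenter k R.jSt R.fullyFaithful_jSt _ _
  · intro Y Y' g u
    change τ _ (α _) = τ _ (α _)
    rw [hαcomp, hτnat]
    congr 1
    exact (R.adj₄.homEquiv_naturality_left _ _).symm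
  · intro X Y f h
    apply R.fullyFaithful_jSt.map_injective
    rw [R.jSt.map_zero]
    refine hτl _ fun u => ?_
    obtain ⟨u, rfl⟩ := (R.adj₄.homEquiv _ _).surjective u
    have := h u
    change τ _ (α (u ≫ f)) = 0 at this
    rw [hαcomp] at this
    exact this
  · intro X Y u h
    refine hα0 _ (hτr _ fun f => ?_)
    obtain ⟨f, rfl⟩ := R.fullyFaithful_jSt.map_surjective f
    have := h f
    change τ _ (α (u ≫ f)) = 0 at this
    rw [hαcomp] at this
    exact this
end

section
/- Given a recollement (S, T, U) and a Serre functor F on T with quasi-inverse F', the category U has a Serre functor, namely j^* ∘ F ∘ j_!, and j^* ∘ F' ∘ j_* is a quasi-inverse of it. -/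
/-!
Setting: `k` a field; `S`, `T`, `U` skeletally small `k`-linear triangulated categories
with finite-dimensional Hom-spaces, `T` with split idempotents.  A recollement
`(S, T, U)` as in [BBD], and (right/left) Serre functors in the sense of
Reiten–Van den Bergh.
-/

open CategoryTheory CategoryTheory.Limits CategoryTheory.Pretriangulated

universe v₁ v₂ v₃ u₁ u₂ u₃ u₄

namespace RecSerre

/-- The coinduced module `Hom_k(Z, k)`. -/
def Coind (k Z : Type*) [Field k] [CommRing Z] [Algebra k Z] := Z →ₗ[k] k

section coind
variable (k Z : Type*) [Field k] [CommRing Z] [Algebra k Z]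

noncomputable instance : AddCommGroup (Coind k Z) := inferInstanceAs (AddCommGroup (Z →ₗ[k] k))
noncomputable instance : Module k (Coind k Z) := inferInstanceAs (Module k (Z →ₗ[k] k))

variable {k Z}
/-- Evaluation. -/
def Coind.ev (f : Coind k Z) : Z →ₗ[k] k := f

theorem Coind.ext {f g : Coind k Z} (h : ∀ z, f.ev z = g.ev z) : f = g :=
  LinearMap.ext (f := f.ev) (g := g.ev) h

noncomputable instance : Module Z (Coind k Z) where
  smul z f := (f.ev ∘ₗ LinearMap.mulLeft k z : Z →ₗ[k] k)
  one_smul f := Coind.ext fun w => congrArg f.ev (one_mul w)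
  mul_smul x y f := Coind.ext fun w =>
    congrArg f.ev (show x * y * w = y * (x * w) by ring)
  smul_zero x := rfl
  smul_add x f g := rfl
  add_smul x y f := Coind.ext fun w => by
    change f.ev ((x + y) * w) = f.ev (x * w) + f.ev (y * w)
    rw [add_mul, map_add]
  zero_smul f := Coind.ext fun w => by
    change f.ev (0 * w) = 0
    simp

@[simp] theorem Coind.smul_ev (z w : Z) (f : Coind k Z) : (z • f).ev w = f.ev (z * w) := rfl
@[simp] theorem Coind.ksmul_ev (c : k) (w : Z) (f : Coind k Z) : (c • f).ev w = c * f.ev w := rfl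
@[simp] theorem Coind.zero_ev (w : Z) : (0 : Coind k Z).ev w = 0 := rfl

instance : IsScalarTower k Z (Coind k Z) where
  smul_assoc c z f := Coind.ext fun w => by simp

theorem Coind.exists_smul_eq (m : Ideal Z) [m.IsMaximal] (f g : Coind k Z)
    (hf : ∀ z ∈ m, z • f = 0) (hg : ∀ z ∈ m, z • g = 0) (hg0 : g ≠ 0)
    (W : Submodule k (Coind k Z)) [Module.Finite k W] (hW : ∀ z : Z, z • g ∈ W) :
    ∃ z : Z, z • g = f := by
  have hfm : ∀ h : Coind k Z, (∀ z ∈ m, z • h = 0) → ∀ z ∈ m, h.ev z = 0 := by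
    intro h hh z hz
    have := congrArg (fun q => Coind.ev q 1) (hh z hz)
    simpa using this
  have ext1 : ∀ h : Coind k Z, (∀ z ∈ m, z • h = 0) →
      ∃ h' : (Z ⧸ m) →ₗ[k] k, ∀ z, h' (Ideal.Quotient.mk m z) = h.ev z := by
    intro h hh
    exact ⟨(m.restrictScalars k).liftQ h.ev (fun z hz => hfm h hh z hz), fun z => rfl⟩
  obtain ⟨f', hf'⟩ := ext1 f hf
  obtain ⟨g', hg'⟩ := ext1 g hg
  let L : (Z ⧸ m) →ₗ[k] Module.Dual k (Z ⧸ m) := (LinearMap.mul k (Z ⧸ m)).compr₂ g'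
  have hL : ∀ x y, L x y = g' (x * y) := fun x y => rfl
  have hLinj : Function.Injective L := by
    rw [injective_iff_map_eq_zero]
    intro x hx
    by_contra hx0
    apply hg0
    refine Coind.ext fun z => ?_
    rw [← hg', Coind.zero_ev]
    obtain ⟨y, hy⟩ := Ideal.Quotient.exists_inv hx0
    have := hL x (y * Ideal.Quotient.mk m z)
    rw [hx, ← mul_assoc, hy, one_mul] at this
    exact this.symm
  let Q : (Z ⧸ m) →ₗ[k] W :=
    (((m : Submodule Z Z).liftQ (LinearMap.toSpanSingleton Z (Coind k Z) g)
      (fun z hz => by simpa using hg z hz)).restrictScalars k).codRestrict W (by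
        intro x
        obtain ⟨z, rfl⟩ := Ideal.Quotient.mk_surjective x
        exact hW z)
  have hQ : ∀ z, (Q (Ideal.Quotient.mk m z) : Coind k Z) = z • g := fun z => rfl
  have hQinj : Function.Injective Q := by
    rw [injective_iff_map_eq_zero]
    intro x hx
    obtain ⟨z, rfl⟩ := Ideal.Quotient.mk_surjective x
    refine (injective_iff_map_eq_zero L).1 hLinj _ (LinearMap.ext fun y => ?_)
    obtain ⟨w, rfl⟩ := Ideal.Quotient.mk_surjective y
    have h1 := hQ z
    rw [hx] at h1
    have h2 := congrArg (fun q => Coind.ev q w) h1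
    rw [hL, ← map_mul, hg']
    exact h2.symm
  have : Module.Finite k (Z ⧸ m) := Module.Finite.of_injective Q hQinj
  have hsurj : Function.Surjective L :=
    (LinearMap.injective_iff_surjective_of_finrank_eq_finrank
      (Subspace.dual_finrank_eq).symm).1 hLinj
  obtain ⟨x, hx⟩ := hsurj f'
  obtain ⟨z, rfl⟩ := Ideal.Quotient.mk_surjective x
  refine ⟨z, Coind.ext fun w => ?_⟩
  rw [← hf', ← hx, hL, ← map_mul, hg', Coind.smul_ev]

theorem indep_torsion (M : Type*) [AddCommGroup M] [Module Z M] :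
    iSupIndep (fun m : MaximalSpectrum Z => Submodule.torsionBySet Z M (m.asIdeal : Set Z)) := by
  rw [iSupIndep_iff_supIndep]
  refine fun _ => Submodule.supIndep_torsionBySet_ideal fun i _ j _ hij => ?_
  exact Ideal.IsMaximal.coprime_of_ne i.isMaximal j.isMaximal
    (fun h => hij (MaximalSpectrum.ext h))

theorem Coind.exists_functional {k' : Type*} [Field k'] (b : k' →+* Z) :
    ∃ l : Coind k Z →+ k', (∀ c f, l (b c • f) = c * l f) ∧
      ∀ (f : Coind k Z), f ≠ 0 → ∀ (W : Submodule k (Coind k Z)), Module.Finite k W →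
        (∀ z : Z, z • f ∈ W) → ∃ z : Z, l (z • f) ≠ 0 := by
  classical
  let : Algebra k' Z := b.toAlgebra
  let : Module k' (Coind k Z) := Module.compHom _ b
  have : IsScalarTower k' Z (Coind k Z) := ⟨fun c z f => mul_smul (b c) z f⟩
  let S := fun m : MaximalSpectrum Z => Submodule.torsionBySet Z (Coind k Z) (m.asIdeal : Set Z)
  have hlm : ∀ m, ∃ lm : S m →ₗ[k'] k', (∃ x : S m, x ≠ 0) → ∃ x, lm x ≠ 0 := by
    intro m
    by_cases h : ∃ x : S m, x ≠ 0
    · obtain ⟨x, hx⟩ := h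
      have h := mt (Module.forall_dual_apply_eq_zero_iff k' x).1 hx
      push Not at h
      obtain ⟨lm, h⟩ := h
      exact ⟨lm, fun _ => ⟨x, h⟩⟩
    · exact ⟨0, fun h' => absurd h' h⟩
  choose lm hlm using hlm
  let Φ : (Π₀ m, S m) →ₗ[k'] Coind k Z :=
    (DFinsupp.lsum ℕ (M := fun m => S m) fun m => (S m).subtype).restrictScalars k'
  have hΦ : LinearMap.ker Φ = ⊥ := LinearMap.ker_eq_bot.2 
    (indep_torsion (Z := Z) (Coind k Z)).dfinsupp_lsum_injective
  obtain ⟨r, hr⟩ := Φ.exists_leftInverse_of_injective hΦ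
  let l : Coind k Z →ₗ[k'] k' := (DFinsupp.lsum ℕ (M := fun m => S m) lm) ∘ₗ r
  have hl : ∀ m (x : S m), l x = lm m x := by
    intro m x
    have h1 : (x : Coind k Z) = Φ (DFinsupp.single m x) := by simp [Φ]
    have h2 : r (Φ (DFinsupp.single m x)) = DFinsupp.single m x := LinearMap.congr_fun hr _
    simp only [l, LinearMap.comp_apply]
    rw [h1, h2]
    simp
  refine ⟨l.toAddMonoidHom, fun c f => l.map_smul c f, ?_⟩
  intro f hf W _ hW
  let N : Submodule Z (Coind k Z) := Submodule.span Z {f}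
  have hNW : N.restrictScalars k ≤ W := by
    intro x hx
    obtain ⟨z, rfl⟩ := Submodule.mem_span_singleton.1 hx
    exact hW z
  have : Module.Finite k N := 
    Module.Finite.of_injective (Submodule.inclusion hNW) (Submodule.inclusion_injective hNW)
  have : IsArtinian Z N := isArtinian_of_tower k inferInstance
  have : Nontrivial N := ⟨⟨f, Submodule.mem_span_singleton_self f⟩, 0, fun h => hf (congrArg Subtype.val h)⟩
  obtain ⟨A, hA, -⟩ := (eq_bot_or_exists_atom_le (⊤ : Submodule Z N)).resolve_left top_ne_bot
  have : IsSimpleModule Z A := isSimpleModule_iff_isAtom.2 hA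
  have : Nontrivial A := IsSimpleModule.nontrivial Z A
  obtain ⟨g, hg⟩ := exists_ne (0 : A)
  have hmax := IsSimpleModule.ker_toSpanSingleton_isMaximal Z hg
  set m : MaximalSpectrum Z := ⟨_, hmax⟩ with hm
  let g' : Coind k Z := ((g : N) : Coind k Z)
  have hg' : g' ≠ 0 := fun h => hg (Subtype.ext (Subtype.ext h))
  obtain ⟨w, hw⟩ := Submodule.mem_span_singleton.1 (g : N).2
  have hgS : ∀ z ∈ m.asIdeal, z • g' = 0 := by
    intro z hz
    have : z • g = 0 := by simpa [hm] using hz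
    exact congrArg (fun q : A => ((q : N) : Coind k Z)) this
  obtain ⟨x, hx⟩ := hlm m ⟨⟨g', by
    rw [Submodule.mem_torsionBySet_iff]; exact fun a => hgS a a.2⟩, fun h => hg' (congrArg Subtype.val h)⟩
  have := m.isMaximal
  obtain ⟨z, hz⟩ := Coind.exists_smul_eq m.asIdeal (x : Coind k Z) g'
    (fun z hz => (Submodule.mem_torsionBySet_iff _ _).1 x.2 ⟨z, hz⟩) hgS hg' W (by
      intro z
      change z • ((g : N) : Coind k Z) ∈ W
      rw [← hw, smul_smul]; exact hW _)
  refine ⟨z * w, ?_⟩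
  rw [mul_smul, hw]
  change l (z • g') ≠ 0
  rw [hz, hl]
  exact hx

end coind
end RecSerre

namespace RecSerre

set_option linter.unusedSectionVars false

section cat
variable {k : Type u₄} [Field k] {T : Type u₂} {U : Type u₃}
    [Category.{v₂} T] [Category.{v₃} U] [Preadditive T] [Preadditive U]
    [CategoryTheory.Linear k T] [CategoryTheory.Linear k U]

/-- The center of a preadditive category, as a commutative ring (a copy of `CatCenter`
without the other algebraic instances). -/
def Cen (U : Type u₃) [Category.{v₃} U] := CatCenter U

/-- Components of an element of the center. -/
def Cen.app (z : Cen U) (X : U) : X ⟶ X := CatCenter.app z X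

instance instRingCen : Ring (Cen U) := inferInstanceAs (Ring (CatCenter U))

instance : CommRing (Cen U) :=
  { instRingCen with
    mul_comm := fun a b => CatCenter.ext _ _ fun X =>
      (CatCenter.mul_app a b X).trans (CatCenter.mul_app' b a X).symm }

theorem Cen.ext {z w : Cen U} (h : ∀ X, z.app X = w.app X) : z = w := CatCenter.ext _ _ h
theorem Cen.mul_app (z w : Cen U) (X : U) : (z * w).app X = z.app X ≫ w.app X :=
  CatCenter.mul_app z w X
theorem Cen.mul_app' (z w : Cen U) (X : U) : (z * w).app X = w.app X ≫ z.app X := rfl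
theorem Cen.add_app (z w : Cen U) (X : U) : (z + w).app X = z.app X + w.app X := rfl
theorem Cen.zero_app (X : U) : (0 : Cen U).app X = 0 := rfl
theorem Cen.one_app (X : U) : (1 : Cen U).app X = 𝟙 X := rfl
theorem Cen.naturality (z : Cen U) {X Y : U} (f : X ⟶ Y) : f ≫ z.app Y = z.app X ≫ f :=
  CatCenter.naturality z f

/-- Constructor for elements of the center. -/
def Cen.mk (t : ∀ X : U, X ⟶ X) (h : ∀ (X Y : U) (f : X ⟶ Y), f ≫ t Y = t X ≫ f) : Cen U :=
  ({ app := t, naturality := h } : 𝟭 U ⟶ 𝟭 U)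

theorem Cen.mk_app (t : ∀ X : U, X ⟶ X) (h : ∀ (X Y : U) (f : X ⟶ Y), f ≫ t Y = t X ≫ f)
    (X : U) : (Cen.mk t h).app X = t X := rfl

/-- The ring morphism `k → Z(U)` induced by a fully faithful additive functor to a
`k`-linear category. -/
noncomputable def inducedCenter (L : U ⥤ T) (hL : L.FullyFaithful) [L.Additive] :
    k →+* Cen U where
  toFun c := Cen.mk (fun X => hL.preimage (c • 𝟙 (L.obj X)))
    (fun _ _ f => hL.map_injective (by simp))
  map_one' := Cen.ext fun X => hL.map_injective (by simp [Cen.mk_app, Cen.one_app])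
  map_mul' c d := Cen.ext fun X => hL.map_injective (by
    simp [Cen.mk_app, Cen.mul_app', smul_smul])
  map_zero' := Cen.ext fun X => hL.map_injective (by simp [Cen.mk_app, Cen.zero_app])
  map_add' c d := Cen.ext fun X => hL.map_injective (by
    simp [Cen.mk_app, Cen.add_app, add_smul])

theorem map_inducedCenter (L : U ⥤ T) (hL : L.FullyFaithful) [L.Additive] (c : k) (X : U) :
    L.map ((inducedCenter L hL c).app X) = c • 𝟙 (L.obj X) := by
  simp [inducedCenter, Cen.mk_app]

theorem serre_of_adj [∀ X Y : T, FiniteDimensional k (X ⟶ Y)]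
    [∀ X Y : U, FiniteDimensional k (X ⟶ Y)]
    (L : U ⥤ T) (R : T ⥤ U) (adj : L ⊣ R) (hL : L.FullyFaithful) [L.Additive] [R.Additive]
    (F : T ⥤ T) (sF : RightSerreStructure k T F) :
    Nonempty (RightSerreStructure k U (L ⋙ F ⋙ R)) := by
  let a : k →+* Cen U := inducedCenter L hL
  let b : k →+* Cen U := inducedCenter (𝟭 U) (Functor.FullyFaithful.id U)
  have ha : ∀ c X, L.map ((a c).app X) = c • 𝟙 (L.obj X) := map_inducedCenter L hL
  have hb : ∀ c X, (b c).app X = c • 𝟙 X := map_inducedCenter (𝟭 U) (Functor.FullyFaithful.id U)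
  let _ : Algebra k (Cen U) := a.toAlgebra
  obtain ⟨l, hl, hl'⟩ := Coind.exists_functional (k := k) (Z := Cen U) b
  -- the adjoint transpose
  let tr : ∀ {X Y : U}, (Y ⟶ (L ⋙ F ⋙ R).obj X) ≃+ (L.obj Y ⟶ F.obj (L.obj X)) := fun {X Y} =>
    (adj.homAddEquiv Y (F.obj (L.obj X))).symm
  have tr_left : ∀ {X Y Y' : U} (g : Y ⟶ Y') (u : Y' ⟶ (L ⋙ F ⋙ R).obj X),
      tr (g ≫ u) = L.map g ≫ tr u := fun g u => adj.homEquiv_naturality_left_symm g u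
  have tr_right : ∀ {X X' Y : U} (f : X' ⟶ X) (u : Y ⟶ (L ⋙ F ⋙ R).obj X'),
      tr (u ≫ (L ⋙ F ⋙ R).map f) = tr u ≫ F.map (L.map f) :=
    fun f u => adj.homEquiv_naturality_right_symm u (F.map (L.map f))
  -- the coinduced pairing, extended to `T`
  let B : ∀ {X Y : U}, (L.obj X ⟶ L.obj Y) → (Y ⟶ (L ⋙ F ⋙ R).obj X) →
      Coind k (Cen U) := fun {X Y} ψ u =>
    ({ toFun := fun z => sF.equiv _ _ (L.map (z.app X) ≫ ψ) (tr u)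
       map_add' := fun z w => by
        simp [Cen.add_app, Preadditive.add_comp]
       map_smul' := fun c z => by
        have : (c • z).app X = (a c).app X ≫ z.app X := Cen.mul_app _ _ X
        rw [this, L.map_comp, ha]
        simp } : Cen U →ₗ[k] k)
  have Bev : ∀ {X Y : U} (ψ : L.obj X ⟶ L.obj Y) (u : Y ⟶ (L ⋙ F ⋙ R).obj X) (z : Cen U),
      (B ψ u).ev z = sF.equiv _ _ (L.map (z.app X) ≫ ψ) (tr u) := fun _ _ _ => rfl
  have B_add_left : ∀ {X Y : U} (ψ ψ' : L.obj X ⟶ L.obj Y) (u : Y ⟶ (L ⋙ F ⋙ R).obj X),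
      B (ψ + ψ') u = B ψ u + B ψ' u := fun ψ ψ' u => Coind.ext fun z => by
    change _ = (B ψ u).ev z + (B ψ' u).ev z
    simp [Bev]
  have B_add_right : ∀ {X Y : U} (ψ : L.obj X ⟶ L.obj Y) (u u' : Y ⟶ (L ⋙ F ⋙ R).obj X),
      B ψ (u + u') = B ψ u + B ψ u' := fun ψ u u' => Coind.ext fun z => by
    change _ = (B ψ u).ev z + (B ψ u').ev z
    rw [Bev, Bev, Bev, map_add, map_add]
  have B_smul_left : ∀ {X Y : U} (c : k) (ψ : L.obj X ⟶ L.obj Y) (u : Y ⟶ (L ⋙ F ⋙ R).obj X),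
      B (c • ψ) u = c • B ψ u := fun c ψ u => Coind.ext fun z => by
    simp [Bev]
  have B_center_left : ∀ {X Y : U} (w : Cen U) (φ : X ⟶ Y) (u : Y ⟶ (L ⋙ F ⋙ R).obj X),
      B (L.map (w.app X ≫ φ)) u = w • B (L.map φ) u := fun w φ u => Coind.ext fun z => by
    rw [Coind.smul_ev, Bev, Bev, Cen.mul_app']
    simp
  have B_nat_right : ∀ {X Y Y' : U} (φ : X ⟶ Y) (g : Y ⟶ Y') (u : Y' ⟶ (L ⋙ F ⋙ R).obj X),
      B (L.map (φ ≫ g)) u = B (L.map φ) (g ≫ u) := fun φ g u => Coind.ext fun z => by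
    rw [Bev, Bev, L.map_comp, ← Category.assoc, sF.naturality_right, tr_left]
  have B_nat_left : ∀ {X X' Y : U} (f : X' ⟶ X) (φ : X ⟶ Y) (u : Y ⟶ (L ⋙ F ⋙ R).obj X'),
      B (L.map (f ≫ φ)) u = B (L.map φ) (u ≫ (L ⋙ F ⋙ R).map f) :=
    fun {X X' Y} f φ u => Coind.ext fun z => by
    have hz : z.app X' ≫ f ≫ φ = f ≫ z.app X ≫ φ := by
      rw [← Category.assoc, ← Category.assoc, ← Cen.naturality]
    rw [Bev, Bev, ← L.map_comp, ← L.map_comp, hz, L.map_comp, sF.naturality_left, tr_right]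
  have B_center_right : ∀ {X Y : U} (w : Cen U) (φ : X ⟶ Y) (u : Y ⟶ (L ⋙ F ⋙ R).obj X),
      B (L.map φ) (w.app Y ≫ u) = w • B (L.map φ) u := fun w φ u => by
    rw [← B_nat_right, Cen.naturality, B_center_left]
  have hfin : ∀ {X Y : U} (φ : X ⟶ Y) (u : Y ⟶ (L ⋙ F ⋙ R).obj X), B (L.map φ) u ≠ 0 →
      ∃ w : Cen U, l (w • B (L.map φ) u) ≠ 0 := by
    intro X Y φ u h
    let A : (L.obj X ⟶ L.obj Y) →ₗ[k] Coind k (Cen U) :=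
      { toFun := fun ψ => B ψ u
        map_add' := fun ψ ψ' => B_add_left ψ ψ' u
        map_smul' := fun c ψ => B_smul_left c ψ u }
    exact hl' _ h (LinearMap.range A) inferInstance
      (fun z => ⟨L.map (z.app X ≫ φ), B_center_left z φ u⟩)
  let P : ∀ X Y : U, (X ⟶ Y) →ₗ[k] (Y ⟶ (L ⋙ F ⋙ R).obj X) →ₗ[k] k := fun X Y =>
    LinearMap.mk₂ k (fun φ u => l (B (L.map φ) u))
      (fun φ φ' u => by rw [L.map_add, B_add_left, map_add])
      (fun c φ u => by
        have : c • φ = (b c).app X ≫ φ := by rw [hb]; simp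
        rw [this, B_center_left, hl, smul_eq_mul])
      (fun φ u u' => by rw [B_add_right, map_add])
      (fun c φ u => by
        have : c • u = (b c).app Y ≫ u := by rw [hb]; simp
        rw [this, B_center_right, hl, smul_eq_mul])
  have hP : ∀ {X Y : U} (φ : X ⟶ Y) u, P X Y φ u = l (B (L.map φ) u) := fun _ _ => rfl
  have Bne : ∀ {X Y : U} (φ : X ⟶ Y) (u : Y ⟶ (L ⋙ F ⋙ R).obj X),
      sF.equiv _ _ (L.map φ) (tr u) ≠ 0 → B (L.map φ) u ≠ 0 := by
    intro X Y φ u h h0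
    apply h
    have := congrArg (fun q => Coind.ev q (1 : Cen U)) h0
    simp only [Bev, Coind.zero_ev] at this
    have h1 : (1 : Cen U).app X = 𝟙 X := Cen.one_app X
    rwa [h1, L.map_id, Category.id_comp] at this
  have inj1 : ∀ X Y, Function.Injective (P X Y) := by
    intro X Y
    rw [injective_iff_map_eq_zero]
    intro φ h
    by_contra hφ
    have h1 : sF.equiv _ _ (L.map φ) ≠ 0 := by
      intro h0
      apply hφ
      apply hL.map_injective
      rw [L.map_zero]
      exact (LinearEquiv.map_eq_zero_iff _).1 h0
    obtain ⟨v, hv⟩ : ∃ v, sF.equiv _ _ (L.map φ) v ≠ 0 := by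
      by_contra! h2
      exact h1 (LinearMap.ext h2)
    obtain ⟨u, rfl⟩ := (tr (X := X) (Y := Y)).surjective v
    obtain ⟨w, hw⟩ := hfin φ u (Bne φ u hv)
    rw [← B_center_right, ← hP, h] at hw
    exact hw rfl
  have inj2 : ∀ X Y, Function.Injective (P X Y).flip := by
    intro X Y
    rw [injective_iff_map_eq_zero]
    intro u h
    by_contra hu
    have h1 : tr u ≠ 0 := fun h0 => hu ((AddEquiv.map_eq_zero_iff _).1 h0)
    obtain ⟨d, hd⟩ : ∃ d : Module.Dual k _, d (tr u) ≠ 0 := by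
      by_contra! h2
      exact h1 ((Module.forall_dual_apply_eq_zero_iff k _).1 h2)
    obtain ⟨ψ, rfl⟩ := (sF.equiv _ _).surjective d
    obtain ⟨φ, rfl⟩ := hL.map_surjective ψ
    obtain ⟨w, hw⟩ := hfin φ u (Bne φ u hd)
    rw [← B_center_left, ← hP, ← LinearMap.flip_apply, h] at hw
    exact hw rfl
  have perf : ∀ X Y, (P X Y).IsPerfPair := fun X Y =>
    LinearMap.IsPerfPair.of_injective (inj1 X Y) (inj2 X Y)
  exact ⟨{
    equiv := fun X Y => LinearEquiv.ofBijective (P X Y) (perf X Y).bijective_left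
    naturality_left := fun f φ u => by
      change l _ = l _
      rw [B_nat_left]
    naturality_right := fun φ g u => by
      change l _ = l _
      rw [B_nat_right] }⟩

end cat
end RecSerre

/-- Given a recollement `(S, T, U)` and a Serre functor `F` on `T` with quasi-inverse `F'`,
`U` has a Serre functor, namely `j^* ∘ F ∘ j_!`, with quasi-inverse `j^* ∘ F' ∘ j_*`. -/
theorem recollement_serre_functor_on_U
    {k : Type u₄} [Field k]
    {S : Type u₁} {T : Type u₂} {U : Type u₃}
    [Category.{v₁} S] [Category.{v₂} T] [Category.{v₃} U]
    [HasZeroObject S] [HasZeroObject T] [HasZeroObject U]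
    [Preadditive S] [Preadditive T] [Preadditive U]
    [CategoryTheory.Linear k S] [CategoryTheory.Linear k T] [CategoryTheory.Linear k U]
    [HasShift S ℤ] [HasShift T ℤ] [HasShift U ℤ]
    [∀ n : ℤ, (shiftFunctor S n).Additive] [∀ n : ℤ, (shiftFunctor T n).Additive]
    [∀ n : ℤ, (shiftFunctor U n).Additive]
    [Pretriangulated S] [Pretriangulated T] [Pretriangulated U]
    [EssentiallySmall.{v₁} S] [EssentiallySmall.{v₂} T] [EssentiallySmall.{v₃} U]
    [∀ X Y : S, FiniteDimensional k (X ⟶ Y)]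
    [∀ X Y : T, FiniteDimensional k (X ⟶ Y)]
    [∀ X Y : U, FiniteDimensional k (X ⟶ Y)]
    [IsIdempotentComplete T]
    (R : Recollement S T U)
    (SF : SerreFunctor k T) (F' : T ⥤ T)
    (η : SF.F ⋙ F' ≅ 𝟭 T) (ε : F' ⋙ SF.F ≅ 𝟭 T) :
    Nonempty (RightSerreStructure k U (R.jLo ⋙ SF.F ⋙ R.jUp)) ∧
      (R.jLo ⋙ SF.F ⋙ R.jUp).EssSurj ∧
      Nonempty ((R.jLo ⋙ SF.F ⋙ R.jUp) ⋙ (R.jSt ⋙ F' ⋙ R.jUp) ≅ 𝟭 U) ∧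
      Nonempty ((R.jSt ⋙ F' ⋙ R.jUp) ⋙ (R.jLo ⋙ SF.F ⋙ R.jUp) ≅ 𝟭 U) := by
  let _ := R.commShift_jLo
  let _ := R.commShift_jUp
  have hLo : R.jLo.Additive := by
    have := R.isTriangulated_jLo
    infer_instance
  have hUp : R.jUp.Additive := by
    have := R.isTriangulated_jUp
    infer_instance
  have serre_zero : ∀ {X Y : T}, (∀ f : X ⟶ Y, f = 0) → ∀ g : Y ⟶ SF.F.obj X, g = 0 := by
    intro X Y h g
    refine (Module.forall_dual_apply_eq_zero_iff k g).1 fun d => ?_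
    obtain ⟨f, rfl⟩ := (SF.rightSerre.equiv X Y).surjective d
    rw [h f]; simp
  have serre_zero' : ∀ {X Y : T}, (∀ g : Y ⟶ SF.F.obj X, g = 0) → ∀ f : X ⟶ Y, f = 0 := by
    intro X Y h f
    apply (SF.rightSerre.equiv X Y).injective
    ext g
    rw [h g]; simp
  have hunit : ∀ V : U, IsIso (R.adj₄.unit.app (SF.F.obj (R.jLo.obj V))) := by
    intro V
    obtain ⟨δ, hδ⟩ := R.triangle_a (SF.F.obj (R.jLo.obj V))
    refine (Triangle.isZero₁_iff_isIso₂ _ hδ).1 ((Triangle.isZero₁_iff _ hδ).2 ⟨?_, ?_⟩)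
    · refine serre_zero (fun f => ?_) _
      apply (R.adj₃.homEquiv _ _).injective
      exact (R.zero_comp _).eq_of_tgt _ _
    · have h0 : IsZero (R.iSh.obj (SF.F.obj (R.jLo.obj V))) := by
        rw [IsZero.iff_id_eq_zero]
        apply (R.adj₂.homEquiv _ _).symm.injective
        refine (serre_zero (fun f => ?_) _).trans (serre_zero (fun f => ?_) _).symm <;>
        · apply (R.adj₃.homEquiv _ _).injective
          exact (R.zero_comp _).eq_of_tgt _ _
      let _ := R.commShift_iSt
      have := R.isTriangulated_iSt
      exact ((shiftFunctor T (1 : ℤ)).map_isZero (R.iSt.map_isZero h0)).eq_of_tgt _ _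
  have hcounit : ∀ V : U, IsIso (R.adj₃.counit.app (F'.obj (R.jSt.obj V))) := by
    intro V
    obtain ⟨δ, hδ⟩ := R.triangle_b (F'.obj (R.jSt.obj V))
    have key : ∀ (Y : S) (f : F'.obj (R.jSt.obj V) ⟶ R.iSt.obj Y), f = 0 := by
      intro Y f
      refine serre_zero' (fun g => ?_) f
      rw [← cancel_mono (ε.hom.app (R.jSt.obj V)), zero_comp]
      apply (R.adj₄.homEquiv _ _).symm.injective
      exact (R.zero_comp _).eq_of_src _ _
    have h0 : IsZero (R.iUp.obj (F'.obj (R.jSt.obj V))) := by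
      rw [IsZero.iff_id_eq_zero]
      apply (R.adj₁.homEquiv _ _).injective
      exact (key _ _).trans (key _ _).symm
    let _ := R.commShift_iSt
    have := R.isTriangulated_iSt
    exact (Triangle.isZero₃_iff_isIso₁ _ hδ).1 (R.iSt.map_isZero h0)
  have : R.jLo.Full := R.fullyFaithful_jLo.full
  have : R.jLo.Faithful := R.fullyFaithful_jLo.faithful
  have : R.jSt.Full := R.fullyFaithful_jSt.full
  have : R.jSt.Faithful := R.fullyFaithful_jSt.faithful
  have : ∀ V, IsIso ((Functor.whiskerLeft (R.jLo ⋙ SF.F) R.adj₄.unit).app V) := hunit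
  have : ∀ V, IsIso ((Functor.whiskerLeft (R.jSt ⋙ F') R.adj₃.counit).app V) := hcounit
  have : IsIso (Functor.whiskerLeft (R.jLo ⋙ SF.F) R.adj₄.unit) :=
    NatIso.isIso_of_isIso_app _
  have : IsIso (Functor.whiskerLeft (R.jSt ⋙ F') R.adj₃.counit) :=
    NatIso.isIso_of_isIso_app _
  let e₁ : (R.jLo ⋙ SF.F ⋙ R.jUp) ⋙ (R.jSt ⋙ F' ⋙ R.jUp) ≅ 𝟭 U :=
    (Functor.isoWhiskerRight (asIso (Functor.whiskerLeft (R.jLo ⋙ SF.F) R.adj₄.unit))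
      (F' ⋙ R.jUp)).symm ≪≫
    (Functor.isoWhiskerLeft R.jLo (Functor.isoWhiskerRight η R.jUp) :
      ((R.jLo ⋙ SF.F) ⋙ 𝟭 T) ⋙ F' ⋙ R.jUp ≅ R.jLo ⋙ 𝟭 T ⋙ R.jUp) ≪≫
    (asIso R.adj₃.unit).symm
  let e₂ : (R.jSt ⋙ F' ⋙ R.jUp) ⋙ (R.jLo ⋙ SF.F ⋙ R.jUp) ≅ 𝟭 U :=
    (Functor.isoWhiskerRight (asIso (Functor.whiskerLeft (R.jSt ⋙ F') R.adj₃.counit))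
      (SF.F ⋙ R.jUp)) ≪≫
    (Functor.isoWhiskerLeft R.jSt (Functor.isoWhiskerRight ε R.jUp) :
      ((R.jSt ⋙ F') ⋙ 𝟭 T) ⋙ SF.F ⋙ R.jUp ≅ R.jSt ⋙ 𝟭 T ⋙ R.jUp) ≪≫
    (asIso R.adj₄.counit)
  exact ⟨RecSerre.serre_of_adj R.jLo R.jUp R.adj₃ R.fullyFaithful_jLo SF.F SF.rightSerre,
    ⟨fun V => ⟨_, ⟨e₂.app V⟩⟩⟩, ⟨e₁⟩, ⟨e₂⟩⟩
end
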